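/- arXiv:1606.03982 — 2 statements merged into one kernel-verified Lean document; each statement's English description precedes it below -/
import Mathlib

section
/- For every finite alphabet Σ and every partition 𝔓 of Σ, membership in the congruence multiple Dyck language mD_c(Σ,𝔓) is decidable: there is an algorithm (terminating on every input) that, given w ∈ (Σ ∪ Σ̄)*, decides whether w ∈ mD_c(Σ,𝔓). -/
namespace CS

/-! ### Dyck languages -/

/-- The smallest monoid congruence on `(S ⊕ S)*` (opening/closing brackets)
satisfying the cancellation `σ σ̄ ≡ ε`. -/
inductive DyckRel (S : Type) : List (S ⊕ S) → List (S ⊕ S) → Prop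
  | cancel (σ : S) : DyckRel S [Sum.inl σ, Sum.inr σ] []
  | refl (w : List (S ⊕ S)) : DyckRel S w w
  | symm {u v} : DyckRel S u v → DyckRel S v u
  | trans {u v w} : DyckRel S u v → DyckRel S v w → DyckRel S u w
  | append {u v u' v'} : DyckRel S u v → DyckRel S u' v' →
      DyckRel S (u ++ u') (v ++ v')

/-- The Dyck language `D(S) = [ε]_{≡_S}`. -/
def DyckLang (S : Type) : Set (List (S ⊕ S)) := {w | DyckRel S w []}

/-- The smallest monoid congruence on `(S ⊕ S)*` closed under the cancellation rule
of congruence multiple Dyck languages:  whenever `{σ₁, …, σ_ℓ} ∈ P`,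
`u₀, …, u_ℓ, v₁, …, v_ℓ ∈ D(S)` and `v₁ ⋯ v_ℓ ≡ ε`, then
`u₀ σ₁ v₁ σ̄₁ u₁ ⋯ σ_ℓ v_ℓ σ̄_ℓ u_ℓ ≡ u₀ u₁ ⋯ u_ℓ`.
The data of `σ₁, …, σ_ℓ`, `v₁, …, v_ℓ` and `u₁, …, u_ℓ` is given by a list
`ts` of triples `(σᵢ, vᵢ, uᵢ)`. -/
inductive MDyckRel (S : Type) (P : Set (Set S)) : List (S ⊕ S) → List (S ⊕ S) → Prop
  | refl (w : List (S ⊕ S)) : MDyckRel S P w w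
  | symm {u v} : MDyckRel S P u v → MDyckRel S P v u
  | trans {u v w} : MDyckRel S P u v → MDyckRel S P v w → MDyckRel S P u w
  | append {u v u' v'} : MDyckRel S P u v → MDyckRel S P u' v' →
      MDyckRel S P (u ++ u') (v ++ v')
  | cancel (u0 : List (S ⊕ S)) (ts : List (S × List (S ⊕ S) × List (S ⊕ S))) :
      (ts.map Prod.fst).Nodup →
      {σ | σ ∈ ts.map Prod.fst} ∈ P →
      u0 ∈ DyckLang S →
      (∀ t ∈ ts, t.2.1 ∈ DyckLang S ∧ t.2.2 ∈ DyckLang S) →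
      MDyckRel S P ((ts.map (fun t => t.2.1)).flatten) [] →
      MDyckRel S P
        (u0 ++ (ts.map (fun t => Sum.inl t.1 :: t.2.1 ++ [Sum.inr t.1] ++ t.2.2)).flatten)
        (u0 ++ (ts.map (fun t => t.2.2)).flatten)

/-- The congruence multiple Dyck language `mD_c(S, P) = [ε]_{≡_{S,P}}`. -/
def MDyckLang (S : Type) (P : Set (Set S)) : Set (List (S ⊕ S)) := {w | MDyckRel S P w []}

/-- The class of congruence multiple Dyck languages over `S` of dimension at most `k`. -/
def cmDyckClass (k : ℕ) (S : Type) : Set (Set (List (S ⊕ S))) :=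
  {L | ∃ Pa : Set (Set S), Setoid.IsPartition Pa ∧ (∀ p ∈ Pa, p.ncard ≤ k) ∧
        L = MDyckLang S Pa}

/-! ### Complete commutative strong bimonoids -/

/-- A complete commutative strong bimonoid: two commutative monoid structures
`(A, +, 0)` and `(A, ·, 1)` with `0` multiplicatively absorbing, together with an
infinitary sum operation satisfying the axioms of Droste and Vogler. -/
class CCSBimonoid (A : Type) extends AddCommMonoid A, CommMonoid A where
  zero_mul' : ∀ a : A, 0 * a = 0
  mul_zero' : ∀ a : A, a * 0 = 0
  bigSum : {I : Type} → Set I → (I → A) → A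
  bigSum_empty : ∀ {I : Type} (f : I → A), bigSum (∅ : Set I) f = 0
  bigSum_singleton : ∀ {I : Type} (j : I) (f : I → A), bigSum {j} f = f j
  bigSum_pair : ∀ {I : Type} (j k : I) (f : I → A), j ≠ k →
      bigSum {j, k} f = f j + f k
  bigSum_partition : ∀ {I J : Type} [Countable J] (T : J → Set I) (f : I → A),
      (∀ j j', j ≠ j' → T j ∩ T j' = ∅) →
      bigSum (Set.univ : Set J) (fun j => bigSum (T j) f) = bigSum (⋃ j, T j) f

/-! ### Multiple context-free grammars -/

/-- A production `A → [u₁, …, u_s](A₁, …, A_ℓ)` of an MCFG.  Letters of the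
components are either terminals (`Sum.inl`) or variables `x_i^j`, encoded
0-based as pairs `(i, j)` (`Sum.inr`).  `wf` states well-sortedness of the
variables and `linear` that every variable occurs at most once in `u₁ ⋯ u_s`. -/
structure Production (Δ N : Type) (sortN : N → ℕ) where
  lhs : N
  rhs : List N
  comp : List (List (Δ ⊕ ℕ × ℕ))
  comp_len : comp.length = sortN lhs
  wf : ∀ p ∈ comp.flatten.filterMap Sum.getRight?,
        ∃ h : p.1 < rhs.length, p.2 < sortN (rhs.get ⟨p.1, h⟩)
  linear : (comp.flatten.filterMap Sum.getRight?).Nodup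

namespace Production

variable {Δ N : Type} {sortN : N → ℕ}

/-- The list of occurrences of variables in the components of a production. -/
def vars (ρ : Production Δ N sortN) : List (ℕ × ℕ) :=
  ρ.comp.flatten.filterMap Sum.getRight?

/-- A production is non-deleting if every variable `x_i^j` occurs (at least,
hence by linearity exactly, once). -/
def NonDeleting (ρ : Production Δ N sortN) : Prop :=
  ∀ (i : ℕ) (h : i < ρ.rhs.length), ∀ j < sortN (ρ.rhs.get ⟨i, h⟩), (i, j) ∈ ρ.vars

/-- A production is terminal-free if no terminal occurs in its components. -/
def TerminalFree (ρ : Production Δ N sortN) : Prop :=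
  ∀ u ∈ ρ.comp, ∀ v ∈ u, ∃ p : ℕ × ℕ, v = Sum.inr p

end Production

/-- Substitution of argument tuples for the variables of a component. -/
def subst {Δ : Type} (args : List (List (List Δ))) (u : List (Δ ⊕ ℕ × ℕ)) : List Δ :=
  u.flatMap (fun v => match v with
    | Sum.inl d => [d]
    | Sum.inr (i, j) => (args.getD i []).getD j [])

/-- Rose trees; derivations of an MCFG are well-sorted trees over the productions. -/
inductive Tree (P : Type) : Type
  | node : P → List (Tree P) → Tree P

/-- The yield of a derivation tree: evaluate the string functions bottom-up. -/
def Tree.yield {Δ N : Type} {sortN : N → ℕ} :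
    Tree (Production Δ N sortN) → List (List Δ)
  | .node ρ ts => ρ.comp.map (subst (ts.attach.map (fun t => Tree.yield t.1)))
decreasing_by simp_wf; have := List.sizeOf_lt_of_mem t.2; omega

/-- Relabelling of derivation trees. -/
def Tree.map {P Q : Type} (f : P → Q) : Tree P → Tree Q
  | .node ρ ts => .node (f ρ) (ts.attach.map (fun t => Tree.map f t.1))
decreasing_by simp_wf; have := List.sizeOf_lt_of_mem t.2; omega

/-- Well-sorted derivation trees over a set of productions, from a given
non-terminal. -/
inductive WFDeriv {Δ N : Type} {sortN : N → ℕ} (P : Set (Production Δ N sortN)) :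
    N → Tree (Production Δ N sortN) → Prop
  | node (ρ : Production Δ N sortN) (ts : List (Tree (Production Δ N sortN))) :
      ρ ∈ P → ts.length = ρ.rhs.length →
      (∀ (i : ℕ) (h1 : i < ts.length) (h2 : i < ρ.rhs.length),
        WFDeriv P (ρ.rhs.get ⟨i, h2⟩) (ts.get ⟨i, h1⟩)) →
      WFDeriv P ρ.lhs (Tree.node ρ ts)

/-- A multiple context-free grammar over the terminal alphabet `Δ`. -/
structure MCFG (Δ : Type) where
  N : Type
  sortN : N → ℕ
  S : N
  sort_S : sortN S = 1
  P : Set (Production Δ N sortN)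

namespace MCFG

variable {Δ : Type}

/-- The set `D_G` of derivations of `G` (from the initial non-terminal). -/
def Derivs (G : MCFG Δ) : Set (Tree (Production Δ G.N G.sortN)) :=
  {d | WFDeriv G.P G.S d}

/-- The language of an MCFG. -/
def lang (G : MCFG Δ) : Set (List Δ) :=
  {w | ∃ d ∈ G.Derivs, d.yield = [w]}

/-- `G` has fan-out at most `k`. -/
def FanoutLE (G : MCFG Δ) (k : ℕ) : Prop := ∀ ρ ∈ G.P, ρ.comp.length ≤ k

/-- `G` is non-deleting. -/
def NonDeleting (G : MCFG Δ) : Prop := ∀ ρ ∈ G.P, ρ.NonDeleting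

end MCFG

/-- The class of multiple context-free languages over `Δ` of fan-out at most `k`. -/
def MCFL (k : ℕ) (Δ : Type) : Set (Set (List Δ)) :=
  {L | ∃ G : MCFG Δ, Finite G.N ∧ G.P.Finite ∧ G.FanoutLE k ∧ G.lang = L}

/-! ### Weighted MCFGs -/

/-- The weight of a derivation tree: multiply the weights of the productions at
all positions. -/
def Tree.weight {P A : Type} [CCSBimonoid A] (μ : P → A) : Tree P → A
  | .node ρ ts => μ ρ * (ts.attach.map (fun t => Tree.weight μ t.1)).prod
decreasing_by simp_wf; have := List.sizeOf_lt_of_mem t.2; omega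

/-- An `A`-weighted MCFG. -/
structure WMCFG (A Δ : Type) [CCSBimonoid A] extends MCFG Δ where
  μ : Production Δ N sortN → A
  μ_ne : ∀ ρ ∈ P, μ ρ ≠ 0

/-- The weighted language induced by an `A`-weighted MCFG:
`⟦G⟧(w) = Σ_{d derivation of w} μ̂(d)`. -/
noncomputable def WMCFG.sem {A Δ : Type} [CCSBimonoid A] (G : WMCFG A Δ) :
    List Δ → A :=
  fun w => CCSBimonoid.bigSum
    {d | WFDeriv G.P G.S d ∧ d.yield = [w]} (fun d => d.weight G.μ)

/-- The class of `A`-weighted multiple context-free languages over `Δ`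
of fan-out at most `k`. -/
def WMCFL (k : ℕ) (A Δ : Type) [CCSBimonoid A] : Set (List Δ → A) :=
  {L | ∃ G : WMCFG A Δ, Finite G.N ∧ G.P.Finite ∧ G.toMCFG.FanoutLE k ∧ G.sem = L}

/-! ### Weighted homomorphisms -/

/-- A weighted language is a monomial if its support has at most one element. -/
def IsMonomial {Γ A : Type} [CCSBimonoid A] (m : List Γ → A) : Prop :=
  ∀ u v, m u ≠ 0 → m v ≠ 0 → u = v

/-- `g` induces an `A`-weighted homomorphism. -/
def WeightedHom {Δ Γ A : Type} [CCSBimonoid A] (g : Δ → List Γ → A) : Prop :=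
  ∀ δ, IsMonomial (g δ)

/-- `g` induces an `A`-weighted alphabetic homomorphism: all supports consist of
words of length at most 1. -/
def AlphabeticWeightedHom {Δ Γ A : Type} [CCSBimonoid A] (g : Δ → List Γ → A) : Prop :=
  WeightedHom g ∧ ∀ δ u, g δ u ≠ 0 → u.length ≤ 1

/-- The `A`-weighted homomorphism `ĝ` induced by `g`:
`ĝ(δ₁⋯δ_k)(u) = Σ_{u = u₁⋯u_k} g(δ₁)(u₁)·…·g(δ_k)(u_k)`. -/
noncomputable def whom {Δ Γ A : Type} [CCSBimonoid A] (g : Δ → List Γ → A)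
    (w : List Δ) : List Γ → A :=
  fun u => CCSBimonoid.bigSum
    {ds : List (List Γ) | ds.length = w.length ∧ ds.flatten = u}
    (fun ds => ((w.zip ds).map (fun p => g p.1 p.2)).prod)

/-- The image of a language under an `A`-weighted homomorphism:
`ĝ(L)(u) = Σ_{w ∈ L} ĝ(w)(u)`. -/
noncomputable def whomImage {Δ Γ A : Type} [CCSBimonoid A] (g : Δ → List Γ → A)
    (L : Set (List Δ)) : List Γ → A :=
  fun u => CCSBimonoid.bigSum L (fun w => whom g w u)

/-! ### Regular languages -/

/-- A language is regular if it is recognised by a finite automaton. -/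
def IsRegular {α : Type} (L : Set (List α)) : Prop :=
  ∃ (Q : Type) (_ : Fintype Q) (M : DFA α Q), ∀ w, w ∈ M.accepts ↔ w ∈ L

end CS
namespace CS

/-! ### The unweighted MCFG for a weighted MCFG (weight separation) -/

/-- Relabel the terminals of a component into the marked alphabet. -/
def markify (M : Type) {Δ : Type} (u : List (Δ ⊕ ℕ × ℕ)) :
    List ((Δ ⊕ M) ⊕ ℕ × ℕ) :=
  u.map (Sum.map Sum.inl id)

lemma markify_filterMap (M : Type) {Δ : Type} (u : List (Δ ⊕ ℕ × ℕ)) :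
    (markify M u).filterMap Sum.getRight? = u.filterMap Sum.getRight? := by
  induction u with
  | nil => rfl
  | cons a l ih => cases a <;> first | exact ih | exact congrArg (List.cons _) ih

lemma filterMap_flatten {α β : Type} (f : α → Option β) (l : List (List α)) :
    l.flatten.filterMap f = (l.map (List.filterMap f)).flatten := by
  induction l <;> simp [*]

lemma ofFn_comp_get {α β : Type} (l : List α) (h : α → β) :
    List.ofFn (fun i : Fin l.length => h (l.get i)) = l.map h := by
  conv_rhs => rw [← List.ofFn_get l]
  rw [List.map_ofFn]
  rfl

lemma mark_flatten_vars {Δ M : Type} (l : List (List (Δ ⊕ ℕ × ℕ)))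
    (mk : Fin l.length → Δ ⊕ M) :
    (List.ofFn (fun i =>
        (Sum.inl (mk i) : (Δ ⊕ M) ⊕ ℕ × ℕ) :: markify M (l.get i))).flatten.filterMap
      Sum.getRight? = l.flatten.filterMap Sum.getRight? := by
  rw [filterMap_flatten, List.map_ofFn, filterMap_flatten]
  congr 1
  have : (List.filterMap Sum.getRight? ∘ fun i =>
      (Sum.inl (mk i) : (Δ ⊕ M) ⊕ ℕ × ℕ) :: markify M (l.get i))
      = fun i : Fin l.length => (l.get i).filterMap Sum.getRight? := by
    funext i
    simp [List.filterMap_cons, Sum.getRight?, markify_filterMap]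
  rw [this, ofFn_comp_get]

/-- The production of the unweighted MCFG `G_𝔹` corresponding to a production
`ρ = A → [u₁, …, u_s](A₁, …, A_m)`: each component `uᵢ` is prefixed with the
fresh terminal symbol `ρ^i` (encoded as `Sum.inr (ρ, i)`, 0-based). -/
def boolifyProd {Δ N : Type} {sortN : N → ℕ} (ρ : Production Δ N sortN) :
    Production (Δ ⊕ Production Δ N sortN × ℕ) N sortN where
  lhs := ρ.lhs
  rhs := ρ.rhs
  comp := List.ofFn (fun i : Fin ρ.comp.length =>
    Sum.inl (Sum.inr (ρ, (i : ℕ))) ::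
      markify (Production Δ N sortN × ℕ) (ρ.comp.get i))
  comp_len := by rw [List.length_ofFn]; exact ρ.comp_len
  wf := by
    intro p hp
    rw [mark_flatten_vars] at hp
    exact ρ.wf p hp
  linear := by
    rw [mark_flatten_vars]
    exact ρ.linear

/-- The unweighted MCFG `G_𝔹` for a weighted MCFG `G`. -/
def boolifyGrammar {A Δ : Type} [CCSBimonoid A] (G : WMCFG A Δ) :
    MCFG (Δ ⊕ Production Δ G.N G.sortN × ℕ) where
  N := G.N
  sortN := G.sortN
  S := G.S
  sort_S := G.sort_S
  P := boolifyProd '' G.P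

/-- The weight homomorphism `wts_G` for a weighted MCFG `G`:
`wts_G(δ) = 1.δ`, `wts_G(ρ^1) = μ(ρ).ε` and `wts_G(ρ^i) = 1.ε` for `i ≥ 2`. -/
noncomputable def wtsHom {A Δ : Type} [CCSBimonoid A] (G : WMCFG A Δ) :
    (Δ ⊕ Production Δ G.N G.sortN × ℕ) → List Δ → A := by
  classical
  exact fun γ w => match γ with
    | Sum.inl d => if w = [d] then 1 else 0
    | Sum.inr (ρ, i) => if w = [] then (if i = 0 then G.μ ρ else 1) else 0

/-! ### The multiple Dyck grammar -/

/-- The sorted alphabet `Σ` induced by an `ℕ₊`-sorted set `(Δ, sd)`: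
the opening parentheses `δ^[i]` (0-based: `i < sd δ`). -/
abbrev MSig (Δ : Type) (sd : Δ → ℕ) : Type := {p : Δ × ℕ // p.2 < sd p.1}

/-- The terminal alphabet `Δ̂` of the multiple Dyck grammar: opening and closing
parentheses. -/
abbrev MAlph (Δ : Type) (sd : Δ → ℕ) : Type := MSig Δ sd ⊕ MSig Δ sd

/-- The partition `𝔓 = {𝔭_δ ∣ δ ∈ Δ}` with `𝔭_δ = {δ^[i] ∣ i ∈ [sd δ]}`. -/
def mdgPart (Δ : Type) (sd : Δ → ℕ) : Set (Set (MSig Δ sd)) :=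
  {s | ∃ δ : Δ, s = {p : MSig Δ sd | p.1.1 = δ}}

/-- Sorts of the non-terminals `A₁, …, A_k` (0-based: `A_{i+1}` has sort `i+1`). -/
def dyckSort (k : ℕ) : Fin k → ℕ := fun i => (i : ℕ) + 1

/-- Productions of type (i): `A_s → f(A_{s₁}, …, A_{s_ℓ})` for every linear
non-deleting terminal-free string function `f` with `ℓ ≤ r`. -/
def TypeI (Δ : Type) (sd : Δ → ℕ) (k r : ℕ)
    (ρ : Production (MAlph Δ sd) (Fin k) (dyckSort k)) : Prop :=
  ρ.rhs.length ≤ r ∧ ρ.NonDeleting ∧ ρ.TerminalFree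

/-- Productions of type (ii):
`A_s → [δ^[1] x₁^1 δ̄^[1], …, δ^[s] x₁^s δ̄^[s]](A_s)` for `δ` of sort `s`. -/
def TypeII (Δ : Type) (sd : Δ → ℕ) (k : ℕ)
    (ρ : Production (MAlph Δ sd) (Fin k) (dyckSort k)) : Prop :=
  ∃ δ : Δ, dyckSort k ρ.lhs = sd δ ∧ ρ.rhs = [ρ.lhs] ∧
    ρ.comp = List.ofFn (fun j : Fin (sd δ) =>
      [Sum.inl (Sum.inl ⟨(δ, (j : ℕ)), j.isLt⟩),
       Sum.inr ((0 : ℕ), (j : ℕ)),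
       Sum.inl (Sum.inr ⟨(δ, (j : ℕ)), j.isLt⟩)])

/-- Productions of type (iii): `A_s → [u₁, …, u_s](A_s)` where each
`u_j ∈ {x_j, x_j δ^[1] δ̄^[1], δ^[1] δ̄^[1] x_j}` for `δ` of sort 1. -/
def TypeIII (Δ : Type) (sd : Δ → ℕ) (k : ℕ)
    (ρ : Production (MAlph Δ sd) (Fin k) (dyckSort k)) : Prop :=
  ρ.rhs = [ρ.lhs] ∧
  ∀ (j : ℕ) (h : j < ρ.comp.length),
    ρ.comp.get ⟨j, h⟩ = [Sum.inr ((0 : ℕ), j)] ∨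
    ∃ (δ : Δ) (h1 : 0 < sd δ), sd δ = 1 ∧
      (ρ.comp.get ⟨j, h⟩ =
        [Sum.inr ((0 : ℕ), j),
         Sum.inl (Sum.inl ⟨(δ, 0), h1⟩), Sum.inl (Sum.inr ⟨(δ, 0), h1⟩)] ∨
       ρ.comp.get ⟨j, h⟩ =
        [Sum.inl (Sum.inl ⟨(δ, 0), h1⟩), Sum.inl (Sum.inr ⟨(δ, 0), h1⟩),
         Sum.inr ((0 : ℕ), j)])

/-- The productions of the multiple Dyck grammar `G_Δ`. -/
def mdgProds (Δ : Type) (sd : Δ → ℕ) (k r : ℕ) :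
    Set (Production (MAlph Δ sd) (Fin k) (dyckSort k)) :=
  {ρ | TypeI Δ sd k r ρ ∨ TypeII Δ sd k ρ ∨ TypeIII Δ sd k ρ}

/-- The multiple Dyck grammar `G_Δ` with respect to the sorted set `(Δ, sd)`. -/
def mdgGrammar (Δ : Type) (sd : Δ → ℕ) (k r : ℕ) (hk : 0 < k) :
    MCFG (MAlph Δ sd) where
  N := Fin k
  sortN := dyckSort k
  S := ⟨0, hk⟩
  sort_S := rfl
  P := mdgProds Δ sd k r

end CS
namespace CS

inductive Fo (S : Type) : Type
  | nil : Fo S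
  | cons (σ : S) (c s : Fo S) : Fo S

namespace Fo
variable {S : Type}

def app : Fo S → Fo S → Fo S
  | nil, y => y
  | cons σ c s, y => cons σ c (app s y)

def word : Fo S → List (S ⊕ S)
  | nil => []
  | cons σ c s => Sum.inl σ :: (word c ++ Sum.inr σ :: word s)

lemma word_app (x y : Fo S) : (app x y).word = x.word ++ y.word := by
  induction x with
  | nil => rfl
  | cons σ c s _ ih => simp [app, word, ih]

lemma word_dyck (x : Fo S) : DyckRel S x.word [] := by
  induction x with
  | nil => exact .refl _
  | cons σ c s ihc ihs =>
    have h1 : DyckRel S ([Sum.inl σ] ++ c.word ++ [Sum.inr σ]) ([Sum.inl σ] ++ [] ++ [Sum.inr σ]) :=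
      .append (.append (.refl _) ihc) (.refl _)
    have h2 := DyckRel.append (h1.trans (.cancel σ)) ihs
    simpa [word] using h2

end Fo

/-- pure bracket machine -/
def bstep {S : Type} [DecidableEq S] : Option (List S) → S ⊕ S → Option (List S)
  | none, _ => none
  | some s, Sum.inl σ => some (σ :: s)
  | some [], Sum.inr _ => none
  | some (τ :: s), Sum.inr σ => if τ = σ then some s else none

lemma bstep_none {S : Type} [DecidableEq S] (w : List (S ⊕ S)) :
    w.foldl bstep none = none := by
  induction w with
  | nil => rfl
  | cons a l ih => simpa [bstep] using ih

lemma DyckRel.bmachine {S : Type} [DecidableEq S] {u v : List (S ⊕ S)} (h : DyckRel S u v) :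
    ∀ s, u.foldl bstep s = v.foldl bstep s := by
  induction h with
  | cancel σ => intro s; cases s <;> simp [bstep]
  | refl w => intro s; rfl
  | symm _ ih => intro s; exact (ih s).symm
  | trans _ _ ih1 ih2 => intro s; exact (ih1 s).trans (ih2 s)
  | append _ _ ih1 ih2 => intro s; simp [List.foldl_append, ih1, ih2]

def Dec {S : Type} : List S → List (S ⊕ S) → Prop
  | [], w => ∃ x : Fo S, w = x.word
  | σ :: s, w => ∃ (x : Fo S) (w' : List (S ⊕ S)), w = x.word ++ Sum.inr σ :: w' ∧ Dec s w'

lemma Dec.cons {S : Type} (σ : S) (c : Fo S) (s : List S) (w : List (S ⊕ S)) (h : Dec s w) :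
    Dec s (Sum.inl σ :: (c.word ++ Sum.inr σ :: w)) := by
  cases s with
  | nil =>
    obtain ⟨x, rfl⟩ := h
    exact ⟨.cons σ c x, rfl⟩
  | cons τ s =>
    obtain ⟨x, w', rfl, h'⟩ := h
    exact ⟨.cons σ c x, w', by simp [Fo.word], h'⟩

lemma dec_of_bmachine {S : Type} [DecidableEq S] (w : List (S ⊕ S)) :
    ∀ s, w.foldl bstep (some s) = some [] → Dec s w := by
  induction w with
  | nil =>
    intro s h
    simp at h
    subst h
    exact ⟨.nil, rfl⟩
  | cons a w ih =>
    intro s h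
    rcases a with σ | σ
    · obtain ⟨x, w', rfl, h'⟩ := ih (σ :: s) h
      exact Dec.cons σ x s w' h'
    · cases s with
      | nil => simp [bstep, bstep_none] at h
      | cons τ s =>
        by_cases hτ : τ = σ
        · subst hτ
          simp [bstep] at h
          exact ⟨.nil, w, rfl, ih s h⟩
        · simp [bstep, hτ, bstep_none] at h

lemma exists_forest {S : Type} [DecidableEq S] {w : List (S ⊕ S)} (h : w ∈ DyckLang S) :
    ∃ x : Fo S, x.word = w := by
  have := dec_of_bmachine w [] (by rw [DyckRel.bmachine h]; rfl)
  obtain ⟨x, hx⟩ := this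
  exact ⟨x, hx.symm⟩

/-! ### the monoid -/

def foSetoid (S : Type) (P : Set (Set S)) : Setoid (Fo S) where
  r x y := MDyckRel S P x.word y.word
  iseqv := ⟨fun _ => .refl _, .symm, .trans⟩

def MQ (S : Type) (P : Set (Set S)) : Type := Quotient (foSetoid S P)

namespace MQ
variable {S : Type} {P : Set (Set S)}

def mk (P : Set (Set S)) (x : Fo S) : MQ S P := Quotient.mk (foSetoid S P) x

lemma mk_eq {x y : Fo S} : mk P x = mk P y ↔ MDyckRel S P x.word y.word :=
  Quotient.eq (r := foSetoid S P)

lemma exists_mk (q : MQ S P) : ∃ x, mk P x = q := Quotient.exists_rep q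

instance : Monoid (MQ S P) where
  mul := Quotient.map₂ Fo.app (by
    intro a b h c d h'
    show MDyckRel S P _ _
    rw [Fo.word_app, Fo.word_app]
    exact .append h h')
  one := mk P .nil
  mul_assoc := by
    rintro ⟨a⟩ ⟨b⟩ ⟨c⟩
    refine mk_eq.2 ?_
    simp only [Fo.word_app, List.append_assoc]
    exact .refl _
  one_mul := by
    rintro ⟨a⟩
    exact mk_eq.2 (.refl _)
  mul_one := by
    rintro ⟨a⟩
    refine mk_eq.2 ?_
    simp only [Fo.word_app, Fo.word, List.append_nil]
    exact .refl _

lemma mk_app (x y : Fo S) : mk P (x.app y) = mk P x * mk P y := rfl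
lemma mk_nil : mk P .nil = 1 := rfl

def node (σ : S) : MQ S P → MQ S P :=
  Quotient.map (fun c => Fo.cons σ c .nil) (by
    intro a b h
    have h' : MDyckRel S P a.word b.word := h
    show MDyckRel S P _ _
    have := MDyckRel.append (MDyckRel.append (MDyckRel.refl [Sum.inl σ]) h')
      (MDyckRel.refl [Sum.inr σ])
    simpa [Fo.word] using this)

lemma mk_cons (σ : S) (c s : Fo S) : mk P (.cons σ c s) = node σ (mk P c) * mk P s := rfl

lemma cancel (l : List S) (hl : l.Nodup) (hP : {σ | σ ∈ l} ∈ P) (v u : S → MQ S P)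
    (hv : (l.map v).prod = 1) :
    (l.map (fun τ => node τ (v τ) * u τ)).prod = (l.map u).prod := by
  choose v' hv' using fun τ => exists_mk (v τ)
  choose u' hu' using fun τ => exists_mk (u τ)
  have key : ∀ (l : List S) (g : S → Fo S), ∃ x : Fo S,
      mk P x = (l.map (fun τ => mk P (g τ))).prod ∧
      x.word = (l.map (fun τ => (g τ).word)).flatten := by
    intro l g
    induction l with
    | nil => exact ⟨.nil, rfl, rfl⟩
    | cons a l ih =>
      obtain ⟨x, h1, h2⟩ := ih
      exact ⟨(g a).app x, by simp [mk_app, h1], by simp [Fo.word_app, h2]⟩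
  obtain ⟨xv, hxv, hxv'⟩ := key l v'
  obtain ⟨xu, hxu, hxu'⟩ := key l u'
  obtain ⟨xt, hxt, hxt'⟩ := key l (fun τ => .cons τ (v' τ) (u' τ))
  simp only [hv'] at hxv
  simp only [hu'] at hxu
  simp only [mk_cons, hv', hu'] at hxt
  rw [← hxt, ← hxu]
  rw [hv, ← mk_nil, mk_eq] at hxv
  rw [mk_eq, hxt', hxu']
  have := MDyckRel.cancel (P := P) [] (l.map (fun τ => (τ, (v' τ).word, (u' τ).word)))
    (by simpa [List.map_map, Function.comp_def] using hl)
    (by simpa [List.map_map, Function.comp_def] using hP)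
    (.refl _)
    (by
      intro t ht
      obtain ⟨τ, _, rfl⟩ := List.mem_map.1 ht
      exact ⟨Fo.word_dyck _, Fo.word_dyck _⟩)
    (by
      rw [hxv'] at hxv
      simpa [List.map_map, Function.comp_def, Fo.word] using hxv)
  simpa [List.map_map, Function.comp_def, Fo.word] using this

end MQ

/-! ### blocks -/
structure Blk (n : ℕ) where
  B : Fin n → Finset (Fin n)
  rep : Fin n → Fin n
  self : ∀ σ, σ ∈ B σ
  eqB : ∀ σ τ, τ ∈ B σ → B τ = B σ
  rep_mem : ∀ σ, rep σ ∈ B σ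
  rep_eq : ∀ σ τ, τ ∈ B σ → rep τ = rep σ

lemma exists_blk (n : ℕ) (Pa : Set (Set (Fin n))) (hPa : Setoid.IsPartition Pa) :
    ∃ b : Blk n, ∀ p, p ∈ Pa ↔ ∃ σ, p = ↑(b.B σ) := by
  classical
  let r := Setoid.mkClasses Pa hPa.2
  have hcl : r.classes = Pa := Setoid.classes_mkClasses Pa hPa
  let B : Fin n → Finset (Fin n) := fun σ => Finset.univ.filter (fun τ => r τ σ)
  have self : ∀ σ, σ ∈ B σ := fun σ => by simp [B]
  have eqB : ∀ σ τ, τ ∈ B σ → B τ = B σ := by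
    intro σ τ h
    simp only [B, Finset.mem_filter, Finset.mem_univ, true_and] at h
    ext x
    simp only [B, Finset.mem_filter, Finset.mem_univ, true_and]
    exact ⟨fun h' => r.trans h' h, fun h' => r.trans h' (r.symm h)⟩
  refine ⟨⟨B, fun σ => (B σ).min' ⟨σ, self σ⟩, self, eqB, fun σ => Finset.min'_mem _ _, ?_⟩, ?_⟩
  · intro σ τ h
    simp only [eqB σ τ h]
  · intro p
    rw [← hcl]
    constructor
    · rintro ⟨σ, rfl⟩
      exact ⟨σ, by ext; simp [B]⟩
    · rintro ⟨σ, rfl⟩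
      exact ⟨σ, by ext; simp [B]⟩

/-! ### the group of central units -/
abbrev QG (n : ℕ) (P : Set (Set (Fin n))) : Type := Additive (Subgroup.center (MQ (Fin n) P)ˣ)

instance (n : ℕ) (P : Set (Set (Fin n))) : AddCommGroup (QG n P) :=
  { (inferInstance : AddGroup (QG n P)) with
    add_comm := fun a c => Additive.toMul.injective
      (Subtype.ext ((Subgroup.mem_center_iff.1 (Additive.toMul c).2 _))) }

def QG.val {n : ℕ} {P : Set (Set (Fin n))} (q : QG n P) : MQ (Fin n) P :=
  ((Additive.toMul q : Subgroup.center (MQ (Fin n) P)ˣ) : (MQ (Fin n) P)ˣ)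

lemma QG.val_add {n : ℕ} {P : Set (Set (Fin n))} (p q : QG n P) :
    (p + q).val = p.val * q.val := rfl
lemma QG.val_zero {n : ℕ} {P : Set (Set (Fin n))} : (0 : QG n P).val = 1 := rfl
lemma QG.val_inj {n : ℕ} {P : Set (Set (Fin n))} {p q : QG n P} (h : p.val = q.val) : p = q :=
  Additive.toMul.injective (Subtype.ext (Units.ext h))

section
variable {n : ℕ} {P : Set (Set (Fin n))} (b : Blk n)

lemma node_unit (hb : ∀ p, p ∈ P ↔ ∃ σ, p = ↑(b.B σ)) (σ : Fin n) (hσ : (b.B σ).card ≠ 1) (q : QG n P) :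
    ∃ q' : QG n P, q'.val = MQ.node σ q.val := by
  classical
  have hc : 1 < (b.B σ).card := by
    have : 0 < (b.B σ).card := Finset.card_pos.2 ⟨σ, b.self σ⟩
    omega
  obtain ⟨τ, hτ, hne⟩ := Finset.exists_mem_ne hc σ
  set rest := (((b.B σ).erase σ).erase τ).toList with hrest
  have hmem : ∀ x, x ∈ rest ↔ x ≠ τ ∧ x ≠ σ ∧ x ∈ b.B σ := by intro x; simp [hrest]
  have hnd : rest.Nodup := Finset.nodup_toList _
  set c := q.val
  set c' := (-q).val
  have hcc' : c * c' = 1 := by rw [← QG.val_add, add_neg_cancel]; rfl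
  have hc'c : c' * c = 1 := by rw [← QG.val_add, neg_add_cancel]; rfl
  let v : Fin n → MQ (Fin n) P := fun x => if x = σ then c else if x = τ then c' else 1
  have hvσ : v σ = c := by simp [v]
  have hvτ : v τ = c' := by simp [v, hne]
  have hvr : ∀ x ∈ rest, v x = 1 := by
    intro x hx
    have := (hmem x).1 hx
    simp [v, this.1, this.2.1]
  have hvr' : (rest.map v) = rest.map (fun _ => 1) := List.map_congr_left hvr
  let t' := (rest.map (fun x => MQ.node x (1 : MQ (Fin n) P))).prod * MQ.node τ c'
  have h1 : ∀ y, MQ.node σ c * y * t' = y := by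
    intro y
    let u : Fin n → MQ (Fin n) P := fun x => if x = σ then y else 1
    have huσ : u σ = y := by simp [u]
    have huτ : u τ = 1 := by simp [u, hne]
    have hur : ∀ x ∈ rest, u x = 1 := by
      intro x hx
      simp [u, ((hmem x).1 hx).2.1]
    have := MQ.cancel (P := P) (σ :: (rest ++ [τ]))
      (by
        simp only [List.nodup_cons, List.nodup_append, List.mem_append, hmem]
        refine ⟨by simp [hne.symm], hnd, by simp, ?_⟩
        simp; tauto)
      ((hb _).2 ⟨σ, by
        ext x
        simp only [List.mem_cons, List.mem_append, hmem, Set.mem_ofPred_eq, Finset.mem_coe]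
        have := b.self σ
        constructor
        · rintro (rfl | h | h)
          · exact this
          · exact h.2.2
          · simp at h; subst h; exact hτ
        · intro h
          simp; tauto⟩)
      v u (by simp [hvσ, hvτ, hvr', hcc'])
    have e1 : rest.map (fun τ => MQ.node τ (v τ) * u τ) = rest.map (fun x => MQ.node x 1) :=
      List.map_congr_left (fun x hx => by rw [hvr x hx, hur x hx, mul_one])
    have e2 : rest.map u = rest.map (fun _ => 1) := List.map_congr_left hur
    simp only [List.map_cons, List.map_append, List.prod_cons, List.prod_append, e1, e2, huσ, huτ,
      hvσ, hvτ] at this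
    simpa [t', mul_assoc] using this
  have h2 : ∀ y, t' * y * MQ.node σ c = y := by
    intro y
    let u : Fin n → MQ (Fin n) P := fun x => if x = τ then y else 1
    have huτ : u τ = y := by simp [u]
    have huσ : u σ = 1 := by simp [u, hne.symm]
    have hur : ∀ x ∈ rest, u x = 1 := by
      intro x hx
      simp [u, ((hmem x).1 hx).1]
    have := MQ.cancel (P := P) (rest ++ [τ, σ])
      (by
        simp only [List.nodup_append, hmem]
        refine ⟨hnd, by simp [hne], ?_⟩
        simp; tauto)
      ((hb _).2 ⟨σ, by
        ext x
        simp only [List.mem_append, hmem, Set.mem_ofPred_eq, Finset.mem_coe]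
        have := b.self σ
        constructor
        · rintro (h | h)
          · exact h.2.2
          · simp at h; rcases h with rfl | rfl <;> assumption
        · intro h
          simp; tauto⟩)
      v u (by simp [hvσ, hvτ, hvr', hc'c])
    have e1 : rest.map (fun τ => MQ.node τ (v τ) * u τ) = rest.map (fun x => MQ.node x 1) :=
      List.map_congr_left (fun x hx => by rw [hvr x hx, hur x hx, mul_one])
    have e2 : rest.map u = rest.map (fun _ => 1) := List.map_congr_left hur
    simp only [List.map_cons, List.map_append, List.prod_cons, List.prod_append, e1, e2, huσ, huτ,
      hvσ, hvτ] at this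
    simpa [t', mul_assoc] using this
  have i1 : MQ.node σ c * t' = 1 := by simpa using h1 1
  have i2 : t' * MQ.node σ c = 1 := by simpa using h2 1
  let U : (MQ (Fin n) P)ˣ := ⟨MQ.node σ c, t', i1, i2⟩
  refine ⟨Additive.ofMul ⟨U, ?_⟩, rfl⟩
  rw [Subgroup.mem_center_iff]
  intro g
  ext
  show (g : MQ (Fin n) P) * MQ.node σ c = MQ.node σ c * g
  calc (g : MQ (Fin n) P) * MQ.node σ c = (MQ.node σ c * g * t') * MQ.node σ c := by rw [h1]
    _ = MQ.node σ c * g * (t' * MQ.node σ c) := by simp only [mul_assoc]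
    _ = _ := by rw [i2, mul_one]

lemma exists_phi (hb : ∀ p, p ∈ P ↔ ∃ σ, p = ↑(b.B σ)) : ∃ φ : Fin n → QG n P → QG n P,
    (∀ σ, (b.B σ).card ≠ 1 → ∀ q, (φ σ q).val = MQ.node σ q.val) ∧
    (∀ σ, (b.B σ).card ≠ 1 → ∀ g : Fin n → QG n P, ∑ τ ∈ b.B σ, g τ = 0 →
      ∑ τ ∈ b.B σ, φ τ (g τ) = 0) := by
  classical
  choose φ hφ using node_unit b hb
  have hval : ∀ (l : List (Fin n)) (g : Fin n → QG n P),
      (l.map g).sum.val = (l.map (fun τ => (g τ).val)).prod := by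
    intro l g
    induction l with
    | nil => rfl
    | cons a l ih => simp [QG.val_add, ih]
  refine ⟨fun σ => if h : (b.B σ).card ≠ 1 then φ σ h else id, ?_, ?_⟩
  · intro σ h q
    simp only [h, dite_true, ne_eq, not_false_eq_true, hφ]
  · intro σ h g hg
    apply QG.val_inj
    rw [← Finset.sum_map_toList, hval]
    rw [← Finset.sum_map_toList] at hg
    have hg' := congrArg QG.val hg
    rw [hval] at hg'
    have := MQ.cancel (P := P) (b.B σ).toList (Finset.nodup_toList _)
      ((hb _).2 ⟨σ, by ext; simp⟩) (fun τ => (g τ).val) (fun _ => 1) hg'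
    simp only [mul_one, List.map_const', List.prod_replicate, one_pow] at this
    rw [QG.val_zero, ← this]
    congr 1
    refine List.map_congr_left fun τ hτ => ?_
    have hτ' : (b.B τ).card ≠ 1 := by
      rw [b.eqB σ τ (by simpa using hτ)]; exact h
    simp only [ne_eq, hτ', not_false_eq_true, dite_true, hφ]

lemma node_single (σ : Fin n) (hb : ∀ p, p ∈ P ↔ ∃ σ, p = ↑(b.B σ)) (h : (b.B σ).card = 1) :
    MQ.node σ (1 : MQ (Fin n) P) = 1 := by
  obtain ⟨a, ha⟩ := Finset.card_eq_one.1 h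
  have : σ = a := by have := b.self σ; rw [ha] at this; simpa using this
  subst this
  have := MQ.cancel (P := P) [σ] (by simp) ((hb _).2 ⟨σ, by ext; simp [ha]⟩)
    (fun _ => 1) (fun _ => 1) (by simp)
  simpa using this

end

end CS
namespace CS

abbrev AG : Type := ℕ →₀ ℤ
abbrev EL : Type := List ℕ × List ℕ

noncomputable def EL.val (e : EL) : AG :=
  (e.1.map (fun i => Finsupp.single i (1 : ℤ))).sum -
    (e.2.map (fun i => Finsupp.single i (1 : ℤ))).sum

noncomputable def canonA (g : AG) : List (ℕ × ℕ × ℕ) :=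
  (g.support.sort (· ≤ ·)).map (fun i => (i, (g i).toNat, (-g i).toNat))

noncomputable def kap (g : AG) : ℕ := Encodable.encode (canonA g)

lemma mem_canonA {g : AG} {t : ℕ × ℕ × ℕ} :
    t ∈ canonA g ↔ g t.1 ≠ 0 ∧ t.2.1 = (g t.1).toNat ∧ t.2.2 = (-g t.1).toNat := by
  obtain ⟨i, a, c⟩ := t
  simp only [canonA, List.mem_map, Finset.mem_sort, Finsupp.mem_support_iff, Prod.mk.injEq]
  constructor
  · rintro ⟨j, h, rfl, rfl, rfl⟩
    exact ⟨h, rfl, rfl⟩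
  · rintro ⟨h, rfl, rfl⟩
    exact ⟨i, h, rfl, rfl, rfl⟩

lemma canonA_inj : Function.Injective canonA := by
  intro g g' h
  have key : ∀ t : ℕ × ℕ × ℕ, (g t.1 ≠ 0 ∧ t.2.1 = (g t.1).toNat ∧ t.2.2 = (-g t.1).toNat) ↔
      (g' t.1 ≠ 0 ∧ t.2.1 = (g' t.1).toNat ∧ t.2.2 = (-g' t.1).toNat) := by
    intro t
    rw [← mem_canonA, ← mem_canonA, h]
  ext i
  have h1 := key (i, (g i).toNat, (-g i).toNat)
  have h2 := key (i, (g' i).toNat, (-g' i).toNat)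
  simp only [and_self, and_true] at h1 h2
  by_cases hz : g i = 0
  · by_cases hz' : g' i = 0
    · rw [hz, hz']
    · have := h2.2 hz'
      exact absurd hz this.1
  · have := h1.1 hz
    omega

lemma kap_inj : Function.Injective kap := Encodable.encode_injective.comp canonA_inj

lemma le_encode_list {α : Type} [Encodable α] (l : List α) (a : α) (h : a ∈ l) :
    Encodable.encode a < Encodable.encode l := by
  induction l with
  | nil => simp at h
  | cons x l ih =>
    rw [Encodable.encode_list_cons]
    rcases List.mem_cons.1 h with rfl | h
    · exact Nat.lt_succ_of_le (Nat.left_le_pair _ _)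
    · exact Nat.lt_succ_of_le ((ih h).le.trans (Nat.right_le_pair _ _))

lemma lt_kap {g : AG} {i : ℕ} (h : g i ≠ 0) : i < kap g := by
  have := le_encode_list (canonA g) (i, (g i).toNat, (-g i).toNat) (mem_canonA.2 ⟨h, rfl, rfl⟩)
  refine lt_of_le_of_lt ?_ this
  rw [Encodable.encode_prod_val]
  exact Nat.left_le_pair _ _

lemma canonA_eq_nil {g : AG} : canonA g = [] ↔ g = 0 := by
  constructor
  · intro h
    apply canonA_inj
    rw [h]; simp [canonA]
  · rintro rfl; simp [canonA]

def cB (s : ℕ) : ℕ := 3 * s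
def cT (s m : ℕ) : ℕ := 3 * Nat.pair s m + 1
def cH (s m : ℕ) : ℕ := 3 * Nat.pair s m + 2

def aE {n : ℕ} (b : Blk n) (σ : Fin n) : List ℕ × List ℕ :=
  if b.rep σ = σ then ([], (((b.B σ).erase σ).sort (· ≤ ·)).map (fun τ : Fin n => cB τ.val)) else ([cB σ], [])

noncomputable def fA {n : ℕ} (b : Blk n) (σ : Fin n) (g : AG) : AG :=
  if (b.B σ).card = 1 then 0
  else if (b.B σ).card = 2 then
    (if b.rep σ = σ then Finsupp.single (cT σ (kap g)) 1
      else - Finsupp.single (cT (b.rep σ) (kap (-g))) 1)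
  else EL.val (aE b σ) + Finsupp.mapDomain (cH (b.rep σ)) g

lemma val_aE_rep {n : ℕ} (b : Blk n) (σ : Fin n) (h : b.rep σ = σ) :
    EL.val (aE b σ) = - ∑ τ ∈ (b.B σ).erase σ, Finsupp.single (cB τ) 1 := by
  rw [← Finset.sum_map_toList]
  simp only [aE, h, if_true, EL.val, List.map_nil, List.sum_nil, zero_sub, List.map_map]
  congr 1
  apply List.Perm.sum_eq
  exact (((b.B σ).erase σ).sort_perm_toList (· ≤ ·)).map _

lemma val_aE_ne {n : ℕ} (b : Blk n) (σ : Fin n) (h : b.rep σ ≠ σ) :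
    EL.val (aE b σ) = Finsupp.single (cB σ) 1 := by
  simp [aE, h, EL.val]

lemma Blk.rep_rep {n : ℕ} (b : Blk n) (σ : Fin n) : b.rep (b.rep σ) = b.rep σ :=
  b.rep_eq σ _ (b.rep_mem σ)

/-- abstract: sums of the constants -/
lemma const_sum {n : ℕ} (b : Blk n) (σ : Fin n) {X : Type} [AddCommGroup X] (ψ : AG →+ X)
    (c : Fin n → X) (hc : ∑ τ ∈ b.B σ, c τ = 0)
    (h : ∀ τ ∈ b.B σ, b.rep σ ≠ τ → ψ (Finsupp.single (cB τ) 1) = c τ) :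
    ∀ τ ∈ b.B σ, ψ (EL.val (aE b τ)) = c τ := by
  intro τ hτ
  have hr := b.rep_eq σ τ hτ
  by_cases e : b.rep τ = τ
  · rw [val_aE_rep b τ e, map_neg, map_sum, b.eqB σ τ hτ]
    rw [← Finset.add_sum_erase _ _ hτ] at hc
    rw [eq_neg_of_add_eq_zero_left hc]
    congr 1
    refine Finset.sum_congr rfl fun x hx => ?_
    have hx' := Finset.mem_erase.1 hx
    exact h x hx'.2 (by rw [← hr, e]; exact hx'.1.symm)
  · rw [val_aE_ne b τ e]
    exact h τ hτ (by rw [← hr]; exact e)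

lemma sum_two {n : ℕ} (b : Blk n) (σ : Fin n) (h2 : (b.B σ).card = 2) :
    ∃ τ, τ ≠ b.rep σ ∧ b.B σ = {b.rep σ, τ} := by
  obtain ⟨x, y, hxy, he⟩ := Finset.card_eq_two.1 h2
  have := b.rep_mem σ
  rw [he] at this
  rcases Finset.mem_insert.1 this with h | h
  · exact ⟨y, by rw [h]; exact hxy.symm, by rw [h, he]⟩
  · rw [Finset.mem_singleton] at h
    exact ⟨x, by rw [h]; exact hxy, by rw [h, he, Finset.pair_comm]⟩

lemma fA_rel {n : ℕ} (b : Blk n) (σ : Fin n) (g : Fin n → AG) (hg : ∑ τ ∈ b.B σ, g τ = 0) :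
    ∑ τ ∈ b.B σ, fA b τ (g τ) = 0 := by
  by_cases h1 : (b.B σ).card = 1
  · refine Finset.sum_eq_zero fun τ hτ => ?_
    simp [fA, b.eqB σ τ hτ, h1]
  by_cases h2 : (b.B σ).card = 2
  · obtain ⟨τ, hne, he⟩ := sum_two b σ h2
    have hτ : τ ∈ b.B σ := by rw [he]; simp
    have er := b.eqB σ _ (b.rep_mem σ)
    have et := b.eqB σ _ hτ
    have rt := b.rep_eq σ _ hτ
    rw [he, Finset.sum_pair hne.symm] at hg ⊢
    rw [← neg_eq_of_add_eq_zero_left hg]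
    simp [fA, er, et, h2, b.rep_rep, rt, hne.symm]
  · have e : ∀ τ ∈ b.B σ, fA b τ (g τ) = EL.val (aE b τ) +
        Finsupp.mapDomain.addMonoidHom (cH (b.rep σ)) (g τ) := by
      intro τ hτ
      simp [fA, b.eqB σ τ hτ, h1, h2, b.rep_eq σ τ hτ]
    rw [Finset.sum_congr rfl e, Finset.sum_add_distrib, ← map_sum, hg, map_zero, add_zero]
    have hr := b.rep_mem σ
    rw [← Finset.add_sum_erase _ _ hr, val_aE_rep b _ (b.rep_rep σ), b.eqB σ _ hr, neg_add_eq_zero]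
    refine Finset.sum_congr rfl fun x hx => ?_
    have hx' := Finset.mem_erase.1 hx
    rw [val_aE_ne]
    rw [b.rep_eq σ x hx'.2]
    exact hx'.1.symm

noncomputable def psib {X : Type} [AddCommGroup X] (φ η : ℕ → X → X) (n : ℕ) : X :=
  if n % 3 = 0 then φ (n / 3) 0
  else if n % 3 = 1 then
    φ (n / 3).unpair.1 (∑ i : Fin n, (Function.invFun kap (n / 3).unpair.2) i • psib φ η i)
  else η (n / 3).unpair.1
    (if h : (n / 3).unpair.2 < n then psib φ η (n / 3).unpair.2 else 0)
termination_by n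
decreasing_by
  · exact i.2
  · exact h

section
variable {X : Type} [AddCommGroup X] (φ η : ℕ → X → X)

noncomputable def psi : AG →+ X :=
  Finsupp.liftAddHom (fun i => (zmultiplesHom X) (psib φ η i))

lemma psi_single (i : ℕ) : psi φ η (Finsupp.single i 1) = psib φ η i := by
  simp [psi]

lemma psi_apply (g : AG) (N : ℕ) (hN : ∀ i, g i ≠ 0 → i < N) :
    psi φ η g = ∑ i : Fin N, g i • psib φ η i := by
  rw [Fin.sum_univ_eq_sum_range (fun i => g i • psib φ η i)]
  have : psi φ η g = g.sum (fun i c => c • psib φ η i) := by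
    simp only [psi, Finsupp.liftAddHom_apply]
    rfl
  rw [this]
  apply Finsupp.sum_of_support_subset
  · intro i hi
    exact Finset.mem_range.2 (hN i (Finsupp.mem_support_iff.1 hi))
  · simp

lemma psib_B (s : ℕ) : psib φ η (cB s) = φ s 0 := by
  rw [psib]
  simp [cB]

lemma psib_T (s : ℕ) (g : AG) : psib φ η (cT s (kap g)) = φ s (psi φ η g) := by
  have e1 : cT s (kap g) % 3 = 1 := by simp only [cT]; omega
  have e2 : cT s (kap g) / 3 = Nat.pair s (kap g) := by simp only [cT]; omega
  rw [psib, e1, e2]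
  simp only [Nat.unpair_pair, Function.leftInverse_invFun kap_inj g, one_ne_zero, if_false, if_true]
  rw [← psi_apply]
  intro i hi
  have := lt_kap hi
  have := Nat.right_le_pair s (kap g)
  simp only [cT]; omega

lemma psib_H (s e : ℕ) : psib φ η (cH s e) = η s (psib φ η e) := by
  have e1 : cH s e % 3 = 2 := by simp only [cH]; omega
  have e2 : cH s e / 3 = Nat.pair s e := by simp only [cH]; omega
  rw [psib, e1, e2]
  have : e < cH s e := by
    have := Nat.right_le_pair s e
    simp only [cH]; omega
  simp [this]

end

lemma three_rel {n : ℕ} (B : Finset (Fin n)) {X : Type} [AddCommGroup X] (φ : Fin n → X → X)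
    (rel : ∀ g : Fin n → X, ∑ τ ∈ B, g τ = 0 → ∑ τ ∈ B, φ τ (g τ) = 0)
    (i j k : Fin n) (hi : i ∈ B) (hj : j ∈ B) (hk : k ∈ B) (hij : i ≠ j) (hik : i ≠ k)
    (hjk : j ≠ k) (x y : X) :
    (φ i x - φ i 0) + (φ j y - φ j 0) + (φ k (-(x + y)) - φ k 0) = 0 := by
  let g : Fin n → X := fun t => if t = i then x else if t = j then y else if t = k then -(x + y) else 0
  have hsub : ({i, j, k} : Finset (Fin n)) ⊆ B := by
    intro t ht
    simp at ht
    rcases ht with rfl | rfl | rfl <;> assumption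
  have gi : g i = x := by simp [g]
  have gj : g j = y := by simp [g, hij.symm]
  have gk : g k = -(x + y) := by simp [g, hik.symm, hjk.symm]
  have g0 : ∀ t, t ∉ ({i, j, k} : Finset (Fin n)) → g t = 0 := by
    intro t ht
    simp at ht
    simp [g, ht]
  have s3 : ∀ h : Fin n → X, ∑ t ∈ ({i, j, k} : Finset (Fin n)), h t = h i + h j + h k := by
    intro h
    rw [Finset.sum_insert (by simp [hij, hik]), Finset.sum_pair hjk, add_assoc]
  have h1 := rel g (by
    rw [← Finset.sum_subset hsub (fun t _ ht => g0 t ht), s3, gi, gj, gk]; abel)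
  have h0 := rel (fun _ => 0) (by simp)
  have h2 : ∑ τ ∈ B, (φ τ (g τ) - φ τ 0) = 0 := by
    rw [Finset.sum_sub_distrib, h1, h0, sub_zero]
  rw [← Finset.sum_subset hsub (fun t _ ht => by rw [g0 t ht, sub_self]), s3, gi, gj, gk] at h2
  exact h2

lemma eta_props {n : ℕ} (B : Finset (Fin n)) {X : Type} [AddCommGroup X] (φ : Fin n → X → X)
    (rel : ∀ g : Fin n → X, ∑ τ ∈ B, g τ = 0 → ∑ τ ∈ B, φ τ (g τ) = 0)
    (h3 : 2 < B.card) :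
    (∀ i ∈ B, ∀ j ∈ B, ∀ x, φ i x - φ i 0 = φ j x - φ j 0) ∧
    (∀ i ∈ B, ∀ x y, φ i (x + y) - φ i 0 = (φ i x - φ i 0) + (φ i y - φ i 0)) := by
  have third : ∀ i j : Fin n, ∃ k ∈ B, i ≠ k ∧ j ≠ k := by
    intro i j
    by_contra hcon
    push Not at hcon
    have : B ⊆ {i, j} := by
      intro t ht
      have := hcon t ht
      simp only [Finset.mem_insert, Finset.mem_singleton]
      tauto
    have := Finset.card_le_card this
    have := Finset.card_le_two (a := i) (b := j)
    omega
  have neg : ∀ i ∈ B, ∀ k ∈ B, i ≠ k → ∀ x, (φ i x - φ i 0) + (φ k (-x) - φ k 0) = 0 := by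
    intro i hi k hk hik x
    obtain ⟨j, hj, h1, h2⟩ := third i k
    have := three_rel B φ rel i j k hi hj hk h1 hik h2.symm x 0
    simpa using this
  have eqs : ∀ i ∈ B, ∀ j ∈ B, ∀ x, φ i x - φ i 0 = φ j x - φ j 0 := by
    intro i hi j hj x
    obtain ⟨k, hk, h1, h2⟩ := third i j
    have a := neg i hi k hk h1 x
    have c := neg j hj k hk h2 x
    exact add_right_cancel (a.trans c.symm)
  refine ⟨eqs, ?_⟩
  intro i hi x y
  obtain ⟨j, hj, h1, -⟩ := third i i
  obtain ⟨k, hk, h2, h3⟩ := third i j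
  have a := three_rel B φ rel i j k hi hj hk h1 h2 h3 x y
  have c := neg i hi k hk h2 (x + y)
  rw [eqs i hi j hj y]
  exact add_right_cancel (c.trans a.symm)

lemma exists_psi {n : ℕ} (b : Blk n) {X : Type} [AddCommGroup X] (φ : Fin n → X → X)
    (rel : ∀ σ, (b.B σ).card ≠ 1 → ∀ g : Fin n → X, ∑ τ ∈ b.B σ, g τ = 0 →
      ∑ τ ∈ b.B σ, φ τ (g τ) = 0) :
    ∃ ψ : AG →+ X, ∀ σ, (b.B σ).card ≠ 1 → ∀ g, ψ (fA b σ g) = φ σ (ψ g) := by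
  let φ' : ℕ → X → X := fun s x => if h : s < n then φ ⟨s, h⟩ x else 0
  have hφ' : ∀ (σ : Fin n) x, φ' σ x = φ σ x := by intro σ x; simp [φ']
  let η : ℕ → X → X := fun s x => φ' s x - φ' s 0
  refine ⟨psi φ' η, ?_⟩
  intro σ h1 g
  by_cases h2 : (b.B σ).card = 2
  · by_cases hr : b.rep σ = σ
    · simp [fA, h2, hr, psi_single, psib_T, hφ']
    · simp only [fA, h2, hr, if_false, if_true, map_neg, psi_single, psib_T, hφ',
        OfNat.ofNat_ne_one]
      obtain ⟨τ, hne, he⟩ := sum_two b σ h2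
      have : σ = τ := by
        have := b.self σ
        rw [he] at this
        rcases Finset.mem_insert.1 this with h | h
        · exact absurd h.symm hr
        · simpa using h
      subst this
      have := rel σ h1 (fun t => if t = σ then psi φ' η g else - psi φ' η g)
      rw [he, Finset.sum_pair hne.symm, Finset.sum_pair hne.symm] at this
      simp only [hr, if_true, if_false, neg_add_cancel, forall_const] at this
      exact (eq_neg_of_add_eq_zero_right this).symm
  · have h3 : 2 < (b.B σ).card := by
      have : 0 < (b.B σ).card := Finset.card_pos.2 ⟨σ, b.self σ⟩
      omega
    obtain ⟨p1, p2⟩ := eta_props (b.B σ) φ (rel σ h1) h3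
    have hc := const_sum b σ (psi φ' η) (fun τ => φ τ 0) (rel σ h1 (fun _ => 0) (by simp))
      (by intro τ _ _; rw [psi_single, psib_B, hφ']) σ (b.self σ)
    simp only [fA, h1, h2, if_false, map_add, hc]
    let H : X →+ X := ⟨⟨fun x => φ (b.rep σ) x - φ (b.rep σ) 0, by simp⟩,
      p2 _ (b.rep_mem σ)⟩
    have hH : (psi φ' η).comp (Finsupp.mapDomain.addMonoidHom (cH (b.rep σ))) =
        H.comp (psi φ' η) := by
      apply Finsupp.addHom_ext'
      intro i
      ext
      simp [psi_single, psib_H, H, η, hφ']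
    have := DFunLike.congr_fun hH g
    simp only [AddMonoidHom.comp_apply, Finsupp.mapDomain.addMonoidHom_apply] at this
    rw [this]
    show φ σ 0 + (φ (b.rep σ) _ - φ (b.rep σ) 0) = _
    rw [← p1 σ (b.self σ) _ (b.rep_mem σ)]
    abel

end CS
namespace CS

abbrev MSt (n : ℕ) : Type := Option (AG × List (Fin n × AG))

open Classical in
noncomputable def mstep {n : ℕ} (b : Blk n) : MSt n → Fin n ⊕ Fin n → MSt n
  | none, _ => none
  | some (g, st), Sum.inl σ => some (0, (σ, g) :: st)
  | some (_, []), Sum.inr _ => none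
  | some (g, (τ, g') :: st), Sum.inr σ =>
    if τ = σ ∧ ((b.B σ).card = 1 → g = 0) then some (g' + fA b σ g, st) else none

noncomputable def Fo.val {n : ℕ} (b : Blk n) : Fo (Fin n) → AG
  | .nil => 0
  | .cons σ c s => fA b σ (Fo.val b c) + Fo.val b s

def Fo.good {n : ℕ} (b : Blk n) : Fo (Fin n) → Prop
  | .nil => True
  | .cons σ c s => Fo.good b c ∧ ((b.B σ).card = 1 → Fo.val b c = 0) ∧ Fo.good b s

lemma mstep_none {n : ℕ} (b : Blk n) (w : List (Fin n ⊕ Fin n)) :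
    w.foldl (mstep b) none = none := by
  induction w with
  | nil => rfl
  | cons a l ih => simpa [mstep] using ih

open Classical in
lemma run_word {n : ℕ} (b : Blk n) (x : Fo (Fin n)) : ∀ g st,
    x.word.foldl (mstep b) (some (g, st)) =
      if x.good b then some (g + x.val b, st) else none := by
  induction x with
  | nil => intro g st; simp [Fo.word, Fo.good, Fo.val]
  | cons σ c s ihc ihs =>
    intro g st
    simp only [Fo.word, List.foldl_cons, List.foldl_append, mstep, ihc]
    by_cases hc : c.good b
    · by_cases h1 : (b.B σ).card = 1 → Fo.val b c = 0
      · have h1' : (b.B σ).card = 1 → (0 : AG) + Fo.val b c = 0 := by simpa using h1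
        rw [if_pos hc]
        simp only [List.foldl_cons, List.foldl_nil, mstep]
        rw [if_pos ⟨trivial, h1'⟩, ihs]
        by_cases hs : s.good b
        · have hg : (Fo.cons σ c s).good b := ⟨hc, h1, hs⟩
          rw [if_pos hs, if_pos hg, zero_add, Fo.val, add_assoc]
        · have hg : ¬ (Fo.cons σ c s).good b := fun h => hs h.2.2
          rw [if_neg hs, if_neg hg]
      · have h1' : ¬ ((b.B σ).card = 1 → (0 : AG) + Fo.val b c = 0) := by simpa using h1
        simp [hc, mstep, h1, mstep_none, Fo.good]
    · simp [hc, mstep, mstep_none, Fo.good]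

def Fo.cat {S : Type} : List (Fo S) → Fo S
  | [] => .nil
  | x :: l => x.app (Fo.cat l)

lemma Fo.word_cat {S : Type} (l : List (Fo S)) : (Fo.cat l).word = (l.map Fo.word).flatten := by
  induction l with
  | nil => rfl
  | cons x l ih => simp [Fo.cat, Fo.word_app, ih]

lemma Fo.val_app {n : ℕ} (b : Blk n) (x y : Fo (Fin n)) :
    (x.app y).val b = x.val b + y.val b := by
  induction x with
  | nil => simp [Fo.app, Fo.val]
  | cons σ c s _ ih => simp [Fo.app, Fo.val, ih, add_assoc]

lemma Fo.good_app {n : ℕ} (b : Blk n) (x y : Fo (Fin n)) :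
    (x.app y).good b ↔ x.good b ∧ y.good b := by
  induction x with
  | nil => simp [Fo.app, Fo.good]
  | cons σ c s _ ih => simp [Fo.app, Fo.good, ih, and_assoc]

lemma Fo.val_cat {n : ℕ} (b : Blk n) (l : List (Fo (Fin n))) :
    (Fo.cat l).val b = (l.map (Fo.val b)).sum := by
  induction l with
  | nil => rfl
  | cons x l ih => simp [Fo.cat, Fo.val_app, ih]

lemma Fo.good_cat {n : ℕ} (b : Blk n) (l : List (Fo (Fin n))) :
    (Fo.cat l).good b ↔ ∀ x ∈ l, x.good b := by
  induction l with
  | nil => simp [Fo.cat, Fo.good]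
  | cons x l ih => simp [Fo.cat, Fo.good_app, ih]

lemma exists_ts {S : Type} [DecidableEq S] (ts : List (S × List (S ⊕ S) × List (S ⊕ S)))
    (h : ∀ t ∈ ts, t.2.1 ∈ DyckLang S ∧ t.2.2 ∈ DyckLang S) :
    ∃ ts' : List (S × Fo S × Fo S), ts = ts'.map (fun t => (t.1, t.2.1.word, t.2.2.word)) := by
  induction ts with
  | nil => exact ⟨[], rfl⟩
  | cons t ts ih =>
    obtain ⟨ts', rfl⟩ := ih (fun t ht => h t (List.mem_cons_of_mem _ ht))
    obtain ⟨h1, h2⟩ := h t List.mem_cons_self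
    obtain ⟨x, hx⟩ := exists_forest h1
    obtain ⟨y, hy⟩ := exists_forest h2
    exact ⟨(t.1, x, y) :: ts', by simp [hx, hy]⟩

lemma exists_fun {S T X : Type} [DecidableEq S] [Inhabited X] (ts : List T) (k : T → S) (h : T → X)
    (hnd : (ts.map k).Nodup) : ∃ g : S → X, ∀ t ∈ ts, g (k t) = h t := by
  induction ts with
  | nil => exact ⟨fun _ => default, by simp⟩
  | cons t ts ih =>
    simp only [List.map_cons, List.nodup_cons] at hnd
    obtain ⟨g, hg⟩ := ih hnd.2
    refine ⟨Function.update g (k t) (h t), ?_⟩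
    intro s hs
    rcases List.mem_cons.1 hs with rfl | hs
    · simp
    · have : k s ≠ k t := by
        intro e
        exact hnd.1 (e ▸ List.mem_map_of_mem hs)
      simp [this, hg s hs]

lemma sound {n : ℕ} {P : Set (Set (Fin n))} (b : Blk n) (hb : ∀ p, p ∈ P ↔ ∃ σ, p = ↑(b.B σ))
    {u v : List (Fin n ⊕ Fin n)} (h : MDyckRel (Fin n) P u v) :
    ∀ s, u.foldl (mstep b) s = v.foldl (mstep b) s := by
  classical
  induction h with
  | refl w => intro s; rfl
  | symm _ ih => intro s; exact (ih s).symm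
  | trans _ _ ih1 ih2 => intro s; exact (ih1 s).trans (ih2 s)
  | append _ _ ih1 ih2 => intro s; simp [List.foldl_append, ih1, ih2]
  | cancel u0 ts hnd hP _ hts _ ih =>
    obtain ⟨ts, rfl⟩ := exists_ts ts hts
    intro s
    rw [List.foldl_append, List.foldl_append]
    rcases List.foldl (mstep b) s u0 with _ | ⟨g, st⟩
    · rw [mstep_none, mstep_none]
    simp only [List.map_map, Function.comp_def] at *
    have e1 : (ts.map (fun t => t.2.1.word)).flatten = (Fo.cat (ts.map (fun t => t.2.1))).word := by
      simp [Fo.word_cat, Function.comp_def]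
    have e2 : (ts.map (fun t => t.2.2.word)).flatten = (Fo.cat (ts.map (fun t => t.2.2))).word := by
      simp [Fo.word_cat, Function.comp_def]
    have e3 : (ts.map (fun t => Sum.inl t.1 :: t.2.1.word ++ [Sum.inr t.1] ++ t.2.2.word)).flatten
        = (Fo.cat (ts.map (fun t => Fo.cons t.1 t.2.1 t.2.2))).word := by
      simp [Fo.word_cat, Function.comp_def, Fo.word]
    have ih' := ih (some (0, []))
    rw [e1, run_word] at ih'
    rw [e2, e3, run_word, run_word]
    simp only [List.foldl_nil, zero_add] at ih'
    split_ifs at ih' with hgood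
    simp only [Option.some.injEq, Prod.mk.injEq, and_true] at ih'
    rw [Fo.good_cat] at hgood
    rw [Fo.val_cat, List.map_map] at ih'
    simp only [Function.comp_def] at ih'
    obtain ⟨σ, hσ⟩ := (hb _).1 hP
    have hfs : (ts.map (fun t => t.1)).toFinset = b.B σ := by
      apply Finset.coe_injective
      rw [← hσ]; ext; simp
    obtain ⟨G, hG⟩ := exists_fun ts (fun t => t.1) (fun t => t.2.1.val b) hnd
    have hGs : ∑ τ ∈ b.B σ, G τ = 0 := by
      rw [← hfs, List.sum_toFinset _ hnd, List.map_map, ← ih']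
      congr 1
      exact List.map_congr_left hG
    have hF := fA_rel b σ G hGs
    rw [← hfs, List.sum_toFinset _ hnd, List.map_map] at hF
    have hF' : (ts.map (fun t => fA b t.1 (t.2.1.val b))).sum = 0 := by
      rw [← hF]
      congr 1
      exact List.map_congr_left (fun t ht => by simp [hG t ht])
    have hsing : ∀ t ∈ ts, (b.B t.1).card = 1 → t.2.1.val b = 0 := by
      intro t ht hc
      have hm : t.1 ∈ b.B σ := by
        rw [← hfs]; simp only [List.mem_toFinset]; exact List.mem_map_of_mem (f := fun t => t.1) ht
      rw [b.eqB σ _ hm] at hc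
      obtain ⟨a, ha⟩ := Finset.card_eq_one.1 hc
      rw [ha] at hm hGs
      rw [← hG t ht]
      simp only [Finset.sum_singleton, Finset.mem_singleton] at hGs hm
      rw [hm]; exact hGs
    have hgg : (Fo.cat (ts.map (fun t => Fo.cons t.1 t.2.1 t.2.2))).good b ↔
        (Fo.cat (ts.map (fun t => t.2.2))).good b := by
      simp only [Fo.good_cat, List.mem_map, forall_exists_index, and_imp,
        forall_apply_eq_imp_iff₂, Fo.good] at hgood ⊢
      exact ⟨fun h t ht => (h t ht).2.2, fun h t ht => ⟨hgood t ht, hsing t ht, h t ht⟩⟩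
    have hvv : (Fo.cat (ts.map (fun t => Fo.cons t.1 t.2.1 t.2.2))).val b =
        (Fo.cat (ts.map (fun t => t.2.2))).val b := by
      rw [Fo.val_cat, Fo.val_cat, List.map_map, List.map_map]
      simp only [Function.comp_def, Fo.val, List.sum_map_add, hF', zero_add]
    rw [hvv]
    simp only [hgg]

lemma mstep_bstep {n : ℕ} (b : Blk n) (w : List (Fin n ⊕ Fin n)) : ∀ g st g' st',
    w.foldl (mstep b) (some (g, st)) = some (g', st') →
    w.foldl bstep (some (st.map Prod.fst)) = some (st'.map Prod.fst) := by
  induction w with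
  | nil =>
    intro g st g' st' h
    simp only [List.foldl_nil, Option.some.injEq, Prod.mk.injEq] at h ⊢
    rw [h.2]
  | cons a w ih =>
    intro g st g' st' h
    rcases a with σ | σ
    · exact ih _ _ _ _ h
    · rcases st with _ | ⟨⟨τ, g0⟩, st⟩
      · simp [mstep, mstep_none] at h
      · simp only [List.foldl_cons, mstep] at h
        split_ifs at h with hc
        · have := ih _ _ _ _ h
          simpa [bstep, hc.1] using this
        · simp [mstep_none] at h

lemma complete {n : ℕ} {P : Set (Set (Fin n))} (b : Blk n) (hb : ∀ p, p ∈ P ↔ ∃ σ, p = ↑(b.B σ))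
    (w : List (Fin n ⊕ Fin n)) (h : w.foldl (mstep b) (some (0, [])) = some (0, [])) :
    MDyckRel (Fin n) P w [] := by
  classical
  obtain ⟨x, rfl⟩ := dec_of_bmachine w [] (mstep_bstep b w _ _ _ _ h)
  rw [run_word] at h
  split_ifs at h with hg
  simp only [zero_add, Option.some.injEq, Prod.mk.injEq, and_true] at h
  obtain ⟨φ, hφ, hrel⟩ := exists_phi b hb
  obtain ⟨ψ, hψ⟩ := exists_psi b φ hrel
  have key : ∀ x : Fo (Fin n), x.good b → MQ.mk P x = (ψ (x.val b)).val := by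
    intro x
    induction x with
    | nil => intro _; simp [Fo.val, QG.val_zero, MQ.mk_nil]
    | cons σ c s ihc ihs =>
      rintro ⟨h1, h2, h3⟩
      rw [MQ.mk_cons, ihc h1, ihs h3, Fo.val, map_add, QG.val_add]
      congr 1
      by_cases hs : (b.B σ).card = 1
      · rw [h2 hs, map_zero, QG.val_zero, node_single b σ hb hs]
        simp [fA, hs, QG.val_zero]
      · rw [hψ σ hs, hφ σ hs]
  have := key x hg
  rw [h, map_zero, QG.val_zero, ← MQ.mk_nil, MQ.mk_eq] at this
  exact this

lemma mem_iff {n : ℕ} {P : Set (Set (Fin n))} (b : Blk n) (hb : ∀ p, p ∈ P ↔ ∃ σ, p = ↑(b.B σ))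
    (w : List (Fin n ⊕ Fin n)) :
    w ∈ MDyckLang (Fin n) P ↔ w.foldl (mstep b) (some (0, [])) = some (0, []) :=
  ⟨fun h => sound b hb h _, complete b hb w⟩

/-! ### the concrete machine -/

def canonE (e : EL) : List (ℕ × ℕ × ℕ) :=
  (List.range (e.1.sum + e.2.sum + 1)).filterMap (fun i =>
    if e.1.count i = e.2.count i then none
    else some (i, e.1.count i - e.2.count i, e.2.count i - e.1.count i))

lemma EL.val_apply (e : EL) (i : ℕ) : e.val i = (e.1.count i : ℤ) - e.2.count i := by
  have : ∀ l : List ℕ, (l.map (fun i => Finsupp.single i (1 : ℤ))).sum i = (l.count i : ℤ) := by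
    intro l
    induction l with
    | nil => simp
    | cons a l ih =>
      simp only [List.map_cons, List.sum_cons, Finsupp.add_apply, ih, List.count_cons,
        Finsupp.single_apply]
      by_cases h : a = i <;> simp [h, add_comm]
  simp [EL.val, this]

lemma canonE_eq (e : EL) : canonE e = canonA e.val := by
  have h1 : canonE e = ((List.range (e.1.sum + e.2.sum + 1)).filter (fun i => e.val i ≠ 0)).map
      (fun i => (i, (e.val i).toNat, (-e.val i).toNat)) := by
    rw [← List.filterMap_eq_map, List.filterMap_filter, canonE]
    congr 1
    funext i
    by_cases h : e.1.count i = e.2.count i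
    · simp [EL.val_apply, h]
    · have : (e.1.count i : ℤ) - e.2.count i ≠ 0 := by omega
      simp only [EL.val_apply, h, if_false, this, ne_eq, not_false_eq_true, decide_true, if_true,
        Function.comp, Option.some.injEq, Prod.mk.injEq, true_and]
      omega
  rw [h1, canonA]
  congr 1
  have hmem : ∀ l : List ℕ, ∀ i ∈ l, i ≤ l.sum := fun l i hi => List.le_sum_of_mem hi
  apply List.Perm.eq_of_pairwise (le := (· ≤ ·)) (fun a b _ _ => le_antisymm)
  · exact (List.pairwise_le_range).filter _
  · exact Finset.pairwise_sort _ _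
  · rw [List.perm_ext_iff_of_nodup (List.nodup_range.filter _) (Finset.sort_nodup _ _)]
    intro i
    simp only [List.mem_filter, List.mem_range, decide_eq_true_eq, Finset.mem_sort,
      Finsupp.mem_support_iff, and_iff_right_iff_imp]
    intro h
    rw [EL.val_apply] at h
    by_cases h1 : i ∈ e.1
    · have := hmem _ _ h1; omega
    · by_cases h2 : i ∈ e.2
      · have := hmem _ _ h2; omega
      · simp [List.count_eq_zero_of_not_mem h1, List.count_eq_zero_of_not_mem h2] at h

def fE {n : ℕ} (b : Blk n) (σ : Fin n) (e : EL) : EL :=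
  if (b.B σ).card = 1 then ([], [])
  else if (b.B σ).card = 2 then
    (if b.rep σ = σ then ([cT σ (Encodable.encode (canonE e))], [])
      else ([], [cT (b.rep σ) (Encodable.encode (canonE (e.2, e.1)))]))
  else ((aE b σ).1 ++ e.1.map (cH (b.rep σ)), (aE b σ).2 ++ e.2.map (cH (b.rep σ)))

lemma val_fE {n : ℕ} (b : Blk n) (σ : Fin n) (e : EL) : (fE b σ e).val = fA b σ e.val := by
  have hswap : EL.val (e.2, e.1) = - e.val := by simp [EL.val]
  unfold fE fA
  split_ifs
  · simp [EL.val]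
  · simp [EL.val, canonE_eq, kap]
  · simp [EL.val, canonE_eq, kap, hswap]
  · have : ∀ l : List ℕ, Finsupp.mapDomain (cH (b.rep σ))
        (l.map (fun i => Finsupp.single i (1 : ℤ))).sum =
        ((l.map (cH (b.rep σ))).map (fun i => Finsupp.single i (1 : ℤ))).sum := by
      intro l
      induction l with
      | nil => simp
      | cons a l ih => simp [Finsupp.mapDomain_add, ih, Finsupp.mapDomain_single]
    simp only [EL.val, List.map_append, List.sum_append]
    rw [show ∀ x y : AG, Finsupp.mapDomain (cH (b.rep σ)) (x - y) =
      Finsupp.mapDomain (cH (b.rep σ)) x - Finsupp.mapDomain (cH (b.rep σ)) y from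
      fun x y => map_sub (Finsupp.mapDomain.addMonoidHom (cH (b.rep σ))) x y, this, this]
    abel

abbrev ESt (n : ℕ) : Type := EL × List (Fin n × EL)

def popE {n : ℕ} (b : Blk n) (p : ESt n) (σ : Fin n) : Option (ESt n) :=
  p.2.head?.bind (fun q =>
    if q.1 = σ ∧ ((b.B σ).card = 1 → canonE p.1 = []) then
      some ((q.2.1 ++ (fE b σ p.1).1, q.2.2 ++ (fE b σ p.1).2), p.2.tail) else none)

def estep {n : ℕ} (b : Blk n) (s : Option (ESt n)) (a : Fin n ⊕ Fin n) : Option (ESt n) :=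
  s.bind (fun p => Sum.casesOn a (fun σ => some (([], []), (σ, p.1) :: p.2)) (fun σ => popE b p σ))

noncomputable def ESt.abs {n : ℕ} (p : ESt n) : AG × List (Fin n × AG) :=
  (p.1.val, p.2.map (fun q => (q.1, q.2.val)))

lemma step_abs {n : ℕ} (b : Blk n) (s : Option (ESt n)) (a : Fin n ⊕ Fin n) :
    (estep b s a).map ESt.abs = mstep b (s.map ESt.abs) a := by
  have hz : ∀ e : EL, canonE e = [] ↔ e.val = 0 := fun e => by rw [canonE_eq, canonA_eq_nil]
  rcases s with _ | ⟨e, st⟩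
  · rfl
  · rcases a with σ | σ
    · simp [estep, ESt.abs, mstep, EL.val]
    · rcases st with _ | ⟨⟨τ, e'⟩, st⟩
      · simp [estep, ESt.abs, mstep, popE]
      · have hadd : EL.val (e'.1 ++ (fE b σ e).1, e'.2 ++ (fE b σ e).2) =
            e'.val + fA b σ e.val := by
          rw [← val_fE]
          simp only [EL.val, List.map_append, List.sum_append]
          abel
        simp only [estep, ESt.abs, mstep, popE, Option.bind_some, List.head?_cons, hz,
          Option.map_some, List.map_cons, List.tail_cons]
        split_ifs <;> simp [ESt.abs, hadd]

lemma run_abs {n : ℕ} (b : Blk n) (w : List (Fin n ⊕ Fin n)) : ∀ s : Option (ESt n),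
    (w.foldl (estep b) s).map ESt.abs = w.foldl (mstep b) (s.map ESt.abs) := by
  induction w with
  | nil => intro s; rfl
  | cons a w ih => intro s; simp only [List.foldl_cons, ih, step_abs]

def acc {n : ℕ} (s : Option (ESt n)) : Bool :=
  decide (s.map (fun p => (canonE p.1, p.2)) = some ([], []))

lemma acc_iff {n : ℕ} (b : Blk n) (w : List (Fin n ⊕ Fin n)) :
    acc (w.foldl (estep b) (some (([], []), []))) = true ↔
      w.foldl (mstep b) (some (0, [])) = some (0, []) := by
  have h0 : (some (([], []), []) : Option (ESt n)).map ESt.abs = some (0, []) := by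
    simp [ESt.abs, EL.val]
  rw [← h0, ← run_abs, h0]
  rcases w.foldl (estep b) (some (([], []), [])) with _ | ⟨e, st⟩
  · simp [acc]
  · simp [acc, ESt.abs, canonE_eq, canonA_eq_nil]

/-! ### computability -/

lemma prim_count : Primrec₂ (fun (l : List ℕ) (i : ℕ) => l.count i) := by
  have h : Primrec₂ (fun (l : List ℕ) (i : ℕ) => l.filter (fun a => decide (a = i))) :=
    PrimrecRel.listFilter (R := fun a i : ℕ => a = i) Primrec.eq
  refine (Primrec.list_length.comp₂ h).of_eq ?_
  intro l i
  rw [List.count_eq_length_filter]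
  congr 1

lemma prim_sum : Primrec (fun l : List ℕ => l.sum) := by
  have h : Primrec (fun l : List ℕ => l.foldr (fun a s => a + s) 0) :=
    Primrec.list_foldr Primrec.id (Primrec.const 0)
      ((Primrec.nat_add.comp (Primrec.fst.comp Primrec.snd) (Primrec.snd.comp Primrec.snd)).to₂)
  exact h.of_eq fun l => by rw [List.sum_eq_foldr]

lemma prim_canonE : Primrec canonE := by
  have c1 : Primrec (fun p : EL × ℕ => p.1.1.count p.2) :=
    prim_count.comp (Primrec.fst.comp Primrec.fst) Primrec.snd
  have c2 : Primrec (fun p : EL × ℕ => p.1.2.count p.2) :=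
    prim_count.comp (Primrec.snd.comp Primrec.fst) Primrec.snd
  unfold canonE
  refine Primrec.listFilterMap ?_ ?_
  · exact Primrec.list_range.comp (Primrec.succ.comp (Primrec.nat_add.comp
      (prim_sum.comp Primrec.fst) (prim_sum.comp Primrec.snd)))
  · exact Primrec.ite (Primrec.eq.comp c1 c2) (Primrec.const none)
      (Primrec.option_some.comp (Primrec.pair Primrec.snd
        (Primrec.pair (Primrec.nat_sub.comp c1 c2) (Primrec.nat_sub.comp c2 c1))))

lemma prim_pair3 : Primrec₂ (fun s m : ℕ => 3 * Nat.pair s m) :=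
  Primrec.nat_mul.comp (Primrec.const 3) Primrec₂.natPair

lemma prim_cT : Primrec₂ cT := Primrec.nat_add.comp prim_pair3 (Primrec.const 1)
lemma prim_cH : Primrec₂ cH := Primrec.nat_add.comp prim_pair3 (Primrec.const 2)

lemma prim_fE {n : ℕ} (b : Blk n) : Primrec₂ (fE b) := by
  have dom : ∀ {β : Type} [Primcodable β] (f : Fin n → β),
      Primrec (fun p : Fin n × EL => f p.1) := fun f => (Primrec.dom_finite f).comp Primrec.fst
  have domP : ∀ (f : Fin n → Prop), PrimrecPred (fun p : Fin n × EL => f p.1) := by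
    classical
    intro f
    exact ⟨inferInstance, dom (fun σ => decide (f σ))⟩
  have e : Primrec (fun p : Fin n × EL => p.2) := Primrec.snd
  have e1 : Primrec (fun p : Fin n × EL => p.2.1) := Primrec.fst.comp Primrec.snd
  have e2 : Primrec (fun p : Fin n × EL => p.2.2) := Primrec.snd.comp Primrec.snd
  have mp : ∀ {f : Fin n × EL → List ℕ}, Primrec f →
      Primrec (fun p : Fin n × EL => (f p).map (cH (b.rep p.1))) := by
    intro f hf
    exact Primrec.list_map hf (prim_cH.comp
      ((Primrec.dom_finite (fun σ : Fin n => (b.rep σ : ℕ))).comp (Primrec.fst.comp Primrec.fst))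
      Primrec.snd)
  unfold fE
  refine Primrec.ite (domP (fun σ => (b.B σ).card = 1)) (Primrec.const _)
    (Primrec.ite (domP (fun σ => (b.B σ).card = 2))
      (Primrec.ite (domP (fun σ => b.rep σ = σ)) ?_ ?_) ?_)
  · exact Primrec.pair (Primrec.list_cons.comp (prim_cT.comp (dom (fun σ => (σ : ℕ)))
      (Primrec.encode.comp (prim_canonE.comp e))) (Primrec.const [])) (Primrec.const [])
  · exact Primrec.pair (Primrec.const []) (Primrec.list_cons.comp
      (prim_cT.comp (dom (fun σ => (b.rep σ : ℕ)))
      (Primrec.encode.comp (prim_canonE.comp (Primrec.pair e2 e1)))) (Primrec.const []))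
  · exact Primrec.pair (Primrec.list_append.comp (dom (fun σ => (aE b σ).1)) (mp e1))
      (Primrec.list_append.comp (dom (fun σ => (aE b σ).2)) (mp e2))

lemma prim_popE {n : ℕ} (b : Blk n) : Primrec₂ (popE b) := by
  unfold popE
  refine Primrec.option_bind (Primrec.list_head?.comp (Primrec.snd.comp Primrec.fst)) ?_
  have hq1 : Primrec (fun x : (ESt n × Fin n) × (Fin n × EL) => x.2.1) :=
    Primrec.fst.comp Primrec.snd
  have hσ : Primrec (fun x : (ESt n × Fin n) × (Fin n × EL) => x.1.2) :=
    Primrec.snd.comp Primrec.fst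
  have he : Primrec (fun x : (ESt n × Fin n) × (Fin n × EL) => x.1.1.1) :=
    Primrec.fst.comp (Primrec.fst.comp Primrec.fst)
  have hst : Primrec (fun x : (ESt n × Fin n) × (Fin n × EL) => x.1.1.2) :=
    Primrec.snd.comp (Primrec.fst.comp Primrec.fst)
  have hq2 : Primrec (fun x : (ESt n × Fin n) × (Fin n × EL) => x.2.2) :=
    Primrec.snd.comp Primrec.snd
  have hf := (prim_fE b).comp hσ he
  have hc : PrimrecPred (fun x : (ESt n × Fin n) × (Fin n × EL) => (b.B x.1.2).card = 1) :=
    Primrec.eq.comp ((Primrec.dom_finite (fun σ => (b.B σ).card)).comp hσ) (Primrec.const 1)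
  have hd : PrimrecPred (fun x : (ESt n × Fin n) × (Fin n × EL) => x.2.1 = x.1.2 ∧
      ((b.B x.1.2).card = 1 → canonE x.1.1.1 = [])) :=
    ((Primrec.eq.comp hq1 hσ).and (hc.not.or
      (Primrec.eq.comp (prim_canonE.comp he) (Primrec.const [])))).of_eq
      (fun x => by rw [imp_iff_not_or])
  exact Primrec.ite hd (Primrec.option_some.comp (Primrec.pair (Primrec.pair
    (Primrec.list_append.comp (Primrec.fst.comp hq2) (Primrec.fst.comp hf))
    (Primrec.list_append.comp (Primrec.snd.comp hq2) (Primrec.snd.comp hf)))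
    (Primrec.list_tail.comp hst))) (Primrec.const none)

lemma prim_estep {n : ℕ} (b : Blk n) : Primrec₂ (estep b) := by
  unfold estep
  refine Primrec.option_bind Primrec.fst ?_
  refine Primrec.sumCasesOn (Primrec.snd.comp Primrec.fst) ?_ ?_
  · refine Primrec.option_some.comp (Primrec.pair (Primrec.const _) (Primrec.list_cons.comp
      (Primrec.pair Primrec.snd ?_) ?_))
    · exact Primrec.fst.comp (Primrec.snd.comp Primrec.fst)
    · exact Primrec.snd.comp (Primrec.snd.comp Primrec.fst)
  · exact (prim_popE b).comp (Primrec.snd.comp Primrec.fst) Primrec.snd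

lemma prim_run {n : ℕ} (b : Blk n) : Primrec (fun w : List (Fin n ⊕ Fin n) =>
    acc (w.foldl (estep b) (some (([], []), [])))) := by
  have h1 : Primrec (fun w : List (Fin n ⊕ Fin n) =>
      w.foldl (estep b) (some (([], []), []))) :=
    Primrec.list_foldl Primrec.id (Primrec.const _)
      ((prim_estep b).comp (Primrec.fst.comp Primrec.snd) (Primrec.snd.comp Primrec.snd)).to₂
  have h2 : Primrec (acc (n := n)) := by
    have hm : Primrec (fun s : Option (ESt n) => s.map (fun p => (canonE p.1, p.2))) :=
      Primrec.option_map Primrec.id (Primrec.pair (prim_canonE.comp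
        (Primrec.fst.comp Primrec.snd)) (Primrec.snd.comp Primrec.snd))
    have hp : PrimrecPred (fun s : Option (ESt n) =>
        s.map (fun p => (canonE p.1, p.2)) = some ([], [])) :=
      Primrec.eq.comp hm (Primrec.const _)
    obtain ⟨_, h⟩ := hp
    refine h.of_eq fun s => ?_
    unfold acc
    congr
  exact h2.comp h1

end CS

/-- For every finite alphabet `Σ` and every partition `𝔓` of
`Σ`, membership in the congruence multiple Dyck language `mD_c(Σ,𝔓)` is
decidable by an algorithm terminating on every input. -/
theorem CS.mDyck_membership_decidable (n : ℕ) (Pa : Set (Set (Fin n)))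
    (hPa : Setoid.IsPartition Pa) :
    ComputablePred (fun w : List (Fin n ⊕ Fin n) => w ∈ CS.MDyckLang (Fin n) Pa) := by

  classical
  obtain ⟨b, hb⟩ := CS.exists_blk n Pa hPa
  refine ⟨inferInstance, (CS.prim_run b).to_comp.of_eq fun w => ?_⟩
  rw [Bool.eq_iff_iff, CS.acc_iff, decide_eq_true_iff]
  exact (CS.mem_iff b hb w).symm
end

section
/- For every non-deleting MCFG G in which no production has two occurrences of the same non-terminal on its right-hand side, there exist a regular language R, a congruence multiple Dyck language mD, and an alphabetic homomorphism h such that there is a bijection β from the set D_G of derivations of G to R ∩ mD satisfying h(β(d)) = yield(d) for every d ∈ D_G; in particular h(R ∩ mD) = L(G). -/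
namespace CS
section Aux1
open Classical

theorem tree_ind {P : Type} {motive : Tree P → Prop}
    (h : ∀ ρ ts, (∀ t ∈ ts, motive t) → motive (.node ρ ts)) : ∀ t, motive t
  | .node ρ ts => h ρ ts (fun t ht => tree_ind h t)
termination_by t => sizeOf t
decreasing_by simp_wf; have := List.sizeOf_lt_of_mem ht; omega

/-- The bracket word of a tree. -/
def Tree.word {B : Type} : Tree B → List (B ⊕ B)
  | .node X ts => Sum.inl X :: ((ts.attach.map (fun t => Tree.word t.1)).flatten ++ [Sum.inr X])
decreasing_by simp_wf; have := List.sizeOf_lt_of_mem t.2; omega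

/-- The bracket word of a forest. -/
def fw {B : Type} (ts : List (Tree B)) : List (B ⊕ B) := (ts.map Tree.word).flatten

def Tree.root {B : Type} : Tree B → B
  | .node X _ => X

def Tree.kids {B : Type} : Tree B → List (Tree B)
  | .node _ ts => ts

lemma word_node {B : Type} (X : B) (ts : List (Tree B)) :
    (Tree.node X ts).word = Sum.inl X :: (fw ts ++ [Sum.inr X]) := by
  rw [Tree.word, List.attach_map_val (f := Tree.word)]; rfl

lemma word_eq {B : Type} (t : Tree B) :
    t.word = Sum.inl t.root :: (fw t.kids ++ [Sum.inr t.root]) := by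
  cases t; exact word_node _ _

@[simp] lemma fw_nil {B : Type} : fw ([] : List (Tree B)) = [] := rfl
@[simp] lemma fw_cons {B : Type} (t : Tree B) (ts) : fw (t :: ts) = t.word ++ fw ts := rfl

/-! decoding -/
def decStep {B : Type} (st : List (List (Tree B))) (a : B ⊕ B) : List (List (Tree B)) :=
  match a, st with
  | Sum.inl _, st => [] :: st
  | Sum.inr X, l :: l' :: st => (Tree.node X l.reverse :: l') :: st
  | Sum.inr _, st => st

lemma dec_word {B : Type} (t : Tree B) : ∀ (l : List (Tree B)) (st),
    t.word.foldl decStep (l :: st) = (t :: l) :: st := by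
  induction t using tree_ind with
  | h X ts ih =>
    have key : ∀ (us : List (Tree B)), (∀ t ∈ us, t ∈ ts) → ∀ l st,
        (fw us).foldl decStep (l :: st) = (us.reverse ++ l) :: st := by
      intro us
      induction us with
      | nil => intros; rfl
      | cons u us ih2 =>
        intro hu l st
        rw [fw_cons, List.foldl_append, ih u (hu u (by simp)),
          ih2 (fun t ht => hu t (by simp [ht]))]
        simp
    intro l st
    rw [word_node, List.foldl_cons, List.foldl_append]
    rw [show decStep (l :: st) (Sum.inl X) = [] :: l :: st from rfl, key ts (fun _ h => h)]
    simp [decStep]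

lemma word_inj {B : Type} {t t' : Tree B} (h : t.word = t'.word) : t = t' := by
  have h1 := dec_word t [] []
  have h2 := dec_word t' [] []
  rw [h, h2] at h1
  simpa using h1.symm

/-! Dyck facts -/
lemma dyck_fw {B : Type} (ts : List (Tree B)) (h : ∀ t ∈ ts, t.word ∈ DyckLang B) :
    fw ts ∈ DyckLang B := by
  induction ts with
  | nil => exact DyckRel.refl _
  | cons t ts ih =>
    have := DyckRel.append (h t (by simp)) (ih (fun t ht => h t (by simp [ht])))
    simpa [DyckLang] using this

lemma dyck_word {B : Type} (t : Tree B) : t.word ∈ DyckLang B := by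
  induction t using tree_ind with
  | h X ts ih =>
    have h1 := dyck_fw ts ih
    have h2 : DyckRel B ([Sum.inl X] ++ (fw ts ++ [Sum.inr X])) ([Sum.inl X] ++ ([] ++ [Sum.inr X])) :=
      DyckRel.append (.refl _) (DyckRel.append h1 (.refl _))
    rw [word_node]
    exact h2.trans (.cancel X)

lemma dyck_fw' {B : Type} (ts : List (Tree B)) : fw ts ∈ DyckLang B :=
  dyck_fw ts (fun t _ => dyck_word t)

/-! transfer of congruences -/
def fl {A B : Type} (f : A → Option B) : A ⊕ A → Option (B ⊕ B)
  | Sum.inl a => (f a).map Sum.inl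
  | Sum.inr a => (f a).map Sum.inr

lemma dyck_transfer {A B : Type} (f : A → Option B) {u v : List (A ⊕ A)} (h : DyckRel A u v) :
    DyckRel B (u.filterMap (fl f)) (v.filterMap (fl f)) := by
  induction h with
  | cancel σ =>
    cases hf : f σ with
    | none => simp [fl, hf, List.filterMap_cons]; exact .refl _
    | some b => simp [fl, hf, List.filterMap_cons]; exact .cancel _
  | refl w => exact .refl _
  | symm _ ih => exact ih.symm
  | trans _ _ ih1 ih2 => exact ih1.trans ih2
  | append _ _ ih1 ih2 => simpa using ih1.append ih2

lemma mdyck_transfer {A B : Type} (f : A → Option B) (PA : Set (Set A)) (PB : Set (Set B))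
    (hs : ∀ p ∈ PA, ∀ σ ∈ p, (f σ).isSome)
    (hi : ∀ σ τ b, f σ = some b → f τ = some b → σ = τ)
    (hp : ∀ p ∈ PA, {τ | ∃ σ ∈ p, f σ = some τ} ∈ PB)
    {u v : List (A ⊕ A)} (h : MDyckRel A PA u v) :
    MDyckRel B PB (u.filterMap (fl f)) (v.filterMap (fl f)) := by
  induction h with
  | refl w => exact .refl _
  | symm _ ih => exact ih.symm
  | trans _ _ ih1 ih2 => exact ih1.trans ih2
  | append _ _ ih1 ih2 => simpa using ih1.append ih2
  | cancel u0 ts hnd hP hu0 hts _ ih =>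
    cases ts with
    | nil => exact .refl _
    | cons t0 ts0 =>
      obtain ⟨b0, hb0⟩ := Option.isSome_iff_exists.1 (hs _ hP t0.1 (by simp))
      generalize hts' : t0 :: ts0 = ts at *
      clear hts' hb0
      set g : A → B := fun σ => (f σ).getD b0 with hg
      have hfg : ∀ t ∈ ts, f t.1 = some (g t.1) := by
        intro t ht
        obtain ⟨b, hb⟩ := Option.isSome_iff_exists.1 (hs _ hP t.1 (List.mem_map_of_mem ht))
        simp [hg, hb]
      set ts' := ts.map (fun t => (g t.1, t.2.1.filterMap (fl f), t.2.2.filterMap (fl f))) with hts'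
      have e1 : ((ts'.map (fun t => t.2.1)).flatten) = ((ts.map (fun t => t.2.1)).flatten).filterMap (fl f) := by
        rw [filterMap_flatten, hts']; simp [Function.comp_def]
      have e2 : ((ts'.map (fun t => t.2.2)).flatten) = ((ts.map (fun t => t.2.2)).flatten).filterMap (fl f) := by
        rw [filterMap_flatten, hts']; simp [Function.comp_def]
      have e3 : (ts'.map (fun t => Sum.inl t.1 :: t.2.1 ++ [Sum.inr t.1] ++ t.2.2)).flatten
          = ((ts.map (fun t => Sum.inl t.1 :: t.2.1 ++ [Sum.inr t.1] ++ t.2.2)).flatten).filterMap (fl f) := by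
        rw [filterMap_flatten, hts', List.map_map, List.map_map]
        congr 1
        apply List.map_congr_left
        intro t ht
        simp [fl, hfg t ht, List.filterMap_cons]
      rw [List.filterMap_append, List.filterMap_append, ← e2, ← e3]
      apply MDyckRel.cancel
      · rw [hts', List.map_map]
        rw [List.Nodup, List.pairwise_map] at hnd ⊢
        refine hnd.imp_of_mem ?_
        intro a b ha hb hab hgab
        apply hab
        simp only [Function.comp] at hgab
        exact hi _ _ _ (hfg a ha) (by rw [hfg b hb, hgab])
      · convert hp _ hP using 1
        ext τ
        simp only [hts', List.map_map, List.mem_map, Set.mem_setOf_eq, Function.comp]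
        constructor
        · rintro ⟨t, ht, rfl⟩
          exact ⟨t.1, ⟨t, ht, rfl⟩, hfg t ht⟩
        · rintro ⟨_, ⟨t, ht, rfl⟩, h2⟩
          refine ⟨t, ht, ?_⟩
          rw [hfg t ht] at h2
          exact Option.some.inj h2
      · exact dyck_transfer f hu0
      · intro t ht
        simp only [hts', List.mem_map] at ht
        obtain ⟨t, ht, rfl⟩ := ht
        exact ⟨dyck_transfer f (hts t ht).1, dyck_transfer f (hts t ht).2⟩
      · rw [e1]; simpa using ih

/-! the invariant -/
def pos {B C : Type} (cls : B → C) : List (B ⊕ B) → List C → List C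
  | [], s => s
  | Sum.inl X :: w, s => pos cls w (cls X :: s)
  | Sum.inr _ :: w, s => pos cls w s.tail

def wt {B C : Type} (cls : B → C) (c : List C → B → ℤ) : List (B ⊕ B) → List C → ℤ
  | [], _ => 0
  | Sum.inl X :: w, s => c s X + wt cls c w (cls X :: s)
  | Sum.inr _ :: w, s => wt cls c w s.tail

noncomputable def stk {B : Type} : List (B ⊕ B) → List B → Option (List B)
  | [], s => some s
  | Sum.inl X :: w, s => stk w (X :: s)
  | Sum.inr _ :: _, [] => none
  | Sum.inr X :: w, Y :: s => if X = Y then stk w s else none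

lemma stk_append {B : Type} (u v : List (B ⊕ B)) : ∀ s,
    stk (u ++ v) s = (stk u s).bind (stk v) := by
  induction u with
  | nil => intro s; rfl
  | cons a u ih =>
    intro s
    cases a with
    | inl X => simp only [List.cons_append, stk, ih]
    | inr X =>
      cases s with
      | nil => simp [stk]
      | cons Y s =>
        simp only [List.cons_append, stk]
        split_ifs <;> simp [ih]

lemma stk_dyck {B : Type} {u v : List (B ⊕ B)} (h : DyckRel B u v) : ∀ s, stk u s = stk v s := by
  induction h with
  | cancel σ => intro s; simp [stk]
  | refl w => intro s; rfl
  | symm _ ih => intro s; exact (ih s).symm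
  | trans _ _ ih1 ih2 => intro s; exact (ih1 s).trans (ih2 s)
  | append _ _ ih1 ih2 => intro s; rw [stk_append, stk_append, ih1 s]; congr 1; funext s; exact ih2 s

lemma pos_append {B C : Type} (cls : B → C) (u v : List (B ⊕ B)) : ∀ s,
    pos cls (u ++ v) s = pos cls v (pos cls u s) := by
  induction u with
  | nil => intro s; rfl
  | cons a u ih => intro s; cases a <;> simp only [List.cons_append, pos, ih]

lemma wt_append {B C : Type} (cls : B → C) (c) (u v : List (B ⊕ B)) : ∀ s,
    wt cls c (u ++ v) s = wt cls c u s + wt cls c v (pos cls u s) := by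
  induction u with
  | nil => intro s; simp [wt, pos]
  | cons a u ih => intro s; cases a <;> simp only [List.cons_append, pos, wt, ih, add_assoc]

lemma pos_dyck {B C : Type} (cls : B → C) {u v : List (B ⊕ B)} (h : DyckRel B u v) :
    ∀ s, pos cls u s = pos cls v s := by
  induction h with
  | cancel σ => intro s; simp [pos]
  | refl w => intro s; rfl
  | symm _ ih => intro s; exact (ih s).symm
  | trans _ _ ih1 ih2 => intro s; exact (ih1 s).trans (ih2 s)
  | append _ _ ih1 ih2 => intro s; rw [pos_append, pos_append, ih1 s, ih2]

lemma mdyck_dyck {B : Type} {P : Set (Set B)} {u v : List (B ⊕ B)} (h : MDyckRel B P u v) :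
    DyckRel B u v := by
  induction h with
  | refl w => exact .refl _
  | symm _ ih => exact ih.symm
  | trans _ _ ih1 ih2 => exact ih1.trans ih2
  | append _ _ ih1 ih2 => exact ih1.append ih2
  | cancel u0 ts hnd hP hu0 hts hmm ih =>
    refine DyckRel.append (.refl _) ?_
    clear ih hP hnd hmm
    induction ts with
    | nil => exact .refl _
    | cons t ts ih =>
      simp only [List.map_cons, List.flatten_cons]
      refine DyckRel.append ?_ (ih (fun t ht => hts t (by simp [ht])))
      have h1 := (hts t (by simp)).1
      have h2 : DyckRel B ([Sum.inl t.1] ++ (t.2.1 ++ [Sum.inr t.1])) ([Sum.inl t.1] ++ ([] ++ [Sum.inr t.1])) :=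
        DyckRel.append (.refl _) (DyckRel.append h1 (.refl _))
      have h3 := DyckRel.append (h2.trans (.cancel t.1)) (.refl t.2.2)
      simpa using h3

/-- balanced weights -/
def Bal {B C : Type} (P : Set (Set B)) (c : List C → B → ℤ) : Prop :=
  ∀ l : List B, l.Nodup → {σ | σ ∈ l} ∈ P → ∀ s, (l.map (c s)).sum = 0

lemma pos_word_dyck {B C : Type} (cls : B → C) {u : List (B ⊕ B)} (h : u ∈ DyckLang B) (s) :
    pos cls u s = s := pos_dyck cls h s

lemma wt_mdyck {B C : Type} (cls : B → C) (P : Set (Set B)) (c : List C → B → ℤ)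
    (hb : Bal P c) (hc : ∀ p ∈ P, ∀ X ∈ p, ∀ Y ∈ p, cls X = cls Y)
    {u v : List (B ⊕ B)} (h : MDyckRel B P u v) : ∀ s, wt cls c u s = wt cls c v s := by
  induction h with
  | refl w => intro s; rfl
  | symm _ ih => intro s; exact (ih s).symm
  | trans _ _ ih1 ih2 => intro s; exact (ih1 s).trans (ih2 s)
  | append h1 _ ih1 ih2 =>
    intro s; rw [wt_append, wt_append, ih1 s, ih2, pos_dyck cls (mdyck_dyck h1)]
  | cancel u0 ts hnd hP hu0 hts _ ih =>
    intro s
    rw [wt_append, wt_append, pos_word_dyck cls hu0]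
    congr 1
    cases ts with
    | nil => rfl
    | cons t0 ts0 =>
    have hq : ∀ t ∈ t0 :: ts0, cls t.1 = cls t0.1 := fun t ht =>
      hc _ hP _ (List.mem_map_of_mem ht) _ (by simp)
    generalize cls t0.1 = q at hq
    generalize t0 :: ts0 = ts at *
    have h0 := hb _ hnd hP s
    have h1 := ih (q :: s)
    clear ih hP hnd
    have e1 : ∀ us : List (B × List (B ⊕ B) × List (B ⊕ B)), (∀ t ∈ us, t ∈ ts) →
       wt cls c (us.map (fun t => Sum.inl t.1 :: t.2.1 ++ [Sum.inr t.1] ++ t.2.2)).flatten s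
       = ((us.map Prod.fst).map (c s)).sum + wt cls c ((us.map (fun t => t.2.1)).flatten) (q :: s)
         + wt cls c ((us.map (fun t => t.2.2)).flatten) s := by
      intro us
      induction us with
      | nil => intro _; simp [wt]
      | cons t us ih =>
        intro hu
        have ht := hts t (hu t (by simp))
        simp only [List.map_cons, List.flatten_cons, List.sum_cons, List.cons_append, List.append_assoc]
        simp only [wt, wt_append, pos_word_dyck cls ht.1, pos_word_dyck cls ht.2, hq t (hu t (by simp)),
          List.nil_append, List.tail_cons, pos]
        have ih' := ih (fun t h => hu t (by simp [h]))
        simp only [List.cons_append, List.append_assoc, List.nil_append] at ih'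
        rw [ih']
        ring
    rw [e1 ts (fun _ h => h), h0, h1]
    simp [wt]

/-! weight of trees -/
lemma wt_fw {B C : Type} (cls : B → C) (c) (ts : List (Tree B)) (s) :
    wt cls c (fw ts) s = (ts.map (fun t => wt cls c t.word s)).sum := by
  induction ts with
  | nil => rfl
  | cons t ts ih => rw [fw_cons, wt_append, pos_word_dyck cls (dyck_word t), ih]; simp

lemma wt_word {B C : Type} (cls : B → C) (c) (t : Tree B) (s) :
    wt cls c t.word s = c s t.root + (t.kids.map (fun t' => wt cls c t'.word (cls t.root :: s))).sum := by
  rw [word_eq, wt, wt_append, wt_fw]; simp [wt]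

end Aux1
end CS

namespace CS
section Aux2
open Classical

def Follow {B L : Type} (slot : B → L) (content : B → List L) : B ⊕ B → B ⊕ B → Prop
  | Sum.inl X, Sum.inl Y => (content X)[0]? = some (slot Y)
  | Sum.inl X, Sum.inr _ => content X = []
  | Sum.inr X, Sum.inl Y => ∃ Z m, (content Z)[m]? = some (slot X) ∧ (content Z)[m+1]? = some (slot Y)
  | Sum.inr X, Sum.inr _ => ∃ Z m, (content Z)[m]? = some (slot X) ∧ (content Z).length = m + 1

def Pre {B L : Type} (slot : B → L) (content : B → List L) (X : B) (k : ℕ) (a : B ⊕ B) : Prop :=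
  (a = Sum.inl X ∧ k = 0) ∨ ∃ Y m, a = Sum.inr Y ∧ k = m + 1 ∧ (content X)[m]? = some (slot Y)

def Det {B L : Type} (content : B → List L) : Prop :=
  ∀ (X Y : B) (m m' : ℕ) (s : L), (content X)[m]? = some s → (content Y)[m']? = some s →
    content X = content Y ∧ m = m'

lemma pre_inl {B L : Type} {slot : B → L} {content : B → List L} (hdet : Det content)
    {X : B} {k : ℕ} {a : B ⊕ B} (h : Pre slot content X k a) (Y : B) :
    Follow slot content a (Sum.inl Y) ↔ (content X)[k]? = some (slot Y) := by
  rcases h with ⟨rfl, rfl⟩ | ⟨Z, m, rfl, rfl, h⟩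
  · rfl
  · constructor
    · rintro ⟨Z', m', h1, h2⟩
      obtain ⟨e1, rfl⟩ := hdet _ _ _ _ _ h h1
      rw [e1]; exact h2
    · intro h2; exact ⟨X, m, h, h2⟩

lemma pre_inr {B L : Type} {slot : B → L} {content : B → List L} (hdet : Det content)
    {X : B} {k : ℕ} {a : B ⊕ B} (h : Pre slot content X k a) (Y : B) :
    Follow slot content a (Sum.inr Y) ↔ (content X).length = k := by
  rcases h with ⟨rfl, rfl⟩ | ⟨Z, m, rfl, rfl, h⟩
  · simp [Follow]
  · constructor
    · rintro ⟨Z', m', h1, h2⟩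
      obtain ⟨e1, rfl⟩ := hdet _ _ _ _ _ h h1
      rw [e1]; exact h2
    · intro h2; exact ⟨X, m, h, h2⟩

inductive WT {B L : Type} (slot : B → L) (content : B → List L) (Q : B → Prop) : Tree B → Prop
  | node (X : B) (ts : List (Tree B)) : Q X → ts.map (fun t => slot t.root) = content X →
      (∀ t ∈ ts, WT slot content Q t) → WT slot content Q (.node X ts)

lemma parse {B L : Type} {slot : B → L} {content : B → List L} (hdet : Det content) (Q : B → Prop) :
    ∀ (n : ℕ) (w : List (B ⊕ B)), w.length ≤ n → ∀ (X : B) (k : ℕ) (a : B ⊕ B) (s : List B),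
      Pre slot content X k a → (∀ Y, Sum.inl Y ∈ w → Q Y) →
      List.IsChain (Follow slot content) (a :: w) → stk w (X :: s) = some [] →
      k ≤ (content X).length →
      ∃ ts w2, w = fw ts ++ Sum.inr X :: w2 ∧
        ts.map (fun t => slot t.root) = (content X).drop k ∧ (∀ t ∈ ts, WT slot content Q t) ∧
        List.IsChain (Follow slot content) (Sum.inr X :: w2) ∧ stk w2 s = some [] := by
  intro n
  induction n with
  | zero =>
    intro w hw X k a s _ _ _ hs
    have : w = [] := List.length_eq_zero_iff.1 (by omega)
    subst this
    simp [stk] at hs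
  | succ n ih =>
    intro w hw X k a s hpre hQ hch hs hk
    cases w with
    | nil => simp [stk] at hs
    | cons b w =>
      rw [List.isChain_cons_cons] at hch
      obtain ⟨hf, hch⟩ := hch
      simp only [List.length_cons] at hw
      cases b with
      | inl Y =>
        rw [pre_inl hdet hpre] at hf
        simp only [stk] at hs
        obtain ⟨ts1, w2, hw2, hts1, hwt1, hch2, hs2⟩ := ih w (by omega) Y 0 (Sum.inl Y) (X :: s)
          (Or.inl ⟨rfl, rfl⟩) (fun Z hZ => hQ Z (by simp [hZ])) hch hs (Nat.zero_le _)
        have hlt : k < (content X).length := by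
          by_contra hh
          rw [List.getElem?_eq_none (by omega)] at hf
          simp at hf
        have hl : w2.length ≤ n := by
          have := congrArg List.length hw2
          simp at this; omega
        obtain ⟨ts2, w3, hw3, hts2, hwt2, hch3, hs3⟩ := ih w2 hl X (k+1) (Sum.inr Y) s
          (Or.inr ⟨Y, k, rfl, rfl, hf⟩) (fun Z hZ => hQ Z (by simp [hw2, hZ])) hch2 hs2 hlt
        refine ⟨Tree.node Y ts1 :: ts2, w3, ?_, ?_, ?_, hch3, hs3⟩
        · rw [fw_cons, word_node, hw2, hw3]; simp
        · rw [List.map_cons, hts2, List.drop_eq_getElem_cons hlt]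
          congr 1
          rw [List.getElem?_eq_getElem hlt] at hf
          exact (Option.some.inj hf).symm
        · intro t ht
          rcases List.mem_cons.1 ht with rfl | ht
          · exact WT.node _ _ (hQ Y (by simp)) (by simpa using hts1) hwt1
          · exact hwt2 t ht
      | inr Y =>
        rw [pre_inr hdet hpre] at hf
        simp only [stk] at hs
        split_ifs at hs with hYX
        subst hYX
        refine ⟨[], w, by simp, by simp [← hf], by simp, hch, hs⟩

lemma parse_top {B L : Type} {slot : B → L} {content : B → List L} (hdet : Det content) (Q : B → Prop)
    (X : B) (w : List (B ⊕ B)) (hX : ∀ Z, slot X ∉ content Z)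
    (hQ : ∀ Y, Sum.inl Y ∈ Sum.inl X :: w → Q Y)
    (hch : List.IsChain (Follow slot content) (Sum.inl X :: w))
    (hs : stk (Sum.inl X :: w) [] = some []) :
    ∃ t : Tree B, t.root = X ∧ WT slot content Q t ∧ Sum.inl X :: w = t.word := by
  obtain ⟨ts, w2, hw2, hts, hwt, hch2, _⟩ := parse hdet Q _ w le_rfl X 0 (Sum.inl X) []
    (Or.inl ⟨rfl, rfl⟩) (fun Z hZ => hQ Z (by simp [hZ])) hch (by simpa [stk] using hs) (Nat.zero_le _)
  have : w2 = [] := by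
    cases w2 with
    | nil => rfl
    | cons b w2 =>
      exfalso
      have := (List.isChain_cons_cons.1 hch2).1
      cases b <;>
      · obtain ⟨Z, m, h, _⟩ := this
        exact hX Z (List.mem_of_getElem? h)
  subst this
  exact ⟨.node X ts, rfl, .node _ _ (hQ X (by simp)) (by simpa using hts) hwt, by rw [word_node, hw2]⟩

lemma chain_word {B L : Type} {slot : B → L} {content : B → List L} (hdet : Det content) (Q : B → Prop)
    (t : Tree B) (h : WT slot content Q t) : List.IsChain (Follow slot content) t.word := by
  induction t using tree_ind with
  | h X ts ih =>
    cases h with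
    | node _ _ hQ hts hwt =>
    rw [word_node]
    have key : ∀ (us : List (Tree B)) (k : ℕ) (a : B ⊕ B), (∀ t ∈ us, t ∈ ts) →
        k ≤ (content X).length →
        Pre slot content X k a → us.map (fun t => slot t.root) = (content X).drop k →
        List.IsChain (Follow slot content) (a :: (fw us ++ [Sum.inr X])) := by
      intro us
      induction us with
      | nil =>
        intro k a _ hk hp hd
        have : (content X).length = k := by
          have := congrArg List.length hd
          simp at this; omega
        simp only [fw_nil, List.nil_append, List.isChain_cons_cons, List.isChain_singleton, and_true]
        rw [pre_inr hdet hp]; exact this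
      | cons u us ih2 =>
        intro k a hu hk hp hd
        have hlt : k < (content X).length := by
          have := congrArg List.length hd
          simp at this; omega
        rw [List.drop_eq_getElem_cons hlt, List.map_cons] at hd
        injection hd with hd1 hd2
        have hg : (content X)[k]? = some (slot u.root) := by
          rw [List.getElem?_eq_getElem hlt, hd1]
        have h1 := ih u (hu u (by simp)) (hwt u (hu u (by simp)))
        have h2 := ih2 (k+1) (Sum.inr u.root) (fun t ht => hu t (by simp [ht])) hlt
          (Or.inr ⟨_, k, rfl, rfl, hg⟩) hd2
        rw [word_eq] at h1
        have e : a :: (fw (u :: us) ++ [Sum.inr X]) =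
          (a :: Sum.inl u.root :: fw u.kids) ++ Sum.inr u.root :: (fw us ++ [Sum.inr X]) := by
          rw [fw_cons, word_eq]; simp
        rw [e, List.isChain_split]
        refine ⟨?_, h2⟩
        simp only [List.cons_append, List.isChain_cons_cons]
        exact ⟨(pre_inl hdet hp _).2 hg, h1⟩
    exact key ts 0 _ (fun _ h => h) (Nat.zero_le _) (Or.inl ⟨rfl, rfl⟩) (by simpa using hts)

lemma mem_word_valid {B L : Type} {slot : B → L} {content : B → List L} (Q : B → Prop)
    (t : Tree B) (h : WT slot content Q t) : ∀ Y, (Sum.inl Y ∈ t.word ∨ Sum.inr Y ∈ t.word) → Q Y := by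
  induction t using tree_ind with
  | h X ts ih =>
    cases h with
    | node _ _ hQ hts hwt =>
    intro Y hY
    rw [word_node] at hY
    simp only [fw, List.mem_cons, List.mem_append, List.mem_flatten, List.mem_map, Sum.inl.injEq, Sum.inr.injEq,
      reduceCtorEq, false_or, or_false, List.not_mem_nil] at hY
    rcases hY with (rfl | ⟨_, ⟨t, ht, rfl⟩, h⟩) | (⟨_, ⟨t, ht, rfl⟩, h⟩ | rfl)
    · exact hQ
    · exact ih t ht (hwt t ht) Y (Or.inl h)
    · exact ih t ht (hwt t ht) Y (Or.inr h)
    · exact hQ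

/-! removing a class of siblings -/
lemma removal {B : Type} (P : Set (Set B)) (p : Tree B → Bool) (E : List (Tree B))
    (h1 : ((E.filter p).map Tree.root).Nodup)
    (h2 : {σ | σ ∈ (E.filter p).map Tree.root} ∈ P)
    (h3 : MDyckRel B P ((E.filter p).map (fun t => fw t.kids)).flatten []) :
    MDyckRel B P (fw E) (fw (E.filter (fun t => !p t))) := by
  have key : ∀ E : List (Tree B), ∃ (u0 : List (B ⊕ B)) (ts : List (B × List (B ⊕ B) × List (B ⊕ B))),
      u0 ∈ DyckLang B ∧ (∀ t ∈ ts, t.2.1 ∈ DyckLang B ∧ t.2.2 ∈ DyckLang B) ∧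
      ts.map Prod.fst = (E.filter p).map Tree.root ∧
      ts.map (fun t => t.2.1) = (E.filter p).map (fun t => fw t.kids) ∧
      fw E = u0 ++ (ts.map (fun t => Sum.inl t.1 :: t.2.1 ++ [Sum.inr t.1] ++ t.2.2)).flatten ∧
      fw (E.filter (fun t => !p t)) = u0 ++ (ts.map (fun t => t.2.2)).flatten := by
    intro E
    induction E with
    | nil => exact ⟨[], [], .refl _, by simp, by simp, by simp, by simp, by simp⟩
    | cons t E ih =>
      obtain ⟨u0, ts, a1, a2, a3, a4, a5, a6⟩ := ih
      cases hp : p t with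
      | true =>
        refine ⟨[], (t.root, fw t.kids, u0) :: ts, .refl _, ?_, ?_, ?_, ?_, ?_⟩
        · intro t' ht'
          rcases List.mem_cons.1 ht' with rfl | ht'
          · exact ⟨dyck_fw' _, a1⟩
          · exact a2 t' ht'
        · simp [hp, a3]
        · simp [hp, a4]
        · rw [fw_cons, a5, word_eq]; simp
        · simp [hp, a6]
      | false =>
        refine ⟨t.word ++ u0, ts, ?_, a2, ?_, ?_, ?_, ?_⟩
        · simpa [DyckLang] using DyckRel.append (dyck_word t) a1
        · simp [hp, a3]
        · simp [hp, a4]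
        · rw [fw_cons, a5]; simp
        · simp [hp, a6]
  obtain ⟨u0, ts, a1, a2, a3, a4, a5, a6⟩ := key E
  rw [a5, a6]
  refine MDyckRel.cancel u0 ts (by rw [a3]; exact h1) (by rw [a3]; exact h2) a1 a2 (by rw [a4]; exact h3)

lemma good_of_classes {B C : Type} (P : Set (Set B)) (cls : B → C) : ∀ (n : ℕ) (E : List (Tree B)), E.length ≤ n →
    (∀ t ∈ E, ((E.filter (fun t' => decide (cls t'.root = cls t.root))).map Tree.root).Nodup ∧
      {σ | σ ∈ (E.filter (fun t' => decide (cls t'.root = cls t.root))).map Tree.root} ∈ P ∧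
      MDyckRel B P ((E.filter (fun t' => decide (cls t'.root = cls t.root))).map (fun t => fw t.kids)).flatten []) →
    MDyckRel B P (fw E) [] := by
  intro n
  induction n with
  | zero =>
    intro E hE _
    have : E = [] := List.length_eq_zero_iff.1 (by omega)
    subst this; exact .refl _
  | succ n ih =>
    intro E hE h
    by_cases hE0 : E = []
    · subst hE0; exact .refl _
    · obtain ⟨t, ht⟩ := List.exists_mem_of_ne_nil E hE0
      obtain ⟨b1, b2, b3⟩ := h t ht
      refine (removal P (fun t' => decide (cls t'.root = cls t.root)) E b1 b2 b3).trans ?_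
      apply ih
      · have : (E.filter (fun t' => !decide (cls t'.root = cls t.root))).length < E.length := by
          rw [List.length_filter_lt_length_iff_exists]
          exact ⟨t, ht, by simp⟩
        omega
      · intro t' ht'
        obtain ⟨m1, m2⟩ := List.mem_filter.1 ht'
        have m3 : cls t'.root ≠ cls t.root := by simpa using m2
        have e : (E.filter (fun t' => !decide (cls t'.root = cls t.root))).filter
            (fun t'' => decide (cls t''.root = cls t'.root)) =
            E.filter (fun t'' => decide (cls t''.root = cls t'.root)) := by
          rw [List.filter_filter]
          apply List.filter_congr
          intro x _
          by_cases hx : cls x.root = cls t'.root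
          · simp [hx, m3]
          · simp [hx]
        rw [e]
        exact h t' m1

/-! local languages are regular -/
lemma regular_local {α : Type} [Finite α] (F : α → Prop) (R : α → α → Prop) :
    IsRegular {w : List α | ∃ a w', w = a :: w' ∧ F a ∧ List.IsChain R w} := by
  have : Fintype α := Fintype.ofFinite α
  let M : DFA α (Option (Option α)) :=
    { step := fun q a => match q with
        | none => none
        | some none => if F a then some (some a) else none
        | some (some b) => if R b a then some (some a) else none
      start := some none
      accept := {q | ∃ a, q = some (some a)} }
  refine ⟨_, inferInstance, M, ?_⟩
  have h0 : ∀ w : List α, M.evalFrom none w = none := by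
    intro w
    induction w with
    | nil => rfl
    | cons a w ih => exact ih
  have h1 : ∀ (w : List α) b, (∃ a, M.evalFrom (some (some b)) w = some (some a)) ↔ List.IsChain R (b :: w) := by
    intro w
    induction w with
    | nil => intro b; simp [M, DFA.evalFrom]
    | cons a w ih =>
      intro b
      rw [List.isChain_cons_cons, ← ih a]
      by_cases h : R b a
      · have : M.evalFrom (some (some b)) (a :: w) = M.evalFrom (some (some a)) w := by
          simp [DFA.evalFrom, M, h]
        rw [this]; simp [h]
      · have : M.evalFrom (some (some b)) (a :: w) = M.evalFrom none w := by
          simp [DFA.evalFrom, M, h]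
        rw [this, h0]; simp [h]
  intro w
  change (∃ a, M.evalFrom (some none) w = some (some a)) ↔ _
  cases w with
  | nil => simp [DFA.evalFrom]
  | cons a w =>
    by_cases h : F a
    · have : M.evalFrom (some none) (a :: w) = M.evalFrom (some (some a)) w := by
        simp [DFA.evalFrom, M, h]
      rw [this, h1]
      constructor
      · intro hc; exact ⟨a, w, rfl, h, hc⟩
      · rintro ⟨_, _, _, _, hc⟩; exact hc
    · have : M.evalFrom (some none) (a :: w) = M.evalFrom none w := by
        simp [DFA.evalFrom, M, h]
      rw [this, h0]
      simp only [reduceCtorEq, exists_false, false_iff]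
      rintro ⟨_, _, e, hF, _⟩
      injection e with e1 e2
      exact h (e1 ▸ hF)

end Aux2
end CS

namespace CS
section Aux3
open Classical

variable {Δ N : Type} {sortN : N → ℕ}

def es (sortN : N → ℕ) (A : N) : ℕ := max 1 (sortN A)

lemma es_pos (A : N) : 0 < es sortN A := by simp [es]

noncomputable def extras (ρ : Production Δ N sortN) : List (Δ ⊕ ℕ × ℕ) :=
  ((List.range ρ.rhs.length).filter (fun i => decide ((ρ.rhs[i]?).map sortN = some 0))).map
    (fun i => Sum.inr (i, 0))

noncomputable def ecomp (ρ : Production Δ N sortN) (j : ℕ) : List (Δ ⊕ ℕ × ℕ) :=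
  ρ.comp.getD j [] ++ if j = 0 then extras ρ else []

lemma extras_get {ρ : Production Δ N sortN} {x} (h : x ∈ extras ρ) :
    ∃ i A, x = Sum.inr (i, 0) ∧ ρ.rhs[i]? = some A ∧ sortN A = 0 := by
  simp only [extras, List.mem_map, List.mem_filter, decide_eq_true_eq] at h
  obtain ⟨i, ⟨_, h2⟩, rfl⟩ := h
  rw [Option.map_eq_some_iff] at h2
  obtain ⟨A, h3, h4⟩ := h2
  exact ⟨i, A, rfl, h3, h4⟩

lemma extras_nodup (ρ : Production Δ N sortN) : (extras ρ).Nodup := by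
  refine List.Nodup.map ?_ (List.Nodup.filter _ List.nodup_range)
  intro a b h
  simpa using h

lemma single_pos {α β : Type} (l : List (α ⊕ β)) (h : (l.filterMap Sum.getRight?).Nodup) (p : β) :
    ∀ k k2 : ℕ, l[k]? = some (Sum.inr p) → l[k2]? = some (Sum.inr p) → k = k2 := by
  induction l with
  | nil => intro k k2 h1; simp at h1
  | cons a l ih =>
    have hn : (l.filterMap Sum.getRight?).Nodup := by
      cases a with
      | inl a => rw [List.filterMap_cons] at h; exact h
      | inr b => simp at h; exact h.2
    have hm : a = Sum.inr p → ∀ k : ℕ, l[k]? ≠ some (Sum.inr p) := by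
      rintro rfl k hk
      simp at h
      exact h.1 (List.mem_of_getElem? hk)
    intro k k2 h1 h2
    cases k with
    | zero =>
      cases k2 with
      | zero => rfl
      | succ k2 => simp at h1 h2; exact absurd h2 (hm h1 k2)
    | succ k =>
      cases k2 with
      | zero => simp at h1 h2; exact absurd h1 (hm h2 k)
      | succ k2 => simp at h1 h2; rw [ih hn k k2 h1 h2]

lemma list_pos {α β : Type} (L : List (List (α ⊕ β))) (h : (L.flatten.filterMap Sum.getRight?).Nodup) (p : β) :
    ∀ j j2 k k2 : ℕ, (L.getD j [])[k]? = some (Sum.inr p) → (L.getD j2 [])[k2]? = some (Sum.inr p) →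
      j = j2 ∧ k = k2 := by
  induction L with
  | nil => intro j j2 k k2 h1; simp at h1
  | cons l L ih =>
    rw [List.flatten_cons, List.filterMap_append, List.nodup_append] at h
    obtain ⟨hl, hL, hd⟩ := h
    have hx : ∀ j k k2 : ℕ, l[k]? = some (Sum.inr p) → (L.getD j [])[k2]? = some (Sum.inr p) → False := by
      intro j k k2 h1 h2
      refine hd p ?_ p ?_ rfl
      · rw [List.mem_filterMap]; exact ⟨_, List.mem_of_getElem? h1, rfl⟩
      · rw [List.mem_filterMap]
        refine ⟨Sum.inr p, ?_, rfl⟩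
        have h3 := List.mem_of_getElem? h2
        rw [List.mem_flatten]
        refine ⟨_, ?_, h3⟩
        by_cases hj : j < L.length
        · rw [List.getD_eq_getElem _ _ hj]; exact List.getElem_mem hj
        · rw [List.getD_eq_default _ _ (by omega)] at h3; simp at h3
    intro j j2 k k2 h1 h2
    cases j with
    | zero =>
      cases j2 with
      | zero => simp only [List.getD_cons_zero] at h1 h2; exact ⟨rfl, single_pos l hl p k k2 h1 h2⟩
      | succ j2 => simp only [List.getD_cons_zero, List.getD_cons_succ] at h1 h2; exact (hx _ _ _ h1 h2).elim
    | succ j =>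
      cases j2 with
      | zero => simp only [List.getD_cons_zero, List.getD_cons_succ] at h1 h2; exact (hx _ _ _ h2 h1).elim
      | succ j2 =>
        simp only [List.getD_cons_succ] at h1 h2
        obtain ⟨rfl, rfl⟩ := ih hL j j2 k k2 h1 h2
        exact ⟨rfl, rfl⟩

lemma getD_mem_flatten {α : Type} {L : List (List α)} {j k : ℕ} {x : α}
    (h : (L.getD j [])[k]? = some x) : x ∈ L.flatten ∧ j < L.length := by
  have h3 := List.mem_of_getElem? h
  by_cases hj : j < L.length
  · rw [List.getD_eq_getElem _ _ hj] at h3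
    exact ⟨List.mem_flatten.2 ⟨_, List.getElem_mem hj, h3⟩, hj⟩
  · rw [List.getD_eq_default _ _ (by omega)] at h3; simp at h3

lemma comp_wf {ρ : Production Δ N sortN} {j k i c : ℕ}
    (h : (ρ.comp.getD j [])[k]? = some (Sum.inr (i, c))) :
    ∃ A, ρ.rhs[i]? = some A ∧ c < sortN A := by
  obtain ⟨h1, h2⟩ := ρ.wf (i, c) (List.mem_filterMap.2 ⟨_, (getD_mem_flatten h).1, rfl⟩)
  exact ⟨_, List.getElem?_eq_getElem h1, h2⟩

lemma ecomp_cases {ρ : Production Δ N sortN} {j k : ℕ} {x}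
    (h : (ecomp ρ j)[k]? = some x) :
    (ρ.comp.getD j [])[k]? = some x ∨
      (j = 0 ∧ (ρ.comp.getD j []).length ≤ k ∧ (extras ρ)[k - (ρ.comp.getD j []).length]? = some x) := by
  rw [ecomp, List.getElem?_append] at h
  split_ifs at h with h1 h2
  · exact Or.inl h
  · exact Or.inr ⟨h2, by omega, h⟩
  · simp at h

lemma ecomp_wf {ρ : Production Δ N sortN} {j k i c : ℕ}
    (h : (ecomp ρ j)[k]? = some (Sum.inr (i, c))) :
    ∃ A, ρ.rhs[i]? = some A ∧ c < es sortN A := by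
  rcases ecomp_cases h with h | ⟨_, _, h⟩
  · obtain ⟨A, h1, h2⟩ := comp_wf h
    exact ⟨A, h1, lt_of_lt_of_le h2 (le_max_right _ _)⟩
  · obtain ⟨i', A, h1, h2, h3⟩ := extras_get (List.mem_of_getElem? h)
    simp only [Sum.inr.injEq, Prod.mk.injEq] at h1
    obtain ⟨rfl, rfl⟩ := h1
    exact ⟨A, h2, es_pos A⟩

lemma ecomp_uniq {ρ : Production Δ N sortN} {j k j2 k2 i c : ℕ}
    (h : (ecomp ρ j)[k]? = some (Sum.inr (i, c))) (h' : (ecomp ρ j2)[k2]? = some (Sum.inr (i, c))) :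
    j = j2 ∧ k = k2 := by
  have aux : ∀ {j k k' : ℕ}, (ρ.comp.getD j [])[k]? = some (Sum.inr (i, c)) →
      (extras ρ)[k']? = some (Sum.inr (i, c)) → False := by
    intro j k k' h1 h2
    obtain ⟨A, a1, a2⟩ := comp_wf h1
    obtain ⟨i', A', b1, b2, b3⟩ := extras_get (List.mem_of_getElem? h2)
    simp only [Sum.inr.injEq, Prod.mk.injEq] at b1
    obtain ⟨rfl, rfl⟩ := b1
    rw [a1] at b2
    cases b2
    omega
  rcases ecomp_cases h with h | ⟨rfl, hl, h⟩ <;> rcases ecomp_cases h' with h' | ⟨rfl, hl', h'⟩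
  · exact list_pos ρ.comp ρ.linear (i, c) _ _ _ _ h h'
  · exact (aux h h').elim
  · exact (aux h' h).elim
  · have hlt : k - (ρ.comp.getD 0 []).length < (extras ρ).length := by
      by_contra hh
      rw [List.getElem?_eq_none (by omega)] at h
      simp at h
    have := (List.getElem?_inj hlt (extras_nodup ρ)).1 (h.trans h'.symm)
    exact ⟨rfl, by omega⟩

lemma ecomp_ex {ρ : Production Δ N sortN} (hρ : ρ.NonDeleting) {i c : ℕ} {A : N}
    (hA : ρ.rhs[i]? = some A) (hc : c < es sortN A) :
    ∃ j k : ℕ, j < es sortN ρ.lhs ∧ (ecomp ρ j)[k]? = some (Sum.inr (i, c)) := by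
  obtain ⟨hi, hA'⟩ := List.getElem?_eq_some_iff.1 hA
  by_cases h0 : sortN A = 0
  · have hc0 : c = 0 := by simp [es, h0] at hc; omega
    subst hc0
    have : Sum.inr (i, 0) ∈ ecomp ρ 0 := by
      simp only [ecomp, if_true, List.mem_append]
      right
      simp only [extras, List.mem_map, List.mem_filter, List.mem_range]
      exact ⟨i, ⟨hi, by simp [hA, h0]⟩, rfl⟩
    obtain ⟨k, hk⟩ := List.mem_iff_getElem?.1 this
    exact ⟨0, k, es_pos _, hk⟩
  · have hc' : c < sortN A := by simp only [es] at hc; omega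
    have := hρ i hi c (by simpa [hA'] using hc')
    simp only [Production.vars, List.mem_filterMap] at this
    obtain ⟨x, hx, hx2⟩ := this
    have hx3 : x = Sum.inr (i, c) := by cases x <;> simp_all
    subst hx3
    obtain ⟨l, hl, hxl⟩ := List.mem_flatten.1 hx
    obtain ⟨j, hj, rfl⟩ := List.mem_iff_getElem.1 hl
    obtain ⟨k, hk, hk2⟩ := List.mem_iff_getElem.1 hxl
    refine ⟨j, k, ?_, ?_⟩
    · rw [ρ.comp_len] at hj; exact lt_of_lt_of_le hj (le_max_right _ _)
    · rw [ecomp, List.getElem?_append, List.getD_eq_getElem _ _ hj, if_pos hk,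
        List.getElem?_eq_getElem hk, hk2]

/-! symbols -/
abbrev Slot (Δ N : Type) (sortN : N → ℕ) := Option (Production Δ N sortN × ℕ × ℕ)
abbrev Big (Δ N : Type) (sortN : N → ℕ) := Slot Δ N sortN × Option (Production Δ N sortN)

noncomputable def itm : Slot Δ N sortN → Option (Δ ⊕ ℕ × ℕ)
  | none => none
  | some (ρ, j, k) => (ecomp ρ j)[k]?

noncomputable def cidx (sl : Slot Δ N sortN) : ℕ :=
  match itm sl with
  | some (Sum.inr (_, c)) => c
  | _ => 0

noncomputable def scls : Slot Δ N sortN → (Production Δ N sortN × ℕ) ⊕ Slot Δ N sortN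
  | none => Sum.inr none
  | some (ρ, j, k) => match itm (some (ρ, j, k)) with
    | some (Sum.inr (i, _)) => Sum.inl (ρ, i)
    | _ => Sum.inr (some (ρ, j, k))

abbrev Cls (Δ N : Type) (sortN : N → ℕ) :=
  ((Production Δ N sortN × ℕ) ⊕ Slot Δ N sortN) × Option (Production Δ N sortN)

noncomputable def cls (X : Big Δ N sortN) : Cls Δ N sortN := (scls X.1, X.2)

noncomputable def cont (ρ : Production Δ N sortN) (j : ℕ) : List (Slot Δ N sortN) :=
  (List.range (ecomp ρ j).length).map (fun k => some (ρ, j, k))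

noncomputable def content (X : Big Δ N sortN) : List (Slot Δ N sortN) :=
  match X.2 with
  | none => []
  | some ρ => cont ρ (cidx X.1)

lemma cont_get {ρ : Production Δ N sortN} {j m : ℕ} {s} (h : (cont ρ j)[m]? = some s) :
    s = some (ρ, j, m) ∧ m < (ecomp ρ j).length := by
  rw [cont, List.getElem?_map, Option.map_eq_some_iff] at h
  obtain ⟨a, h1, h2⟩ := h
  obtain ⟨h3, h4⟩ := List.getElem?_eq_some_iff.1 h1
  simp at h3 h4
  subst h4
  exact ⟨h2.symm, h3⟩

lemma content_det : Det (content (Δ := Δ) (N := N) (sortN := sortN)) := by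
  rintro ⟨x, fx⟩ ⟨y, fy⟩ m m' s h1 h2
  cases fx with
  | none => simp [content] at h1
  | some ρ =>
    cases fy with
    | none => simp [content] at h2
    | some ρ' =>
      simp only [content] at h1 h2 ⊢
      obtain ⟨rfl, _⟩ := cont_get h1
      obtain ⟨h3, _⟩ := cont_get h2
      simp only [Option.some.injEq, Prod.mk.injEq] at h3
      obtain ⟨rfl, h3, rfl⟩ := h3
      rw [h3]; exact ⟨rfl, rfl⟩

lemma root_not_content (Z : Big Δ N sortN) : none ∉ content Z := by
  obtain ⟨z, fz⟩ := Z
  cases fz <;> simp [content, cont]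

lemma scls_var {ρ : Production Δ N sortN} {j k i c : ℕ} (h : (ecomp ρ j)[k]? = some (Sum.inr (i, c))) :
    scls (some (ρ, j, k)) = Sum.inl (ρ, i) := by simp [scls, itm, h]

lemma scls_term {ρ : Production Δ N sortN} {j k : ℕ} {d} (h : (ecomp ρ j)[k]? = some (Sum.inl d)) :
    scls (some (ρ, j, k)) = Sum.inr (some (ρ, j, k)) := by simp [scls, itm, h]

lemma cidx_var {ρ : Production Δ N sortN} {j k i c : ℕ} (h : (ecomp ρ j)[k]? = some (Sum.inr (i, c))) :
    cidx (some (ρ, j, k)) = c := by simp [cidx, itm, h]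

lemma scls_inr {s s' : Slot Δ N sortN} (h : scls s = Sum.inr s') : s = s' := by
  rcases s with _ | ⟨ρ, j, k⟩
  · simpa [scls] using h
  · simp only [scls] at h
    split at h <;> simp_all

lemma scls_inl {s : Slot Δ N sortN} {ρ i} (h : scls s = Sum.inl (ρ, i)) :
    ∃ j k c : ℕ, s = some (ρ, j, k) ∧ (ecomp ρ j)[k]? = some (Sum.inr (i, c)) := by
  rcases s with _ | ⟨ρ, j, k⟩
  · simp [scls] at h
  · simp only [scls] at h
    split at h
    · rename_i i' c he
      simp only [Sum.inl.injEq, Prod.mk.injEq] at h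
      obtain ⟨rfl, rfl⟩ := h
      exact ⟨j, k, c, rfl, he⟩
    · simp at h

inductive Valid (P : Set (Production Δ N sortN)) (S : N) : Big Δ N sortN → Prop
  | root (ρ) : ρ ∈ P → ρ.lhs = S → Valid P S (none, some ρ)
  | term (ρ : Production Δ N sortN) (j k : ℕ) (d : Δ) : ρ ∈ P → j < es sortN ρ.lhs →
      (ecomp ρ j)[k]? = some (Sum.inl d) → Valid P S (some (ρ, j, k), none)
  | var (ρ : Production Δ N sortN) (j k i c : ℕ) (ρ' : Production Δ N sortN) : ρ ∈ P → j < es sortN ρ.lhs →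
      (ecomp ρ j)[k]? = some (Sum.inr (i, c)) → ρ' ∈ P → ρ.rhs[i]? = some ρ'.lhs →
      Valid P S (some (ρ, j, k), some ρ')

lemma valid_finite (P : Set (Production Δ N sortN)) (S : N) (hP : P.Finite) : {X | Valid P S X}.Finite := by
  have h1 : (insert none (some '' (⋃ ρ ∈ P, ⋃ j ∈ Set.Iio (es sortN ρ.lhs),
      ⋃ k ∈ Set.Iio (ecomp ρ j).length, {(ρ, j, k)})) : Set (Slot Δ N sortN)).Finite := by
    refine Set.Finite.insert _ (Set.Finite.image _ ?_)
    refine hP.biUnion (fun ρ _ => (Set.finite_Iio _).biUnion (fun j _ => (Set.finite_Iio _).biUnion (fun k _ => Set.finite_singleton _)))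
  have h2 : (insert none (some '' P) : Set (Option (Production Δ N sortN))).Finite := (hP.image _).insert _
  refine (h1.prod h2).subset ?_
  have hk : ∀ {ρ : Production Δ N sortN} {j k x}, (ecomp ρ j)[k]? = some x → k < (ecomp ρ j).length :=
    fun h => (List.getElem?_eq_some_iff.1 h).1
  rintro X (⟨ρ, h1, h2⟩ | ⟨ρ, j, k, d, h1, h2, h3⟩ | ⟨ρ, j, k, i, c, ρ', h1, h2, h3, h4, h5⟩)
  · simp [h1]
  · simp [h1, h2, hk h3]
  · simp [h1, h2, hk h3, h4]

def PaB (P : Set (Production Δ N sortN)) (S : N) : Set (Set (Big Δ N sortN)) :=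
  {p | ∃ X, Valid P S X ∧ p = {Y | Valid P S Y ∧ cls Y = cls X}}

/-! encoding of derivations -/
noncomputable def kf (ρ : Production Δ N sortN) (j : ℕ) (args : ℕ → Slot Δ N sortN → ℕ → Tree (Big Δ N sortN))
    (x : (Δ ⊕ ℕ × ℕ) × ℕ) : Tree (Big Δ N sortN) :=
  match x.1 with
  | Sum.inl _ => .node (some (ρ, j, x.2), none) []
  | Sum.inr (i, c) => args i (some (ρ, j, x.2)) c

noncomputable def kidsOf (ρ : Production Δ N sortN) (j : ℕ)
    (args : ℕ → Slot Δ N sortN → ℕ → Tree (Big Δ N sortN)) : List (Tree (Big Δ N sortN)) :=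
  (ecomp ρ j).zipIdx.map (kf ρ j args)

noncomputable def ct : Tree (Production Δ N sortN) → Slot Δ N sortN → ℕ → Tree (Big Δ N sortN)
  | .node ρ ts, sl, j => .node (sl, some ρ) (kidsOf ρ j (fun i =>
      (ts.attach.map (fun t => ct t.1)).getD i (fun _ _ => .node (none, none) [])))
termination_by t => sizeOf t
decreasing_by simp_wf; have := List.sizeOf_lt_of_mem t.2; omega

noncomputable def ctn (ts : List (Tree (Production Δ N sortN))) (i : ℕ) : Slot Δ N sortN → ℕ → Tree (Big Δ N sortN) :=
  (ts.map ct).getD i (fun _ _ => .node (none, none) [])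

lemma ct_node (ρ : Production Δ N sortN) (ts sl j) :
    ct (.node ρ ts) sl j = .node (sl, some ρ) (kidsOf ρ j (ctn ts)) := by
  rw [ct]
  congr 2
  funext i
  rw [ctn, List.attach_map_val (f := ct)]

lemma ctn_some {ts : List (Tree (Production Δ N sortN))} {i : ℕ} {t} (h : ts[i]? = some t) :
    ctn ts i = ct t := by
  simp [ctn, List.getD_eq_getElem?_getD, h]

lemma ct_root_slot (d : Tree (Production Δ N sortN)) (sl j) : (ct d sl j).root.1 = sl := by
  cases d; rw [ct_node]; rfl

lemma ct_root (ρ : Production Δ N sortN) (ts sl j) : (ct (.node ρ ts) sl j).root = (sl, some ρ) := by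
  rw [ct_node]; rfl

lemma ct_kids (d : Tree (Production Δ N sortN)) (sl sl' j) : (ct d sl j).kids = (ct d sl' j).kids := by
  cases d; rw [ct_node, ct_node]; rfl

lemma kidsOf_get (ρ : Production Δ N sortN) (j args) (k : ℕ) :
    (kidsOf ρ j args)[k]? = ((ecomp ρ j)[k]?).map (fun it => kf ρ j args (it, k)) := by
  simp [kidsOf, List.getElem?_map, List.getElem?_zipIdx, Function.comp_def]

lemma wf_inv {P : Set (Production Δ N sortN)} {A ρ ts} (h : WFDeriv P A (.node ρ ts)) :
    ρ.lhs = A ∧ ρ ∈ P ∧ ts.length = ρ.rhs.length ∧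
      ∀ (i : ℕ) (t A'), ts[i]? = some t → ρ.rhs[i]? = some A' → WFDeriv P A' t := by
  cases h with
  | node _ _ h1 h2 h3 =>
    refine ⟨rfl, h1, h2, ?_⟩
    intro i t A' ht hA
    obtain ⟨a1, rfl⟩ := List.getElem?_eq_some_iff.1 ht
    obtain ⟨b1, rfl⟩ := List.getElem?_eq_some_iff.1 hA
    exact h3 i a1 b1

lemma kid_cases {P : Set (Production Δ N sortN)} {A ρ ts} (h : WFDeriv P A (.node ρ ts)) {j : ℕ} {t}
    (ht : t ∈ kidsOf ρ j (ctn ts)) : ∃ k : ℕ,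
      (∃ d, (ecomp ρ j)[k]? = some (Sum.inl d) ∧ t = .node (some (ρ, j, k), none) []) ∨
      (∃ i c di Ai, (ecomp ρ j)[k]? = some (Sum.inr (i, c)) ∧ ts[i]? = some di ∧ ρ.rhs[i]? = some Ai ∧
        c < es sortN Ai ∧ WFDeriv P Ai di ∧ t = ct di (some (ρ, j, k)) c) := by
  obtain ⟨k, hk⟩ := List.mem_iff_getElem?.1 ht
  rw [kidsOf_get, Option.map_eq_some_iff] at hk
  obtain ⟨it, h1, h2⟩ := hk
  obtain ⟨_, _, hlen, hw⟩ := wf_inv h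
  refine ⟨k, ?_⟩
  rcases it with d | ⟨i, c⟩
  · exact Or.inl ⟨d, h1, h2.symm⟩
  · right
    obtain ⟨Ai, a1, a2⟩ := ecomp_wf h1
    have hi : i < ts.length := by rw [hlen]; exact (List.getElem?_eq_some_iff.1 a1).1
    have h3 := List.getElem?_eq_getElem hi
    refine ⟨i, c, ts[i], Ai, h1, h3, a1, a2, hw _ _ _ h3 a1, ?_⟩
    rw [← h2]
    simp only [kf, ctn_some h3]

lemma kid_slots {P : Set (Production Δ N sortN)} {A ρ ts} (h : WFDeriv P A (.node ρ ts)) (j : ℕ) :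
    (kidsOf ρ j (ctn ts)).map (fun t => t.root.1) = cont ρ j := by
  apply List.ext_getElem?
  intro k
  rw [List.getElem?_map, kidsOf_get, cont, List.getElem?_map]
  cases hk : (ecomp ρ j)[k]? with
  | none =>
    have := List.getElem?_eq_none_iff.1 hk
    simp [this]
  | some it =>
    obtain ⟨hk', _⟩ := List.getElem?_eq_some_iff.1 hk
    have : kf ρ j (ctn ts) (it, k) ∈ kidsOf ρ j (ctn ts) := by
      apply List.mem_of_getElem? (i := k)
      rw [kidsOf_get, hk]; rfl
    simp only [Option.map_some, List.getElem?_range hk']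
    rcases it with d | ⟨i, c⟩
    · rfl
    · obtain ⟨Ai, a1, a2⟩ := ecomp_wf hk
      have hi : i < ts.length := by
        rw [(wf_inv h).2.2.1]; exact (List.getElem?_eq_some_iff.1 a1).1
      simp only [kf, ctn_some (List.getElem?_eq_getElem hi), ct_root_slot]

lemma wt_ct {P : Set (Production Δ N sortN)} {S : N} (d : Tree (Production Δ N sortN)) :
    ∀ A, WFDeriv P A d → ∀ sl j, j < es sortN A → cidx sl = j →
      (∀ ρ ∈ P, ρ.lhs = A → Valid P S (sl, some ρ)) →
      WT Prod.fst content (Valid P S) (ct d sl j) := by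
  induction d using tree_ind with
  | h ρ ts ih =>
    intro A hw sl j hj hc hv
    obtain ⟨rfl, hρ, _, _⟩ := wf_inv hw
    rw [ct_node]
    refine WT.node _ _ (hv ρ hρ rfl) ?_ ?_
    · rw [kid_slots hw]; simp [content, hc]
    · intro t ht
      obtain ⟨k, ⟨d, h1, rfl⟩ | ⟨i, c, di, Ai, h1, h2, h3, h4, h5, rfl⟩⟩ := kid_cases hw ht
      · exact WT.node _ _ (.term ρ j k d hρ hj h1) (by simp [content]) (by simp)
      · refine ih di (List.mem_of_getElem? h2) Ai h5 _ _ h4 (cidx_var h1) ?_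
        rintro ρ' hρ' rfl
        exact .var ρ j k i c ρ' hρ hj h1 hρ' h3

lemma ct_inj {P : Set (Production Δ N sortN)} (hnd : ∀ ρ ∈ P, ρ.NonDeleting) (d : Tree (Production Δ N sortN)) :
    ∀ A d', WFDeriv P A d → WFDeriv P A d' →
      (∀ j < es sortN A, ∃ sl, ct d sl j = ct d' sl j) → d = d' := by
  induction d using tree_ind with
  | h ρ ts ih =>
    rintro A ⟨ρ', ts'⟩ hw hw' h
    have hρ : ρ = ρ' := by
      obtain ⟨sl, h0⟩ := h 0 (es_pos A)
      have := congrArg Tree.root h0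
      simpa [ct_root] using this
    subst hρ
    obtain ⟨rfl, hρ, hl, hr⟩ := wf_inv hw
    obtain ⟨_, _, hl', hr'⟩ := wf_inv hw'
    congr 1
    apply List.ext_getElem (by rw [hl, hl'])
    intro i hi hi'
    have e1 := List.getElem?_eq_getElem hi
    have e2 := List.getElem?_eq_getElem hi'
    have e3 := List.getElem?_eq_getElem (hl ▸ hi)
    refine ih _ (List.getElem_mem hi) _ _ (hr i _ _ e1 e3) (hr' i _ _ e2 e3) ?_
    intro c hc
    obtain ⟨j, k, hj, hk⟩ := ecomp_ex (hnd ρ hρ) e3 hc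
    obtain ⟨sl, hs⟩ := h j hj
    rw [ct_node, ct_node] at hs
    have hs' := congrArg (fun t => t.kids[k]?) hs
    simp only [Tree.kids, kidsOf_get, hk, Option.map_some, kf, ctn_some e1, ctn_some e2, Option.some.injEq] at hs'
    exact ⟨_, hs'⟩

end Aux3
end CS

namespace CS
section Aux4
open Classical

variable {Δ N : Type} {sortN : N → ℕ}

lemma kid_var_mem {ρ : Production Δ N sortN} {ts : List (Tree (Production Δ N sortN))} {j k i c : ℕ} {di}
    (h1 : (ecomp ρ j)[k]? = some (Sum.inr (i, c))) (h2 : ts[i]? = some di) :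
    ct di (some (ρ, j, k)) c ∈ kidsOf ρ j (ctn ts) := by
  apply List.mem_of_getElem? (i := k)
  rw [kidsOf_get, h1]
  simp only [Option.map_some, kf, ctn_some h2]

lemma kid_valid {P : Set (Production Δ N sortN)} {S A : N} {ρ ts} (h : WFDeriv P A (.node ρ ts)) {j : ℕ} {t}
    (hj : j < es sortN A) (ht : t ∈ kidsOf ρ j (ctn ts)) : Valid P S t.root := by
  obtain ⟨rfl, hρ, _, _⟩ := wf_inv h
  obtain ⟨k, ⟨d, h1, rfl⟩ | ⟨i, c, di, Ai, h1, h2, h3, h4, h5, rfl⟩⟩ := kid_cases h ht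
  · exact .term ρ j k d hρ hj h1
  · obtain ⟨ρ', ts'⟩ := di
    rw [ct_root]
    obtain ⟨rfl, hρ', _, _⟩ := wf_inv h5
    exact .var ρ j k i c ρ' hρ hj h1 hρ' h3

lemma good_of_classes2 {B C : Type} (P : Set (Set B)) (cls : B → C) (E : List (Tree B))
    (h : ∀ t ∈ E, ∀ F : List (Tree B), F.Sublist E → (∀ t', t' ∈ F ↔ t' ∈ E ∧ cls t'.root = cls t.root) →
      (F.map Tree.root).Nodup ∧ {σ | σ ∈ F.map Tree.root} ∈ P ∧
      MDyckRel B P (F.map (fun t => fw t.kids)).flatten []) :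
    MDyckRel B P (fw E) [] :=
  good_of_classes P cls E.length E le_rfl (fun t ht => h t ht _ List.filter_sublist (by simp))

lemma ct_good {P : Set (Production Δ N sortN)} (S : N) (hnd : ∀ ρ ∈ P, ρ.NonDeleting)
    (d : Tree (Production Δ N sortN)) :
    ∀ A, WFDeriv P A d → ∀ js : List ℕ, js.Nodup → (∀ j, j ∈ js ↔ j < es sortN A) →
      MDyckRel _ (PaB P S) ((js.map (fun j => fw (ct d none j).kids)).flatten) [] := by
  induction d using tree_ind with
  | h ρ ts ih =>
    intro A hw js hn hjs
    obtain ⟨rfl, hρ, hlen, hkids⟩ := wf_inv hw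
    set E := js.flatMap (fun j => kidsOf ρ j (ctn ts)) with hE
    have hfw : (js.map (fun j => fw (ct (.node ρ ts) none j).kids)).flatten = fw E := by
      rw [hE]
      clear hE hn hjs
      clear_value E
      induction js with
      | nil => rfl
      | cons j js ih2 =>
        rw [List.map_cons, List.flatten_cons, ih2, List.flatMap_cons, ct_node]
        simp [fw, Tree.kids]
    rw [hfw]
    have hmem : ∀ t, t ∈ E ↔ ∃ j, j < es sortN ρ.lhs ∧ t ∈ kidsOf ρ j (ctn ts) := by
      intro t; simp [hE, List.mem_flatMap, hjs]
    have hEn : (E.map (fun t => t.root.1)).Nodup := by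
      rw [hE, List.map_flatMap]
      simp only [kid_slots hw]
      rw [List.nodup_flatMap]
      constructor
      · intro j _
        refine List.Nodup.map ?_ List.nodup_range
        intro a b hab; simpa using hab
      · refine List.Pairwise.imp ?_ hn
        intro a b hab x hx hy
        simp only [cont, List.mem_map] at hx hy
        obtain ⟨k, _, rfl⟩ := hx
        obtain ⟨k', _, h⟩ := hy
        simp only [Option.some.injEq, Prod.mk.injEq] at h
        exact hab h.2.1.symm
    apply good_of_classes2 (PaB P S) cls E
    intro t ht F hFs hFm
    have hFn : (F.map (fun t => t.root.1)).Nodup :=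
      hEn.sublist (hFs.map _)
    have hFn1 : (F.map Tree.root).Nodup := by
      apply List.Nodup.of_map Prod.fst
      rw [List.map_map]; exact hFn
    have hFn2 : F.Nodup := List.Nodup.of_map _ hFn
    obtain ⟨j0, hj0, ht0⟩ := (hmem t).1 ht
    refine ⟨hFn1, ⟨t.root, kid_valid hw hj0 ht0, ?_⟩, ?_⟩
    · ext Y
      simp only [Set.mem_ofPred_eq, List.mem_map, hFm]
      constructor
      · rintro ⟨t', ⟨h1, h2⟩, rfl⟩
        obtain ⟨j1, hj1, ht1⟩ := (hmem t').1 h1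
        exact ⟨kid_valid hw hj1 ht1, h2⟩
      · rintro ⟨hY, hc⟩
        obtain ⟨k, ⟨d, h1, rfl⟩ | ⟨i, c, di, Ai, h1, h2, h3, h4, h5, rfl⟩⟩ := kid_cases hw ht0
        · refine ⟨_, ⟨ht, rfl⟩, ?_⟩
          simp only [cls, Tree.root, scls_term h1, Prod.mk.injEq] at hc ⊢
          have := scls_inr hc.1
          exact Prod.ext this.symm hc.2.symm
        · obtain ⟨ρ', ts'⟩ := di
          simp only [cls, ct_root, scls_var h1, Prod.mk.injEq] at hc
          obtain ⟨j2, k2, c2, h6, h7⟩ := scls_inl hc.1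
          obtain ⟨y1, y2⟩ := Y
          obtain ⟨hc1, hc2⟩ := hc
          simp only at h6 hc2
          subst h6 hc2
          have hj2 : j2 < es sortN ρ.lhs := by
            cases hY; assumption
          refine ⟨ct (.node ρ' ts') (some (ρ, j2, k2)) c2,
            ⟨(hmem _).2 ⟨j2, hj2, kid_var_mem h7 h2⟩, ?_⟩, ?_⟩
          · simp only [cls, ct_root, scls_var h1, scls_var h7]
          · rw [ct_root]
    · obtain ⟨k, ⟨d, h1, rfl⟩ | ⟨i, c, di, Ai, h1, h2, h3, h4, h5, rfl⟩⟩ := kid_cases hw ht0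
      · have : (F.map (fun t => fw t.kids)).flatten = [] := by
          rw [List.flatten_eq_nil_iff]
          intro l hl
          obtain ⟨t', ht', rfl⟩ := List.mem_map.1 hl
          obtain ⟨h2, h3⟩ := (hFm t').1 ht'
          obtain ⟨j2, hj2, h4⟩ := (hmem t').1 h2
          obtain ⟨k2, ⟨d, h1, rfl⟩ | ⟨i, c, di, Ai, h1, h2, h3', h4, h5, rfl⟩⟩ := kid_cases hw h4
          · rfl
          · exfalso
            obtain ⟨ρ', ts'⟩ := di
            have h9 := congrArg Prod.snd h3
            simp [cls, ct_node, Tree.root] at h9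
        rw [this]; exact MDyckRel.refl _
      · have hFc : ∀ t' ∈ F, ∃ j2 k2 c2 : ℕ, j2 < es sortN ρ.lhs ∧
            (ecomp ρ j2)[k2]? = some (Sum.inr (i, c2)) ∧ t' = ct di (some (ρ, j2, k2)) c2 := by
          intro t' ht'
          obtain ⟨a2, a3⟩ := (hFm t').1 ht'
          obtain ⟨j2, hj2, a4⟩ := (hmem t').1 a2
          obtain ⟨k2, ⟨d, b1, rfl⟩ | ⟨i', c', di', Ai', b1, b2, b3, b4, b5, rfl⟩⟩ := kid_cases hw a4
          · exfalso
            obtain ⟨ρ', ts'⟩ := di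
            have h9 := congrArg Prod.snd a3
            simp [cls, ct_node, Tree.root] at h9
          · simp only [cls, ct_root_slot, scls_var h1, scls_var b1, Prod.mk.injEq, Sum.inl.injEq,
              true_and] at a3
            obtain ⟨rfl, _⟩ := a3
            rw [h2] at b2
            cases b2
            exact ⟨j2, k2, c', hj2, b1, rfl⟩
        have e1 : F.map (fun t => fw t.kids) =
            (F.map (fun t => cidx t.root.1)).map (fun c => fw (ct di none c).kids) := by
          rw [List.map_map]
          apply List.map_congr_left
          intro t' ht'
          obtain ⟨j2, k2, c2, _, b1, rfl⟩ := hFc t' ht'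
          simp only [Function.comp, ct_root_slot, cidx_var b1]
          rw [ct_kids]
        rw [e1]
        refine ih di (List.mem_of_getElem? h2) Ai h5 _ ?_ ?_
        · refine List.Nodup.map_on ?_ hFn2
          intro x hx y hy hxy
          obtain ⟨j2, k2, c2, _, b1, rfl⟩ := hFc x hx
          obtain ⟨j3, k3, c3, _, b2, rfl⟩ := hFc y hy
          simp only [ct_root_slot, cidx_var b1, cidx_var b2] at hxy
          subst hxy
          obtain ⟨rfl, rfl⟩ := ecomp_uniq b1 b2
          rfl
        · intro c3
          rw [List.mem_map]
          constructor
          · rintro ⟨x, hx, rfl⟩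
            obtain ⟨j2, k2, c2, _, b1, rfl⟩ := hFc x hx
            simp only [ct_root_slot, cidx_var b1]
            obtain ⟨A', a1, a2⟩ := ecomp_wf b1
            rw [h3] at a1; cases a1; exact a2
          · intro hc3
            obtain ⟨j2, k2, hj2, b1⟩ := ecomp_ex (hnd ρ hρ) h3 hc3
            refine ⟨ct di (some (ρ, j2, k2)) c3, (hFm _).2 ⟨(hmem _).2 ⟨j2, hj2, kid_var_mem b1 h2⟩, ?_⟩, ?_⟩
            · obtain ⟨ρ', ts'⟩ := di
              simp only [cls, ct_root, scls_var h1, scls_var b1]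
            · simp only [ct_root_slot, cidx_var b1]

lemma ct_good_root {P : Set (Production Δ N sortN)} (S : N) (hS : sortN S = 1)
    (hnd : ∀ ρ ∈ P, ρ.NonDeleting)
    (d : Tree (Production Δ N sortN)) (hw : WFDeriv P S d) :
    MDyckRel _ (PaB P S) (ct d none 0).word [] := by
  have h1 := ct_good S hnd d S hw [0] (by simp) (by intro j; simp [es, hS])
  obtain ⟨ρ, ts⟩ := d
  have h2 : MDyckRel _ (PaB P S) (fw [ct (.node ρ ts) none 0]) [] := by
    apply good_of_classes2 (PaB P S) cls
    intro t ht F hFs hFm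
    rw [List.mem_singleton] at ht
    subst ht
    have hF : F = [ct (.node ρ ts) none 0] := by
      rcases List.sublist_singleton.1 hFs with h | h
      · exact absurd ((hFm (ct (.node ρ ts) none 0)).2 ⟨by simp, rfl⟩) (by simp [h])
      · exact h
    subst hF
    refine ⟨by simp, ?_, by simpa using h1⟩
    obtain ⟨rfl, hρ, _, _⟩ := wf_inv hw
    refine ⟨(none, some ρ), .root ρ hρ rfl, ?_⟩
    ext Y
    simp only [Set.mem_ofPred_eq]
    rw [List.map_cons, List.map_nil, List.mem_singleton, ct_root]
    constructor
    · rintro rfl; exact ⟨.root ρ hρ rfl, rfl⟩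
    · rintro ⟨_, h⟩
      have h3 : scls Y.1 = Sum.inr none := congrArg Prod.fst h
      have h4 : Y.2 = some ρ := congrArg Prod.snd h
      exact Prod.ext (scls_inr h3) h4
  simpa [fw] using h2

/-! yields -/
noncomputable def hB : Big Δ N sortN ⊕ Big Δ N sortN → Option Δ
  | Sum.inl (sl, none) => match itm sl with
    | some (Sum.inl d) => some d
    | _ => none
  | _ => none

lemma yield_node (ρ : Production Δ N sortN) (ts) :
    (Tree.node ρ ts).yield = ρ.comp.map (subst (ts.map Tree.yield)) := by
  rw [Tree.yield, List.attach_map_val (f := Tree.yield)]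

lemma yield_len {P : Set (Production Δ N sortN)} {A : N} {d} (h : WFDeriv P A d) :
    d.yield.length = sortN A := by
  obtain ⟨ρ, ts⟩ := d
  obtain ⟨rfl, _⟩ := wf_inv h
  rw [yield_node, List.length_map, ρ.comp_len]

lemma ct_yield {P : Set (Production Δ N sortN)} (d : Tree (Production Δ N sortN)) :
    ∀ A, WFDeriv P A d → ∀ sl j, (ct d sl j).word.filterMap hB = d.yield.getD j [] := by
  induction d using tree_ind with
  | h ρ ts ih =>
    intro A hw sl j
    obtain ⟨rfl, hρ, hlen, hkids⟩ := wf_inv hw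
    let g : (Δ ⊕ ℕ × ℕ) → List Δ := fun v => match v with
      | Sum.inl d => [d]
      | Sum.inr (i, j) => ((ts.map Tree.yield).getD i []).getD j []
    have e1 : (kidsOf ρ j (ctn ts)).map (fun t => t.word.filterMap hB) = (ecomp ρ j).map g := by
      apply List.ext_getElem?
      intro k
      rw [List.getElem?_map, kidsOf_get, List.getElem?_map]
      cases hk : (ecomp ρ j)[k]? with
      | none => rfl
      | some it =>
        simp only [Option.map_some, Option.some.injEq]
        rcases it with d | ⟨i, c⟩
        · simp [kf, word_node, hB, itm, hk, g, List.filterMap_cons]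
        · obtain ⟨Ai, a1, a2⟩ := ecomp_wf hk
          have hi : i < ts.length := by
            rw [hlen]; exact (List.getElem?_eq_some_iff.1 a1).1
          have e3 := List.getElem?_eq_getElem hi
          simp only [kf, ctn_some e3, g]
          rw [ih _ (List.getElem_mem hi) Ai (hkids i _ _ e3 a1)]
          simp [List.getD_eq_getElem?_getD, e3]
    have e2 : ∀ l, (List.map g l).flatten = subst (ts.map Tree.yield) l := by
      intro l
      rw [subst, List.flatMap]
    have e4 : (List.map g (extras ρ)).flatten = [] := by
      rw [List.flatten_eq_nil_iff]
      intro l hl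
      obtain ⟨x, hx, rfl⟩ := List.mem_map.1 hl
      obtain ⟨i, A, rfl, hA, h0⟩ := extras_get hx
      have hi : i < ts.length := by
        rw [hlen]; exact (List.getElem?_eq_some_iff.1 hA).1
      have e3 := List.getElem?_eq_getElem hi
      have h5 := yield_len (hkids i _ _ e3 hA)
      rw [h0, List.length_eq_zero_iff] at h5
      simp [g, List.getD_eq_getElem?_getD, e3, h5]
    have e5 : (fw (kidsOf ρ j (ctn ts))).filterMap hB = ((ecomp ρ j).map g).flatten := by
      rw [← e1, fw, filterMap_flatten, List.map_map]; rfl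
    rw [ct_node, word_node, List.filterMap_cons, List.filterMap_append, e5, yield_node,
      show ([] : List Δ) = subst (ts.map Tree.yield) [] from rfl, List.getD_map, ecomp, List.map_append,
      List.flatten_append, e2]
    have e6 : (List.map g (if j = 0 then extras ρ else [])).flatten = [] := by
      split_ifs
      · exact e4
      · rfl
    rw [e6]
    simp [hB]

end Aux4
end CS

namespace CS
section Aux5
open Classical

variable {Δ N : Type} {sortN : N → ℕ}

lemma wt_inv {B L : Type} {slot : B → L} {content : B → List L} {Q : B → Prop} {t : Tree B}
    (h : WT slot content Q t) : Q t.root ∧ t.kids.map (fun t => slot t.root) = content t.root ∧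
      ∀ t' ∈ t.kids, WT slot content Q t' := by
  cases h with
  | node X ts h1 h2 h3 => exact ⟨h1, h2, h3⟩

lemma kids_size {B : Type} [SizeOf B] {t t' : Tree B} (h : t' ∈ t.kids) : sizeOf t' < sizeOf t := by
  cases t with
  | node X ts =>
    have := List.sizeOf_lt_of_mem (show t' ∈ ts from h)
    simp
    omega

noncomputable def ind {B : Type} (a X : B) : ℤ := if X = a then 1 else 0

lemma ind_sum {B : Type} (l : List B) (hl : l.Nodup) (a : B) :
    (l.map (ind a)).sum = if a ∈ l then 1 else 0 := by
  induction l with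
  | nil => simp
  | cons b l ih =>
    rw [List.nodup_cons] at hl
    rw [List.map_cons, List.sum_cons, ih hl.2]
    by_cases h : b = a
    · subst h; simp [hl.1, ind]
    · have : a ≠ b := fun h' => h h'.symm
      simp [h, this, ind]

lemma list_sum_range {α : Type} (l : List α) (h : α → ℤ) (x0 : α) :
    (l.map h).sum = ∑ k ∈ Finset.range l.length, h (l.getD k x0) := by
  induction l with
  | nil => simp
  | cons a l ih =>
    rw [List.map_cons, List.sum_cons, ih, List.length_cons, Finset.sum_range_succ']
    simp [add_comm]

lemma wt_vanish {B C : Type} (cls : B → C) (c : List C → B → ℤ) (hc : ∀ s X, s ≠ [] → c s X = 0) (t : Tree B) :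
    ∀ s, s ≠ [] → wt cls c t.word s = 0 := by
  induction t using tree_ind with
  | h X ts ih =>
    intro s hs
    rw [wt_word, hc _ _ hs, zero_add]
    apply List.sum_eq_zero
    intro x hx
    obtain ⟨t', ht', rfl⟩ := List.mem_map.1 hx
    exact ih t' ht' _ (by simp)

def gl {C : Type} (Q : C → Prop) (l : List C) : Prop := ∃ q, l.getLast? = some q ∧ Q q

noncomputable def c2 {B C : Type} (cls : B → C) (c : List C → B → ℤ) (Q : C → Prop) (s : List C) (X : B) : ℤ :=
  if s = [] then 0 else if gl Q (cls X :: s.dropLast) then c s.dropLast X else 0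

lemma wt_c2 {B C : Type} (cls : B → C) (c : List C → B → ℤ) (Q : C → Prop) (t : Tree B) :
    ∀ s q, wt cls (c2 cls c Q) t.word (s ++ [q]) = if gl Q (cls t.root :: s) then wt cls c t.word s else 0 := by
  induction t using tree_ind with
  | h X ts ih =>
    intro s q
    rw [wt_word, wt_word]
    have e1 : (List.map (fun t' => wt cls (c2 cls c Q) t'.word (cls (Tree.node X ts).root :: (s ++ [q])))
        (Tree.node X ts).kids) = (Tree.node X ts).kids.map (fun t' => if gl Q (cls X :: s) then
          wt cls c t'.word (cls X :: s) else 0) := by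
      apply List.map_congr_left
      intro t' ht'
      have := ih t' ht' (cls X :: s) q
      rw [List.cons_append] at this
      simp only [Tree.root]
      rw [this]
      have hg : gl Q (cls t'.root :: cls X :: s) = gl Q (cls X :: s) := by
        simp only [gl, List.getLast?_cons_cons]
      simp only [hg]
    rw [e1]
    simp only [c2, Tree.root]
    by_cases h : gl Q (cls X :: s) <;> simp [h]

lemma bal_c2 {B C : Type} (P : Set (Set B)) (cls : B → C) (c : List C → B → ℤ) (Q : C → Prop)
    (hP : ∀ p ∈ P, ∀ X ∈ p, ∀ Y ∈ p, cls X = cls Y) (hc : Bal P c) : Bal P (c2 cls c Q) := by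
  intro l hl hp s
  by_cases hs : s = []
  · apply List.sum_eq_zero; simp [c2, hs]
  · cases l with
    | nil => simp
    | cons a l =>
      by_cases h : gl Q (cls a :: s.dropLast)
      · rw [← hc _ hl hp s.dropLast]
        congr 1
        apply List.map_congr_left
        intro X hX
        rw [c2, if_neg hs, if_pos]
        rw [hP _ hp X hX a (by simp)]; exact h
      · apply List.sum_eq_zero
        intro x hx
        obtain ⟨X, hX, rfl⟩ := List.mem_map.1 hx
        rw [c2, if_neg hs, if_neg]
        rw [hP _ hp X hX a (by simp)]; exact h

lemma PaB_cls {P : Set (Production Δ N sortN)} {S : N} : ∀ p ∈ PaB P S, ∀ X ∈ p, ∀ Y ∈ p, cls X = cls Y := by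
  rintro p ⟨Z, _, rfl⟩ X hX Y hY
  exact hX.2.trans hY.2.symm

/-- all roots carry the same production -/
lemma same_prod {P : Set (Production Δ N sortN)} {S : N} (m : ℕ) (f : ℕ → Tree (Big Δ N sortN))
    (sl : ℕ → Slot Δ N sortN) (hm : 0 < m) (hc : ∀ j < m, cidx (sl j) = j)
    (hs : ∀ j < m, scls (sl j) = scls (sl 0)) (ρ0 : Production Δ N sortN)
    (hv : ∀ j < m, Valid P S (sl j, some ρ0))
    (h0 : (f 0).root = (sl 0, some ρ0))
    (hr : ∀ j < m, (f j).root.1 = sl j)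
    (hb : ∀ c, Bal (PaB P S) c → ∑ j ∈ Finset.range m, wt cls c (f j).word [] = 0) :
    ∀ j < m, (f j).root = (sl j, some ρ0) := by
  intro j hj
  by_contra hne
  have hj0 : j ≠ 0 := by rintro rfl; exact hne h0
  have hinj : ∀ a < m, ∀ b < m, sl a = sl b → a = b := by
    intro a ha b hb h
    rw [← hc a ha, ← hc b hb, h]
  let c : List (Cls Δ N sortN) → Big Δ N sortN → ℤ := fun s X => if s = [] then
    ind (sl 0, some ρ0) X - ind (sl j, some ρ0) X else 0
  have hbal : Bal (PaB P S) c := by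
    intro l hl hp s
    by_cases hs' : s = []
    · have : (l.map (c s)).sum = (l.map (ind (sl 0, some ρ0))).sum
          - (l.map (ind (sl j, some ρ0))).sum := by
        clear hl hp
        induction l with
        | nil => simp
        | cons a l ih => simp only [List.map_cons, List.sum_cons, ih]; simp only [c, hs', if_true]; ring
      rw [this, ind_sum l hl, ind_sum l hl]
      obtain ⟨X, hX, he⟩ := hp
      have h1 : ∀ Y, Y ∈ l ↔ Valid P S Y ∧ cls Y = cls X := by
        intro Y
        exact Set.ext_iff.1 he Y
      have h2 : (sl 0, some ρ0) ∈ l ↔ (sl j, some ρ0) ∈ l := by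
        rw [h1, h1]
        simp only [cls, hs j hj, hv 0 hm, hv j hj]
      by_cases h : (sl j, some ρ0) ∈ l
      · rw [if_pos (h2.2 h), if_pos h]; rfl
      · rw [if_neg (fun h' => h (h2.1 h')), if_neg h]; rfl
    · apply List.sum_eq_zero; simp [c, hs']
  have h1 := hb c hbal
  have h2 : ∀ a ∈ Finset.range m, wt cls c (f a).word [] = if a = 0 then 1 else 0 := by
    intro a ha
    rw [Finset.mem_range] at ha
    rw [wt_word, List.sum_eq_zero, add_zero]
    · simp only [c, if_true]
      have h3 : (f a).root ≠ (sl j, some ρ0) := by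
        intro h
        have := hinj a ha j hj (by rw [← hr a ha, h])
        subst this
        exact hne h
      have h4 : (f a).root = (sl 0, some ρ0) ↔ a = 0 := by
        constructor
        · intro h
          exact hinj a ha 0 hm (by rw [← hr a ha, h])
        · rintro rfl; exact h0
      simp [ind, h3, h4]
    · intro x hx
      obtain ⟨t', ht', rfl⟩ := List.mem_map.1 hx
      exact wt_vanish cls c (by intro s X hs; simp [c, hs]) t' _ (by simp)
  rw [Finset.sum_congr rfl h2] at h1
  simp [hm.ne'] at h1

end Aux5
end CS

namespace CS
section Aux6
open Classical

variable {Δ N : Type} {sortN : N → ℕ}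

lemma sound_s16 {P : Set (Production Δ N sortN)} {S : N} (hnd : ∀ ρ ∈ P, ρ.NonDeleting) :
    ∀ (n : ℕ) (A : N) (f : ℕ → Tree (Big Δ N sortN)) (sl : ℕ → Slot Δ N sortN),
      (∀ j < es sortN A, sizeOf (f j) < n) →
      (∀ j < es sortN A, WT Prod.fst content (Valid P S) (f j)) →
      (∀ j < es sortN A, ∃ ρ ∈ P, ρ.lhs = A ∧ (f j).root = (sl j, some ρ)) →
      (∀ j < es sortN A, cidx (sl j) = j) →
      (∀ j < es sortN A, scls (sl j) = scls (sl 0)) →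
      (∀ j < es sortN A, ∀ ρ ∈ P, ρ.lhs = A → Valid P S (sl j, some ρ)) →
      (∀ c, Bal (PaB P S) c → ∑ j ∈ Finset.range (es sortN A), wt cls c (f j).word [] = 0) →
      ∃ d, WFDeriv P A d ∧ ∀ j < es sortN A, f j = ct d (sl j) j := by
  intro n
  induction n with
  | zero => intro A f sl h; exact absurd (h 0 (es_pos A)) (by simp)
  | succ n ih =>
    intro A f sl hsz hwt hroot hci hsc hval hbal
    obtain ⟨ρ, hρ, rfl, h0⟩ := hroot 0 (es_pos _)
    have hroots : ∀ j < es sortN ρ.lhs, (f j).root = (sl j, some ρ) := by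
      refine same_prod (P := P) (S := S) _ f sl (es_pos _) hci hsc ρ (fun j hj => hval j hj ρ hρ rfl) h0 ?_ hbal
      intro j hj
      obtain ⟨ρ', _, _, h⟩ := hroot j hj
      rw [h]
    have hslots : ∀ j < es sortN ρ.lhs, (f j).kids.map (fun t => t.root.1) = cont ρ j := by
      intro j hj
      rw [(wt_inv (hwt j hj)).2.1, hroots j hj]
      simp [content, hci j hj]
    have hklen : ∀ j < es sortN ρ.lhs, (f j).kids.length = (ecomp ρ j).length := by
      intro j hj
      have := congrArg List.length (hslots j hj)
      simpa [cont] using this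
    let K : ℕ → ℕ → Tree (Big Δ N sortN) := fun j k => (f j).kids.getD k (f j)
    have hK : ∀ j < es sortN ρ.lhs, ∀ k < (ecomp ρ j).length, (f j).kids[k]? = some (K j k) := by
      intro j hj k hk
      have hk' : k < (f j).kids.length := by rw [hklen j hj]; exact hk
      simp [K, List.getD_eq_getElem?_getD, List.getElem?_eq_getElem hk']
    have hKm : ∀ j < es sortN ρ.lhs, ∀ k < (ecomp ρ j).length, K j k ∈ (f j).kids :=
      fun j hj k hk => List.mem_of_getElem? (hK j hj k hk)
    have hKw : ∀ j < es sortN ρ.lhs, ∀ k < (ecomp ρ j).length, WT Prod.fst content (Valid P S) (K j k) :=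
      fun j hj k hk => (wt_inv (hwt j hj)).2.2 _ (hKm j hj k hk)
    have hKr : ∀ j < es sortN ρ.lhs, ∀ k < (ecomp ρ j).length, (K j k).root.1 = some (ρ, j, k) := by
      intro j hj k hk
      have h1 : ((f j).kids.map (fun t => t.root.1))[k]? = some (K j k).root.1 := by
        rw [List.getElem?_map, hK j hj k hk]; rfl
      rw [hslots j hj] at h1
      exact (cont_get h1).1
    have lt_of : ∀ {j k : ℕ} {x}, (ecomp ρ j)[k]? = some x → k < (ecomp ρ j).length :=
      fun h => (List.getElem?_eq_some_iff.1 h).1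
    have hchild : ∀ (i : ℕ) (A' : N), ρ.rhs[i]? = some A' → ∃ d, WFDeriv P A' d ∧
        ∀ (j k c : ℕ), j < es sortN ρ.lhs → (ecomp ρ j)[k]? = some (Sum.inr (i, c)) →
          K j k = ct d (some (ρ, j, k)) c := by
      intro i A' hA
      have hex : ∀ c : ℕ, ∃ j k : ℕ, c < es sortN A' → j < es sortN ρ.lhs ∧
          (ecomp ρ j)[k]? = some (Sum.inr (i, c)) := by
        intro c
        by_cases hc : c < es sortN A'
        · obtain ⟨j, k, h1, h2⟩ := ecomp_ex (hnd ρ hρ) hA hc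
          exact ⟨j, k, fun _ => ⟨h1, h2⟩⟩
        · exact ⟨0, 0, fun h => absurd h hc⟩
      choose J Kp hJK using hex
      have hJ := fun c hc => (hJK c hc).1
      have hI := fun c hc => (hJK c hc).2
      obtain ⟨d, hd, hdf⟩ := ih A' (fun c => K (J c) (Kp c)) (fun c => some (ρ, J c, Kp c))
        (by
          intro c hc
          have h1 := kids_size (hKm _ (hJ c hc) _ (lt_of (hI c hc)))
          have h2 := hsz _ (hJ c hc)
          omega)
        (fun c hc => hKw _ (hJ c hc) _ (lt_of (hI c hc)))
        (by
          intro c hc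
          have h1 := hKr _ (hJ c hc) _ (lt_of (hI c hc))
          have h2 := (wt_inv (hKw _ (hJ c hc) _ (lt_of (hI c hc)))).1
          have h3 := hI c hc
          generalize (K (J c) (Kp c)).root = R at h1 h2
          cases h2 with
          | root => simp at h1
          | term ρ' j k d a1 a2 a3 =>
            simp only [Option.some.injEq, Prod.mk.injEq] at h1
            obtain ⟨rfl, rfl, rfl⟩ := h1
            rw [h3] at a3; simp at a3
          | var ρ' j k i' c' ρ'' a1 a2 a3 a4 a5 =>
            simp only [Option.some.injEq, Prod.mk.injEq] at h1
            obtain ⟨rfl, rfl, rfl⟩ := h1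
            rw [h3] at a3
            simp only [Option.some.injEq, Sum.inr.injEq, Prod.mk.injEq] at a3
            obtain ⟨rfl, rfl⟩ := a3
            rw [hA] at a5
            exact ⟨ρ'', a4, (Option.some.inj a5).symm, rfl⟩)
        (fun c hc => cidx_var (hI c hc))
        (fun c hc => by rw [scls_var (hI c hc), scls_var (hI 0 (es_pos _))])
        (by
          rintro c hc ρ' hρ' rfl
          exact .var ρ _ _ i c ρ' hρ (hJ c hc) (hI c hc) hρ' hA)
        (by
          intro c hcb
          let Q : Cls Δ N sortN → Prop := fun q => q.1 = Sum.inl (ρ, i)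
          have hb := hbal _ (bal_c2 (PaB P S) cls c Q PaB_cls hcb)
          have e1 : ∀ j ∈ Finset.range (es sortN ρ.lhs), wt cls (c2 cls c Q) (f j).word [] =
              ∑ k ∈ Finset.range (ecomp ρ j).length,
                (if (cls (K j k).root).1 = Sum.inl (ρ, i) then wt cls c (K j k).word [] else 0) := by
            intro j hj
            rw [Finset.mem_range] at hj
            rw [wt_word, list_sum_range _ _ (f j), hklen j hj]
            rw [show c2 cls c Q [] (f j).root = 0 by simp [c2], zero_add]
            apply Finset.sum_congr rfl
            intro k _
            have := wt_c2 cls c Q (K j k) [] (cls (f j).root)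
            simp only [List.nil_append] at this
            simp only [K] at this ⊢
            rw [this]
            simp [gl, Q]
          rw [Finset.sum_congr rfl e1, Finset.sum_sigma'] at hb
          rw [← hb]
          refine Finset.sum_of_injOn (fun c => (⟨J c, Kp c⟩ : (_ : ℕ) × ℕ)) ?_ ?_ ?_ ?_
          · intro a ha b hb hab
            simp only [Sigma.mk.injEq, heq_eq_eq] at hab
            have h1 := hI a (by simpa using ha)
            have h2 := hI b (by simpa using hb)
            rw [hab.1, hab.2, h2] at h1
            simp only [Option.some.injEq, Sum.inr.injEq, Prod.mk.injEq, true_and] at h1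
            exact h1.symm
          · intro a ha
            have ha' : a < es sortN A' := by simpa using ha
            simp only [Finset.coe_sigma, Set.mem_sigma_iff, Finset.coe_range, Set.mem_Iio]
            exact ⟨hJ a ha', lt_of (hI a ha')⟩
          · rintro ⟨j, k⟩ hjk hni
            simp only [Finset.mem_sigma, Finset.mem_range] at hjk
            rw [if_neg]
            intro hc
            rw [cls, hKr j hjk.1 k hjk.2] at hc
            obtain ⟨j2, k2, c2, h1, h2⟩ := scls_inl (show scls (some (ρ, j, k)) = Sum.inl (ρ, i) from hc)
            simp only [Option.some.injEq, Prod.mk.injEq, true_and] at h1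
            obtain ⟨rfl, rfl⟩ := h1
            obtain ⟨A2, a1, a2⟩ := ecomp_wf h2
            rw [hA] at a1
            cases a1
            obtain ⟨b1, b2⟩ := ecomp_uniq h2 (hI c2 a2)
            exact hni ⟨c2, by simpa using a2, by simp [b1, b2]⟩
          · intro a ha
            have ha' : a < es sortN A' := by simpa using ha
            simp only
            rw [if_pos]
            rw [cls, hKr _ (hJ a ha') _ (lt_of (hI a ha'))]
            exact scls_var (hI a ha'))
      refine ⟨d, hd, ?_⟩
      intro j k c hj hk
      obtain ⟨A2, a1, a2⟩ := ecomp_wf hk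
      rw [hA] at a1
      cases a1
      obtain ⟨rfl, rfl⟩ := ecomp_uniq hk (hI c a2)
      exact hdf c a2
    have hD : ∀ i : Fin ρ.rhs.length, ∃ d, WFDeriv P ρ.rhs[i] d ∧
        ∀ (j k c : ℕ), j < es sortN ρ.lhs → (ecomp ρ j)[k]? = some (Sum.inr (i.1, c)) →
          K j k = ct d (some (ρ, j, k)) c :=
      fun i => hchild i.1 _ (List.getElem?_eq_getElem i.2)
    choose D hD1 hD2 using hD
    refine ⟨.node ρ (List.ofFn D), ?_, ?_⟩
    · refine WFDeriv.node ρ _ hρ (by simp) ?_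
      intro i h1 h2
      simpa using hD1 ⟨i, h2⟩
    · intro j hj
      have hn : f j = .node (f j).root (f j).kids := by cases f j; rfl
      rw [hn, ct_node, hroots j hj]
      congr 1
      apply List.ext_getElem?
      intro k
      rw [kidsOf_get]
      cases hk : (ecomp ρ j)[k]? with
      | none =>
        have := List.getElem?_eq_none_iff.1 hk
        rw [Option.map_none, List.getElem?_eq_none_iff, hklen j hj]
        exact this
      | some it =>
        rw [hK j hj k (lt_of hk), Option.map_some]
        congr 1
        rcases it with d | ⟨i, c⟩
        · have h1 := hKr j hj k (lt_of hk)
          obtain ⟨h2, h3, _⟩ := wt_inv (hKw j hj k (lt_of hk))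
          have hn : K j k = .node (K j k).root (K j k).kids := by cases K j k; rfl
          rw [hn, kf]
          generalize (K j k).root = R at *
          cases h2 with
          | root => simp at h1
          | term ρ' j' k' d' a1 a2 a3 =>
            simp only [Option.some.injEq, Prod.mk.injEq] at h1
            obtain ⟨rfl, rfl, rfl⟩ := h1
            congr 1
            simpa [content] using h3
          | var ρ' j' k' i' c' ρ'' a1 a2 a3 a4 a5 =>
            simp only [Option.some.injEq, Prod.mk.injEq] at h1
            obtain ⟨rfl, rfl, rfl⟩ := h1
            rw [hk] at a3
            simp at a3
        · obtain ⟨A', a1, a2⟩ := ecomp_wf hk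
          obtain ⟨hi, _⟩ := List.getElem?_eq_some_iff.1 a1
          have h5 : (List.ofFn D)[i]? = some (D ⟨i, hi⟩) := by simp [hi]
          simp only [kf, ctn_some h5]
          exact hD2 ⟨i, hi⟩ j k c hj hk

end Aux6
end CS

namespace CS
section Aux7
open Classical

variable {Δ N : Type} {sortN : N → ℕ}

abbrev SS (P : Set (Production Δ N sortN)) (S : N) : Type := {X : Big Δ N sortN // Valid P S X}

def vv {P : Set (Production Δ N sortN)} {S : N} : SS P S ⊕ SS P S → Big Δ N sortN ⊕ Big Δ N sortN :=
  Sum.map Subtype.val Subtype.val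

lemma vv_inj {P : Set (Production Δ N sortN)} {S : N} : Function.Injective (vv (P := P) (S := S)) :=
  Sum.map_injective.2 ⟨Subtype.val_injective, Subtype.val_injective⟩

def PaS (P : Set (Production Δ N sortN)) (S : N) : Set (Set (SS P S)) :=
  {p | ∃ X : SS P S, p = {Y | cls Y.1 = cls X.1}}

lemma PaS_part (P : Set (Production Δ N sortN)) (S : N) : Setoid.IsPartition (PaS P S) := by
  constructor
  · rintro ⟨X, hX⟩
    have : X ∈ (∅ : Set (SS P S)) := by rw [hX]; exact rfl
    exact this
  · intro a
    refine ⟨{Y | cls Y.1 = cls a.1}, ⟨⟨a, rfl⟩, rfl⟩, ?_⟩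
    rintro p ⟨⟨X, rfl⟩, ha⟩
    have ha' : cls a.1 = cls X.1 := ha
    rw [ha']

def Rg (P : Set (Production Δ N sortN)) (S : N) : Set (List (SS P S ⊕ SS P S)) :=
  {w | ∃ a w', w = a :: w' ∧ (∃ X, a = Sum.inl X ∧ X.1.1 = none) ∧
    List.IsChain (fun a b => Follow Prod.fst content (vv a) (vv b)) w}

lemma to_big {P : Set (Production Δ N sortN)} {S : N} {w : List (SS P S ⊕ SS P S)}
    (h : MDyckRel _ (PaS P S) w []) : MDyckRel _ (PaB P S) (w.map vv) [] := by
  have h1 := mdyck_transfer (fun X : SS P S => some X.1) (PaS P S) (PaB P S) (by simp)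
    (by
      intro σ τ b h1 h2
      exact Subtype.ext (Option.some.inj (h1.trans h2.symm)))
    (by
      rintro p ⟨X, rfl⟩
      refine ⟨X.1, X.2, ?_⟩
      ext Y
      constructor
      · rintro ⟨σ, h1, h2⟩
        cases h2
        exact ⟨σ.2, h1⟩
      · rintro ⟨h1, h2⟩
        exact ⟨⟨Y, h1⟩, h2, rfl⟩) h
  have e : w.filterMap (fl (fun X : SS P S => some X.1)) = w.map vv := by
    rw [← List.filterMap_eq_map]
    congr 1
    funext x
    cases x <;> rfl
  rw [e] at h1
  exact h1

lemma of_big {P : Set (Production Δ N sortN)} {S : N} {w : List (SS P S ⊕ SS P S)}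
    (h : MDyckRel _ (PaB P S) (w.map vv) []) : MDyckRel _ (PaS P S) w [] := by
  let g : Big Δ N sortN → Option (SS P S) := fun X => if h : Valid P S X then some ⟨X, h⟩ else none
  have hg : ∀ X : SS P S, g X.1 = some X := fun X => by simp [g, X.2]
  have hg2 : ∀ X Y, g X = some Y → X = Y.1 := by
    intro X Y h
    simp only [g] at h
    split_ifs at h
    cases h; rfl
  have h1 := mdyck_transfer g (PaB P S) (PaS P S)
    (by
      rintro p ⟨X, hX, rfl⟩ σ ⟨hσ, _⟩
      simp [g, hσ])
    (by
      intro σ τ b h1 h2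
      rw [hg2 _ _ h1, hg2 _ _ h2])
    (by
      rintro p ⟨X, hX, rfl⟩
      refine ⟨⟨X, hX⟩, ?_⟩
      ext Y
      constructor
      · rintro ⟨σ, ⟨h1, h3⟩, h2⟩
        rw [hg2 _ _ h2] at h3
        exact h3
      · intro h2
        exact ⟨Y.1, ⟨Y.2, h2⟩, hg Y⟩) h
  have e : (w.map vv).filterMap (fl g) = w := by
    rw [List.filterMap_map]
    conv_rhs => rw [← List.filterMap_some (l := w)]
    congr 1
    funext x
    cases x <;> simp [vv, fl, hg]
  rw [e] at h1
  exact h1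

lemma lift_word {P : Set (Production Δ N sortN)} {S : N} (w : List (Big Δ N sortN ⊕ Big Δ N sortN))
    (h : ∀ Y, (Sum.inl Y ∈ w ∨ Sum.inr Y ∈ w) → Valid P S Y) :
    ∃ w' : List (SS P S ⊕ SS P S), w'.map vv = w := by
  induction w with
  | nil => exact ⟨[], rfl⟩
  | cons a w ih =>
    obtain ⟨w', hw'⟩ := ih (fun Y hY => h Y (by rcases hY with hY | hY <;> simp [hY]))
    cases a with
    | inl X => exact ⟨Sum.inl ⟨X, h X (by simp)⟩ :: w', by rw [List.map_cons, hw']; rfl⟩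
    | inr X => exact ⟨Sum.inr ⟨X, h X (by simp)⟩ :: w', by rw [List.map_cons, hw']; rfl⟩

lemma complete_main {P : Set (Production Δ N sortN)} {S : N} (hS : sortN S = 1)
    (hnd : ∀ ρ ∈ P, ρ.NonDeleting) {d} (hd : WFDeriv P S d) :
    ∃ w, w.map vv = (ct d none 0).word ∧ w ∈ Rg P S ∩ MDyckLang (SS P S) (PaS P S) := by
  have hw : WT Prod.fst content (Valid P S) (ct d none 0) :=
    wt_ct d S hd none 0 (es_pos _) rfl (fun ρ h1 h2 => .root ρ h1 h2)
  obtain ⟨w, e⟩ := lift_word _ (mem_word_valid _ _ hw)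
  refine ⟨w, e, ?_, ?_⟩
  · have hch := chain_word content_det _ _ hw
    rw [← e, List.isChain_map] at hch
    have e2 := word_eq (ct d none 0)
    rw [← e] at e2
    cases w with
    | nil => simp at e2
    | cons a w' =>
      refine ⟨a, w', rfl, ?_, hch⟩
      rw [List.map_cons] at e2
      have e3 := (List.cons.inj e2).1
      cases a with
      | inl X =>
        refine ⟨X, rfl, ?_⟩
        have e4 : X.1 = (ct d none 0).root := Sum.inl.inj e3
        rw [e4, ct_root_slot]
      | inr X => cases e3
  · apply of_big
    rw [e]
    exact ct_good_root S hS hnd d hd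

lemma sound_main {P : Set (Production Δ N sortN)} {S : N} (hS : sortN S = 1)
    (hnd : ∀ ρ ∈ P, ρ.NonDeleting) {w} (hw : w ∈ Rg P S ∩ MDyckLang (SS P S) (PaS P S)) :
    ∃ d, WFDeriv P S d ∧ w.map vv = (ct d none 0).word := by
  obtain ⟨⟨a, w', rfl, ⟨X, rfl, hX⟩, hch⟩, hm⟩ := hw
  have hm' := to_big hm
  have hch' := (List.isChain_map (R := Follow Prod.fst content) vv).2 hch
  have hstk := stk_dyck (mdyck_dyck hm') []
  have e0 : (Sum.inl X :: w').map vv = Sum.inl X.1 :: w'.map vv := rfl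
  rw [e0] at hm' hch' hstk ⊢
  obtain ⟨t, h1, h2, h3⟩ := parse_top content_det (Valid P S) X.1 (w'.map vv)
    (by rw [hX]; exact root_not_content)
    (by
      intro Y hY
      rw [← e0, List.mem_map] at hY
      obtain ⟨b, _, hb⟩ := hY
      cases b with
      | inl b => cases hb; exact b.2
      | inr b => cases hb)
    hch' hstk
  rw [h3] at hm' ⊢
  have hes : es sortN S = 1 := by simp [es, hS]
  obtain ⟨d, hd, hdf⟩ := sound_s16 (P := P) (S := S) hnd (sizeOf t + 1) S (fun _ => t) (fun _ => none)
    (fun _ _ => by omega) (fun _ _ => h2)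
    (by
      intro j _
      rw [h1]
      obtain ⟨X, hv⟩ := X
      simp only at hX ⊢
      cases hv with
      | root ρ a1 a2 => exact ⟨ρ, a1, a2, rfl⟩
      | term => cases hX
      | var => cases hX)
    (by
      intro j hj
      rw [hes] at hj
      have : j = 0 := by omega
      subst this
      rfl)
    (fun _ _ => rfl)
    (fun _ _ ρ a1 a2 => .root ρ a1 a2)
    (by
      intro c hc
      rw [hes]
      simp only [Finset.range_one, Finset.sum_singleton]
      exact wt_mdyck cls (PaB P S) c hc PaB_cls hm' [])
  refine ⟨d, hd, ?_⟩
  rw [hdf 0 (es_pos _)]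

lemma main_aux (Δ : Type) (G : MCFG Δ) (hP : G.P.Finite) (hnd : G.NonDeleting) :
    ∃ (S : Type) (_ : Fintype S) (Pa : Set (Set S)) (R : Set (List (S ⊕ S)))
      (h : S ⊕ S → Option Δ)
      (β : CS.Tree (CS.Production Δ G.N G.sortN) → List (S ⊕ S)),
      Setoid.IsPartition Pa ∧ CS.IsRegular R ∧
      Set.BijOn β G.Derivs (R ∩ CS.MDyckLang S Pa) ∧
      (∀ d ∈ G.Derivs, (β d).filterMap h = d.yield.flatten) ∧
      (fun u => u.filterMap h) '' (R ∩ CS.MDyckLang S Pa) = G.lang := by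
  have hfin : Finite (SS G.P G.S) := (valid_finite G.P G.S hP).to_subtype
  let β : Tree (Production Δ G.N G.sortN) → List (SS G.P G.S ⊕ SS G.P G.S) := fun d =>
    if h : ∃ w : List (SS G.P G.S ⊕ SS G.P G.S), w.map vv = (ct d none 0).word then h.choose else []
  have hβ : ∀ d ∈ G.Derivs, (β d).map vv = (ct d none 0).word ∧
      β d ∈ Rg G.P G.S ∩ MDyckLang (SS G.P G.S) (PaS G.P G.S) := by
    intro d hd
    obtain ⟨w, h1, h2⟩ := complete_main G.sort_S hnd hd
    have hex : ∃ w : List (SS G.P G.S ⊕ SS G.P G.S), w.map vv = (ct d none 0).word := ⟨w, h1⟩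
    have h3 : (β d).map vv = (ct d none 0).word := by
      simp only [β, dif_pos hex]
      exact hex.choose_spec
    have h4 : β d = w := List.map_injective_iff.2 vv_inj (h3.trans h1.symm)
    refine ⟨h3, ?_⟩
    rw [h4]; exact h2
  have hbij : Set.BijOn β G.Derivs (Rg G.P G.S ∩ MDyckLang (SS G.P G.S) (PaS G.P G.S)) := by
    refine ⟨fun d hd => (hβ d hd).2, ?_, ?_⟩
    · intro d hd d' hd' he
      refine ct_inj hnd d G.S d' hd hd' ?_
      intro j hj
      have hj0 : j = 0 := by
        simp only [es, G.sort_S] at hj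
        omega
      subst hj0
      refine ⟨none, word_inj ?_⟩
      rw [← (hβ d hd).1, ← (hβ d' hd').1, he]
    · intro w hw
      obtain ⟨d, hd, he⟩ := sound_main G.sort_S hnd hw
      exact ⟨d, hd, List.map_injective_iff.2 vv_inj ((hβ d hd).1.trans he.symm)⟩
  have hy : ∀ d ∈ G.Derivs, ∃ w, d.yield = [w] := by
    intro d hd
    have := yield_len hd
    rw [G.sort_S] at this
    exact List.length_eq_one_iff.1 this
  have hyield : ∀ d ∈ G.Derivs, (β d).filterMap (fun a => hB (vv a)) = d.yield.flatten := by
    intro d hd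
    have h1 := ct_yield d G.S hd none 0
    rw [← (hβ d hd).1, List.filterMap_map] at h1
    obtain ⟨w, hw⟩ := hy d hd
    rw [hw] at h1 ⊢
    simpa using h1
  refine ⟨SS G.P G.S, Fintype.ofFinite _, PaS G.P G.S, Rg G.P G.S, fun a => hB (vv a), β,
    PaS_part _ _, ?_, hbij, hyield, ?_⟩
  · exact regular_local _ _
  · rw [← hbij.image_eq]
    ext u
    constructor
    · rintro ⟨_, ⟨d, hd, rfl⟩, rfl⟩
      obtain ⟨w, hw⟩ := hy d hd
      refine ⟨d, hd, ?_⟩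
      simp only
      rw [hyield d hd, hw]; simp
    · rintro ⟨d, hd, hw⟩
      refine ⟨_, ⟨d, hd, rfl⟩, ?_⟩
      simp only
      rw [hyield d hd, hw]; simp

end Aux7
end CS


/-- For every non-deleting MCFG `G` without repeated
non-terminals on right-hand sides there are a regular language `R`, a
congruence multiple Dyck language `mD` and an alphabetic homomorphism `h` such
that some bijection `β : D_G → R ∩ mD` satisfies `h(β(d)) = yield(d)` for all
`d ∈ D_G`; in particular `h(R ∩ mD) = L(G)`. -/
theorem CS.CS_derivation_bijection (Δ : Type) (G : CS.MCFG Δ)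
    (hN : Finite G.N) (hP : G.P.Finite) (hnd : G.NonDeleting)
    (hdist : ∀ ρ ∈ G.P, ρ.rhs.Nodup) :
    ∃ (S : Type) (_ : Fintype S) (Pa : Set (Set S)) (R : Set (List (S ⊕ S)))
      (h : S ⊕ S → Option Δ)
      (β : CS.Tree (CS.Production Δ G.N G.sortN) → List (S ⊕ S)),
      Setoid.IsPartition Pa ∧ CS.IsRegular R ∧
      Set.BijOn β G.Derivs (R ∩ CS.MDyckLang S Pa) ∧
      (∀ d ∈ G.Derivs, (β d).filterMap h = d.yield.flatten) ∧
      (fun u => u.filterMap h) '' (R ∩ CS.MDyckLang S Pa) = G.lang := by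
  exact CS.main_aux Δ G hP hnd
end
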